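/- Let U ⊂ X be a 1-quasiopen set and let u be a function with ‖Du‖(U) < ∞ (i.e. there is an open set Ω ⊃ U with u ∈ L^1_loc(Ω) and ‖Du‖(Ω) < ∞). Then ‖Du‖(U) = inf{ liminf_{i→∞} ∫_U g_{u_i} dμ : u_i ∈ N^{1,1}_loc(U), u_i → u in L^1_loc(U) }, where each g_{u_i} is the minimal 1-weak upper gradient of u_i in U. -/

import Mathlib

open MeasureTheory Filter Metric Set
open scoped Topology ENNReal NNReal symmDiff

noncomputable section

namespace PaperBV

/-- A rectifiable curve parametrized by arc-length: a `1`-Lipschitz map on `[0, len]`. -/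
structure Curve (X : Type*) [MetricSpace X] where
  len : ℝ
  len_nonneg : 0 ≤ len
  toFun : ℝ → X
  lip : LipschitzOnWith 1 toFun (Set.Icc 0 len)

variable {X : Type*} [MetricSpace X] [MeasurableSpace X] [BorelSpace X]

/-- The curve lies in the set `A`. -/
def Curve.In (γ : Curve X) (A : Set X) : Prop :=
  ∀ t ∈ Set.Icc (0 : ℝ) γ.len, γ.toFun t ∈ A

/-- The curve integral `∫_γ g ds` of a nonnegative function, for an
arc-length parametrized curve. -/
def Curve.integral (γ : Curve X) (g : X → ℝ≥0∞) : ℝ≥0∞ :=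
  ∫⁻ t in Set.Icc (0 : ℝ) γ.len, g (γ.toFun t)

/-- The upper gradient inequality `|u(x) - u(y)| ≤ ∫_γ g ds` along the curve `γ`,
where `x, y` are the endpoints of `γ`. -/
def UGIneq (u : X → ℝ) (g : X → ℝ≥0∞) (γ : Curve X) : Prop :=
  ENNReal.ofReal |u (γ.toFun 0) - u (γ.toFun γ.len)| ≤ γ.integral g

/-- `g` is an upper gradient of `u` on `X`: `g` is nonnegative (automatic in `ℝ≥0∞`),
Borel, and the upper gradient inequality holds along every curve. -/
def IsUpperGradient (u : X → ℝ) (g : X → ℝ≥0∞) : Prop :=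
  Measurable g ∧ ∀ γ : Curve X, UGIneq u g γ

/-- A family of curves has zero `1`-modulus: there is a nonnegative Borel function
`ρ ∈ L¹(X)` whose curve integral is infinite along every curve of the family. -/
def ZeroMod (μ : Measure X) (Γ : Set (Curve X)) : Prop :=
  ∃ ρ : X → ℝ≥0∞, Measurable ρ ∧ (∫⁻ x, ρ x ∂μ) < ∞ ∧ ∀ γ ∈ Γ, γ.integral ρ = ∞

/-- `g` is a `1`-weak upper gradient of `u` in `A`: `g` is nonnegative, `μ`-measurable,
and the upper gradient inequality holds along `1`-a.e. curve in `A`. -/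
def IsWeakUpperGradientOn (μ : Measure X) (u : X → ℝ) (g : X → ℝ≥0∞) (A : Set X) : Prop :=
  AEMeasurable g μ ∧ ZeroMod μ {γ : Curve X | γ.In A ∧ ¬ UGIneq u g γ}

/-- A nonnegative function `g` belongs to `L¹_loc(A)`. -/
def LIntegrableLocOn (μ : Measure X) (g : X → ℝ≥0∞) (A : Set X) : Prop :=
  ∀ x ∈ A, ∃ r > (0 : ℝ), (∫⁻ y in A ∩ Metric.ball x r, g y ∂μ) < ∞

/-- `g` is the minimal `1`-weak upper gradient of `u` in `A`: a `1`-weak upper gradient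
satisfying `g ≤ g'` `μ`-a.e. in `A` for every `1`-weak upper gradient `g' ∈ L¹_loc(A)`. -/
def IsMinimalWUG (μ : Measure X) (u : X → ℝ) (g : X → ℝ≥0∞) (A : Set X) : Prop :=
  IsWeakUpperGradientOn μ u g A ∧
    ∀ g' : X → ℝ≥0∞, IsWeakUpperGradientOn μ u g' A → LIntegrableLocOn μ g' A →
      ∀ᵐ x ∂(μ.restrict A), g x ≤ g' x

/-- The Newtonian norm `‖u‖_{N^{1,1}(A)}` (valued in `ℝ≥0∞`). -/
def NNorm (μ : Measure X) (A : Set X) (u : X → ℝ) : ℝ≥0∞ :=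
  (∫⁻ x in A, ENNReal.ofReal |u x| ∂μ) +
    ⨅ (g : X → ℝ≥0∞) (_ : IsWeakUpperGradientOn μ u g A), ∫⁻ x in A, g x ∂μ

/-- `u ∈ N^{1,1}(A)`. -/
def MemN11 (μ : Measure X) (A : Set X) (u : X → ℝ) : Prop :=
  NNorm μ A u < ∞

/-- `u ∈ N^{1,1}_loc(A)`: every point of `A` has a ball `B` with `u ∈ N^{1,1}(A ∩ B)`. -/
def MemN11Loc (μ : Measure X) (A : Set X) (u : X → ℝ) : Prop :=
  ∀ x ∈ A, ∃ r > (0 : ℝ), NNorm μ (A ∩ Metric.ball x r) u < ∞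

/-- `u ∈ N^{1,1}(Ω')` for every bounded open `Ω' ⊆ X`. -/
def MemN11LocBounded (μ : Measure X) (u : X → ℝ) : Prop :=
  ∀ Ω' : Set X, IsOpen Ω' → Bornology.IsBounded Ω' → NNorm μ Ω' u < ∞

/-- `u ∈ N^{1,1}_0(Ω)`: `u ∈ N^{1,1}(X)` and `u = 0` outside `Ω`. -/
def MemN110 (μ : Measure X) (Ω : Set X) (u : X → ℝ) : Prop :=
  MemN11 μ Set.univ u ∧ ∀ x ∉ Ω, u x = 0

/-- The `1`-capacity `capa₁(A) = inf {‖u‖_{N^{1,1}(X)} : u ∈ N^{1,1}(X), u ≥ 1 on A}`. -/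
def capa1 (μ : Measure X) (A : Set X) : ℝ≥0∞ :=
  ⨅ (u : X → ℝ) (_ : MemN11 μ Set.univ u) (_ : ∀ x ∈ A, 1 ≤ u x), NNorm μ Set.univ u

/-- `U` is `1`-quasiopen: for every `ε > 0` there is an open `G` with `capa₁(G) < ε`
such that `U ∪ G` is open. -/
def QuasiOpen (μ : Measure X) (U : Set X) : Prop :=
  ∀ ε : ℝ, 0 < ε → ∃ G : Set X, IsOpen G ∧ capa1 μ G < ENNReal.ofReal ε ∧ IsOpen (U ∪ G)

/-- `u ∈ L¹_loc(A)`. -/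
def MemL1Loc (μ : Measure X) (A : Set X) (u : X → ℝ) : Prop :=
  AEMeasurable u (μ.restrict A) ∧
    ∀ x ∈ A, ∃ r > (0 : ℝ), (∫⁻ y in A ∩ Metric.ball x r, ENNReal.ofReal |u y| ∂μ) < ∞

/-- `v i → u` in `L¹_loc(A)`: every `x ∈ A` has a ball `B` with `v i → u` in `L¹(A ∩ B)`. -/
def L1LocConv (μ : Measure X) (A : Set X) (v : ℕ → X → ℝ) (u : X → ℝ) : Prop :=
  ∀ x ∈ A, ∃ r > (0 : ℝ),
    Filter.Tendsto (fun i => ∫⁻ y in A ∩ Metric.ball x r, ENNReal.ofReal |v i y - u y| ∂μ)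
      Filter.atTop (𝓝 0)

/-- `u` is locally Lipschitz on `Ω`. -/
def LocLipOn (u : X → ℝ) (Ω : Set X) : Prop :=
  ∀ x ∈ Ω, ∃ r > (0 : ℝ), ∃ K : ℝ≥0, LipschitzOnWith K u (Ω ∩ Metric.ball x r)

/-- The total variation `‖Du‖(Ω)` of `u` in an open set `Ω`: the infimum of
`liminf_i ∫_Ω g_{v i} dμ` over sequences of locally Lipschitz functions `v i → u`
in `L¹_loc(Ω)`, where `g_{v i}` is the minimal `1`-weak upper gradient of `v i` in `Ω`. -/
def tvOpen (μ : Measure X) (Ω : Set X) (u : X → ℝ) : ℝ≥0∞ :=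
  ⨅ (v : ℕ → X → ℝ) (g : ℕ → X → ℝ≥0∞) (_ : ∀ i, LocLipOn (v i) Ω)
    (_ : ∀ i, IsMinimalWUG μ (v i) (g i) Ω) (_ : L1LocConv μ Ω v u),
    Filter.liminf (fun i => ∫⁻ x in Ω, g i x ∂μ) Filter.atTop

/-- The total variation `‖Du‖(A)` of `u` in an arbitrary set `A`:
`inf {‖Du‖(Ω) : Ω ⊇ A open}`. -/
def tv (μ : Measure X) (A : Set X) (u : X → ℝ) : ℝ≥0∞ :=
  ⨅ (Ω : Set X) (_ : IsOpen Ω) (_ : A ⊆ Ω), tvOpen μ Ω u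

/-- The perimeter `P(E, A) = ‖Dχ_E‖(A)` for arbitrary `A`. -/
def perim (μ : Measure X) (E A : Set X) : ℝ≥0∞ :=
  tv μ A (Set.indicator E (fun _ => (1 : ℝ)))

/-- The perimeter `P(E, Ω) = ‖Dχ_E‖(Ω)` for open `Ω`. -/
def perimOpen (μ : Measure X) (E Ω : Set X) : ℝ≥0∞ :=
  tvOpen μ Ω (Set.indicator E (fun _ => (1 : ℝ)))

/-- The measure `μ` is doubling with constant `Cd`. -/
def Doubling (μ : Measure X) (Cd : ℝ) : Prop :=
  1 ≤ Cd ∧ ∀ (x : X) (r : ℝ), 0 < r →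
    0 < μ (Metric.ball x (2 * r)) ∧
      μ (Metric.ball x (2 * r)) ≤ ENNReal.ofReal Cd * μ (Metric.ball x r) ∧
      μ (Metric.ball x r) < ∞

/-- The space supports a `(1,1)`-Poincaré inequality with constants `CP, lam`. -/
def Poincare (μ : Measure X) (CP lam : ℝ) : Prop :=
  1 ≤ CP ∧ 1 ≤ lam ∧ ∀ (x : X) (r : ℝ), 0 < r → ∀ (u : X → ℝ) (g : X → ℝ≥0∞),
    MemL1Loc μ Set.univ u → IsUpperGradient u g →
      ENNReal.ofReal (⨍ y in Metric.ball x r, |u y - ⨍ z in Metric.ball x r, u z ∂μ| ∂μ)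
        ≤ ENNReal.ofReal (CP * r) *
            ((∫⁻ y in Metric.ball x (lam * r), g y ∂μ) / μ (Metric.ball x (lam * r)))

/-- The restricted spherical Hausdorff content of codimension one. -/
def HR (μ : Measure X) (R : ℝ) (A : Set X) : ℝ≥0∞ :=
  ⨅ (c : ℕ → X) (r : ℕ → ℝ) (_ : ∀ i, 0 < r i ∧ r i ≤ R)
    (_ : A ⊆ ⋃ i, Metric.ball (c i) (r i)),
    ∑' i, μ (Metric.ball (c i) (r i)) / ENNReal.ofReal (r i)

/-- The codimension-one Hausdorff measure `H(A) = lim_{R → 0} H_R(A)`. -/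
def Hcodim (μ : Measure X) (A : Set X) : ℝ≥0∞ :=
  ⨆ (R : ℝ) (_ : 0 < R), HR μ R A

/-- The lower approximate limit `u^∧`. -/
def lowerApprox (μ : Measure X) (u : X → ℝ) (x : X) : EReal :=
  sSup ((fun t : ℝ => (t : EReal)) ''
    {t : ℝ | Filter.Tendsto
      (fun r => μ (Metric.ball x r ∩ {y | u y < t}) / μ (Metric.ball x r))
      (𝓝[>] (0 : ℝ)) (𝓝 0)})

/-- The upper approximate limit `u^∨`. -/
def upperApprox (μ : Measure X) (u : X → ℝ) (x : X) : EReal :=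
  sInf ((fun t : ℝ => (t : EReal)) ''
    {t : ℝ | Filter.Tendsto
      (fun r => μ (Metric.ball x r ∩ {y | t < u y}) / μ (Metric.ball x r))
      (𝓝[>] (0 : ℝ)) (𝓝 0)})

/-- `u ∈ BV_loc(X)`: `u ∈ L¹_loc(X)` with `‖Du‖(Ω') < ∞` for every bounded open `Ω'`. -/
def MemBVLoc (μ : Measure X) (u : X → ℝ) : Prop :=
  MemL1Loc μ Set.univ u ∧
    ∀ Ω' : Set X, IsOpen Ω' → Bornology.IsBounded Ω' → tvOpen μ Ω' u < ∞

/-- The measure-theoretic interior `I_E`. -/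
def mInterior (μ : Measure X) (E : Set X) : Set X :=
  {x | Filter.Tendsto (fun r => μ (Metric.ball x r \ E) / μ (Metric.ball x r))
    (𝓝[>] (0 : ℝ)) (𝓝 0)}

/-- The measure-theoretic exterior `O_E`. -/
def mExterior (μ : Measure X) (E : Set X) : Set X :=
  {x | Filter.Tendsto (fun r => μ (Metric.ball x r ∩ E) / μ (Metric.ball x r))
    (𝓝[>] (0 : ℝ)) (𝓝 0)}

/-- The measure-theoretic boundary `∂*E`: the points where both `E` and its complement
have positive upper density. -/
def mBoundary (μ : Measure X) (E : Set X) : Set X :=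
  {x | 0 < Filter.limsup (fun r => μ (Metric.ball x r ∩ E) / μ (Metric.ball x r))
        (𝓝[>] (0 : ℝ)) ∧
       0 < Filter.limsup (fun r => μ (Metric.ball x r \ E) / μ (Metric.ball x r))
        (𝓝[>] (0 : ℝ))}

/-!
Restricting locally Lipschitz approximations of `u` from an open set `Ω ⊇ U` to `U` bounds the
infimum by the total variation.

For the converse let `v i → u` in `L¹_loc(U)`. Choose open sets `G` of small capacity such that
`U ∪ G` is open, together with Sobolev cutoffs `η` that equal `1` on `G`, and glue `v i` to almost
optimal approximations `φ i` of `u` in `Ω`. The function `(1 - η) v i + η φ i` lives on the open set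
`U ∪ (G ∩ Ω)` and has the upper gradient `(1 - η) g_v + η g_φ + |v i - φ i| g_η` there: the `1`-path
openness of `U` allows one to pass from curves in `U` to curves in `U ∪ (G ∩ Ω)`. The last term
disappears in the limit after truncation, and `η g_φ` has small integral, as otherwise damping `φ i`
on the support of the cutoff would lower the energy below the total variation.

This comparison needs the lower semicontinuity of the total variation along bounded Sobolev
functions, that is, an approximation of these by locally Lipschitz functions with almost the same
energy. On a compact set such an approximation is the least cost of reaching a point, where a path
costs the value of the function at its start plus the integral of the upper gradient. The paths are
allowed to have small jumps, which makes the cost Lipschitz, and as the jumps tend to zero they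
converge to curves.
-/

/-! ### Increments bounded by integrals on an interval -/

/-- The increments of `f` over the subintervals of `[p, q]` are bounded by the integrals of `a`,
i.e. `a` is an upper gradient of `f` on `[p, q]`. -/
def IncrementBound (f : ℝ → ℝ) (a : ℝ → ℝ≥0∞) (p q : ℝ) : Prop :=
  ∀ s t, p ≤ s → s ≤ t → t ≤ q → ENNReal.ofReal |f s - f t| ≤ ∫⁻ r in Ioc s t, a r

lemma ofReal_le_ofReal_add_coe {x y : ℝ} {κ : ℝ≥0} (h : x ≤ y + κ) :
    ENNReal.ofReal x ≤ ENNReal.ofReal y + κ :=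
  calc ENNReal.ofReal x ≤ ENNReal.ofReal (y + κ) := ENNReal.ofReal_le_ofReal h
    _ ≤ ENNReal.ofReal y + κ := by
        simpa only [ENNReal.ofReal_coe_nnreal] using ENNReal.ofReal_add_le (p := y) (q := κ)

namespace IncrementBound

variable {f f' f₁ f₂ η : ℝ → ℝ} {a a' a₁ a₂ b : ℝ → ℝ≥0∞} {p q p' q' : ℝ}

lemma mono_interval (h : IncrementBound f a p q) (hp : p ≤ p') (hq : q' ≤ q) :
    IncrementBound f a p' q' :=
  fun s t hs hst ht => h s t (hp.trans hs) hst (ht.trans hq)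

lemma congr_left (h : IncrementBound f a p q) (hf : EqOn f f' (Icc p q)) :
    IncrementBound f' a p q := fun s t hs hst ht => by
  rw [← hf ⟨hs, hst.trans ht⟩, ← hf ⟨hs.trans hst, ht⟩]
  exact h s t hs hst ht

lemma mono_right (h : IncrementBound f a p q) (ha : ∀ t ∈ Icc p q, a t ≤ a' t) :
    IncrementBound f a' p q := fun s t hs hst ht =>
  (h s t hs hst ht).trans <| setLIntegral_mono' measurableSet_Ioc fun r hr =>
    ha r ⟨hs.trans hr.1.le, hr.2.trans ht⟩

lemma congr_ae (h : IncrementBound f a p q) (ha : a =ᵐ[volume.restrict (Ioc p q)] a') :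
    IncrementBound f a' p q := fun s t hs hst ht =>
  (h s t hs hst ht).trans_eq <| lintegral_congr_ae <|
    ae_mono (Measure.restrict_mono (Ioc_subset_Ioc hs ht) le_rfl) ha

lemma ofReal_abs_sub_le_add {s m t : ℝ} (hsm : s ≤ m) (hmt : m ≤ t)
    (h₁ : ENNReal.ofReal |f s - f m| ≤ ∫⁻ r in Ioc s m, a r)
    (h₂ : ENNReal.ofReal |f m - f t| ≤ ∫⁻ r in Ioc m t, a r) :
    ENNReal.ofReal |f s - f t| ≤ ∫⁻ r in Ioc s t, a r :=
  calc ENNReal.ofReal |f s - f t|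
      ≤ ENNReal.ofReal (|f s - f m| + |f m - f t|) :=
        ENNReal.ofReal_le_ofReal (abs_sub_le _ _ _)
    _ = ENNReal.ofReal |f s - f m| + ENNReal.ofReal |f m - f t| :=
        ENNReal.ofReal_add (abs_nonneg _) (abs_nonneg _)
    _ ≤ (∫⁻ r in Ioc s m, a r) + ∫⁻ r in Ioc m t, a r := add_le_add h₁ h₂
    _ = ∫⁻ r in Ioc s t, a r := by
        rw [← Ioc_union_Ioc_eq_Ioc hsm hmt, lintegral_union measurableSet_Ioc]
        exact Ioc_disjoint_Ioc_of_le le_rfl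

lemma of_small_steps {d : ℝ} (hd : 0 < d)
    (h : ∀ s t, p ≤ s → s ≤ t → t ≤ q → t - s ≤ d →
      ENNReal.ofReal |f s - f t| ≤ ∫⁻ r in Ioc s t, a r) :
    IncrementBound f a p q := by
  have of_le_mul (n : ℕ) : ∀ s t, p ≤ s → s ≤ t → t ≤ q → t - s ≤ n * d →
      ENNReal.ofReal |f s - f t| ≤ ∫⁻ r in Ioc s t, a r := by
    induction n with
    | zero =>
      intro s t hs hst ht hn
      exact h s t hs hst ht (hn.trans (by simpa using hd.le))
    | succ n ih =>
      intro s t hs hst ht hn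
      push_cast at hn
      have hsm : s ≤ max s (t - d) := le_max_left _ _
      have hmt : max s (t - d) ≤ t := max_le hst (by linarith)
      refine ofReal_abs_sub_le_add hsm hmt (ih _ _ hs hsm (hmt.trans ht) ?_)
        (h _ _ (hs.trans hsm) hmt ht (by linarith [le_max_right s (t - d)]))
      rw [sub_le_iff_le_add']
      exact max_le (by linarith [show 0 ≤ n * d by positivity]) (by linarith)
  intro s t hs hst ht
  obtain ⟨n, hn⟩ := exists_nat_ge ((t - s) / d)
  exact of_le_mul n s t hs hst ht ((div_le_iff₀ hd).1 hn)

lemma of_locally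
    (h : ∀ x ∈ Icc p q, ∃ δ > 0, IncrementBound f a (max p (x - δ)) (min q (x + δ))) :
    IncrementBound f a p q := by
  choose! δ δ_pos hδ using h
  obtain ⟨d, d_pos, hd⟩ := lebesgue_number_lemma_of_metric (s := Icc p q) (ι := Icc p q)
    (c := fun x => ball (x : ℝ) (δ x)) isCompact_Icc (fun _ => isOpen_ball)
    (fun x hx => mem_iUnion.2 ⟨⟨x, hx⟩, mem_ball_self (δ_pos x hx)⟩)
  refine of_small_steps (half_pos d_pos) fun s t hs hst ht hd_le => ?_
  obtain ⟨x, hx⟩ := hd s ⟨hs, hst.trans ht⟩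
  have hs_mem := hx (mem_ball_self d_pos)
  have ht_mem : t ∈ ball (x : ℝ) (δ x) :=
    hx (by rw [mem_ball, Real.dist_eq, abs_lt]; constructor <;> linarith)
  rw [mem_ball, Real.dist_eq, abs_lt] at hs_mem ht_mem
  exact hδ x x.2 s t (max_le hs (by linarith)) hst (le_min ht (by linarith))

lemma of_forall_pos_add
    (h : ∀ ε : ℝ≥0∞, ε ≠ 0 → ∃ e : ℝ → ℝ≥0∞, AEMeasurable e (volume.restrict (Ioc p q)) ∧
      ∫⁻ r in Ioc p q, e r ≤ ε ∧ IncrementBound f (fun t => a t + e t) p q) :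
    IncrementBound f a p q := by
  intro s t hs hst ht
  refine ENNReal.le_of_forall_pos_le_add fun ε ε_pos _ => ?_
  obtain ⟨e, he_meas, he_le, he⟩ := h ε (by simpa using ε_pos.ne')
  have hsub : Ioc s t ⊆ Ioc p q := Ioc_subset_Ioc hs ht
  calc ENNReal.ofReal |f s - f t| ≤ ∫⁻ r in Ioc s t, (a r + e r) := he s t hs hst ht
    _ = (∫⁻ r in Ioc s t, a r) + ∫⁻ r in Ioc s t, e r :=
        lintegral_add_right' _ (he_meas.mono_measure (Measure.restrict_mono hsub le_rfl))
    _ ≤ (∫⁻ r in Ioc s t, a r) + ε := by gcongr; exact (lintegral_mono_set hsub).trans he_le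

lemma of_forall_pos_add_mul (hb : AEMeasurable b (volume.restrict (Ioc p q)))
    (hb_fin : ∫⁻ r in Ioc p q, b r ≠ ∞)
    (h : ∀ κ : ℝ≥0, 0 < κ → IncrementBound f (fun t => a t + κ * b t) p q) :
    IncrementBound f a p q := by
  refine of_forall_pos_add fun ε hε => ?_
  obtain ⟨κ, κ_pos, hκ⟩ := ENNReal.exists_nnreal_pos_mul_lt hb_fin hε
  refine ⟨fun t => κ * b t, hb.const_mul _, ?_, h κ κ_pos⟩
  rw [lintegral_const_mul'' _ hb]
  exact hκ.le

lemma exists_forall_abs_sub_le (h : IncrementBound f a p q)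
    (ha : ∫⁻ r in Ioc p q, a r ≠ ∞) {κ : ℝ} (hκ : 0 < κ) :
    ∃ d > 0, ∀ s t, p ≤ s → s ≤ t → t ≤ q → t - s ≤ d → |f s - f t| ≤ κ := by
  obtain ⟨δ, hδ, hsmall⟩ := exists_pos_setLIntegral_lt_of_measure_lt ha
    (ε := ENNReal.ofReal κ) (by simpa using hκ)
  obtain ⟨d, hd_pos, hd⟩ := ENNReal.lt_iff_exists_nnreal_btwn.1 hδ
  refine ⟨d, by exact_mod_cast hd_pos, fun s t hs hst ht hts => ?_⟩
  have hvol : volume.restrict (Ioc p q) (Ioc s t) < δ :=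
    calc volume.restrict (Ioc p q) (Ioc s t)
        ≤ ENNReal.ofReal (t - s) :=
          (Measure.restrict_apply_le _ _).trans_eq Real.volume_Ioc
      _ ≤ d := by
          rw [← ENNReal.ofReal_coe_nnreal]
          exact ENNReal.ofReal_le_ofReal hts
      _ < δ := hd
  have hintegral := hsmall (Ioc s t) hvol
  rw [Measure.restrict_restrict measurableSet_Ioc,
    inter_eq_left.2 (Ioc_subset_Ioc hs ht)] at hintegral
  exact (ENNReal.ofReal_le_ofReal_iff hκ.le).1 ((h s t hs hst ht).trans hintegral.le)

lemma piecewise_of_isOpen {E V W : Set ℝ} [∀ t, Decidable (t ∈ E)] (hV : IsOpen V) (hW : IsOpen W)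
    (hEV : E ⊆ V) (hEW : Eᶜ ⊆ W) (h₁ : IncrementBound f a₁ p q) (h₂ : IncrementBound f a₂ p q) :
    IncrementBound f
      (fun t => E.piecewise a₁ a₂ t + ((V \ E).indicator a₁ t + (W \ Eᶜ).indicator a₂ t)) p q := by
  refine of_locally fun x _ => ?_
  by_cases hxE : x ∈ E
  · obtain ⟨δ, δ_pos, hδ⟩ := nhds_basis_closedBall.mem_iff.1 (hV.mem_nhds (hEV hxE))
    refine ⟨δ, δ_pos, (h₁.mono_interval (le_max_left _ _) (min_le_left _ _)).mono_right
      fun t ht => ?_⟩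
    have htV : t ∈ V := hδ <| by
      rw [Real.closedBall_eq_Icc]
      exact ⟨(le_max_right _ _).trans ht.1, ht.2.trans (min_le_right _ _)⟩
    by_cases htE : t ∈ E
    · simp [htE]
    · simp [htE, htV]
  · obtain ⟨δ, δ_pos, hδ⟩ := nhds_basis_closedBall.mem_iff.1 (hW.mem_nhds (hEW hxE))
    refine ⟨δ, δ_pos, (h₂.mono_interval (le_max_left _ _) (min_le_left _ _)).mono_right
      fun t ht => ?_⟩
    have htW : t ∈ W := hδ <| by
      rw [Real.closedBall_eq_Icc]
      exact ⟨(le_max_right _ _).trans ht.1, ht.2.trans (min_le_right _ _)⟩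
    by_cases htE : t ∈ E
    · simp [htE, htW]
    · simp [htE]

lemma piecewise {E : Set ℝ} [∀ t, Decidable (t ∈ E)] (hE : MeasurableSet E)
    (h₁ : IncrementBound f a₁ p q) (h₂ : IncrementBound f a₂ p q)
    (ha₁ : AEMeasurable a₁ (volume.restrict (Ioc p q)))
    (ha₂ : AEMeasurable a₂ (volume.restrict (Ioc p q)))
    (hfin₁ : ∫⁻ r in Ioc p q, a₁ r ≠ ∞) (hfin₂ : ∫⁻ r in Ioc p q, a₂ r ≠ ∞) :
    IncrementBound f (E.piecewise a₁ a₂) p q := by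
  refine of_forall_pos_add fun ε hε => ?_
  have open_cover (S : Set ℝ) (hS : MeasurableSet S) (c : ℝ → ℝ≥0∞)
      (hc : ∫⁻ r in Ioc p q, c r ≠ ∞) : ∃ V, S ⊆ V ∧ IsOpen V ∧
        ∫⁻ r in Ioc p q, (V \ S).indicator c r ≤ ε / 2 := by
    set ν := (volume.restrict (Ioc p q)).withDensity c
    have : IsFiniteMeasure ν := isFiniteMeasure_withDensity hc
    obtain ⟨V, hSV, hV, -, hlt⟩ := hS.exists_isOpen_sdiff_lt (measure_ne_top ν S)
      (ENNReal.half_pos hε).ne'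
    have hVS := hV.measurableSet.diff hS
    rw [withDensity_apply _ hVS, ← lintegral_indicator hVS] at hlt
    exact ⟨V, hSV, hV, hlt.le⟩
  obtain ⟨V, hEV, hV, hV_le⟩ := open_cover E hE a₁ hfin₁
  obtain ⟨W, hEW, hW, hW_le⟩ := open_cover Eᶜ hE.compl a₂ hfin₂
  have hmeas := ha₁.indicator (hV.measurableSet.diff hE)
  refine ⟨_, hmeas.add (ha₂.indicator (hW.measurableSet.diff hE.compl)), ?_,
    piecewise_of_isOpen hV hW hEV hEW h₁ h₂⟩
  calc ∫⁻ r in Ioc p q, ((V \ E).indicator a₁ r + (W \ Eᶜ).indicator a₂ r)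
      = (∫⁻ r in Ioc p q, (V \ E).indicator a₁ r) + ∫⁻ r in Ioc p q, (W \ Eᶜ).indicator a₂ r :=
        lintegral_add_left' hmeas _
    _ ≤ ε / 2 + ε / 2 := add_le_add hV_le hW_le
    _ = ε := ENNReal.add_halves ε

lemma inf (h₁ : IncrementBound f a₁ p q) (h₂ : IncrementBound f a₂ p q)
    (ha₁ : AEMeasurable a₁ (volume.restrict (Ioc p q)))
    (ha₂ : AEMeasurable a₂ (volume.restrict (Ioc p q)))
    (hfin₁ : ∫⁻ r in Ioc p q, a₁ r ≠ ∞) (hfin₂ : ∫⁻ r in Ioc p q, a₂ r ≠ ∞) :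
    IncrementBound f (fun t => a₁ t ⊓ a₂ t) p q := by
  classical
  set E := {t | ha₁.mk a₁ t ≤ ha₂.mk a₂ t}
  have hE : MeasurableSet E := measurableSet_le ha₁.measurable_mk ha₂.measurable_mk
  refine (piecewise hE h₁ h₂ ha₁ ha₂ hfin₁ hfin₂).congr_ae ?_
  filter_upwards [ha₁.ae_eq_mk, ha₂.ae_eq_mk] with t ht₁ ht₂
  by_cases htE : t ∈ E
  · have hle : a₁ t ≤ a₂ t := by rwa [ht₁, ht₂]
    simp [htE, hle]
  · have hle : a₂ t ≤ a₁ t := by rw [ht₁, ht₂]; exact (not_le.1 htE).le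
    simp [htE, hle]

lemma ofReal_abs_blend_sub_le (h₁ : IncrementBound f₁ a₁ p q) (h₂ : IncrementBound f₂ a₂ p q)
    (hη : IncrementBound η b p q)
    (ha₁ : AEMeasurable a₁ (volume.restrict (Ioc p q)))
    (ha₂ : AEMeasurable a₂ (volume.restrict (Ioc p q)))
    (hb : AEMeasurable b (volume.restrict (Ioc p q)))
    {s t : ℝ} (hs : p ≤ s) (hst : s ≤ t) (ht : t ≤ q) (hηt : η t ∈ Icc 0 1) :
    ENNReal.ofReal |((1 - η s) * f₁ s + η s * f₂ s) - ((1 - η t) * f₁ t + η t * f₂ t)| ≤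
      ∫⁻ r in Ioc s t, (ENNReal.ofReal (1 - η t) * a₁ r + ENNReal.ofReal (η t) * a₂ r
        + ENNReal.ofReal |f₁ s - f₂ s| * b r) := by
  have hη0 : 0 ≤ η t := hηt.1
  have hη1 : 0 ≤ 1 - η t := sub_nonneg.2 hηt.2
  have increment_le : |((1 - η s) * f₁ s + η s * f₂ s) - ((1 - η t) * f₁ t + η t * f₂ t)| ≤
      (1 - η t) * |f₁ s - f₁ t| + η t * |f₂ s - f₂ t| + |f₁ s - f₂ s| * |η s - η t| :=
    calc _ = |(1 - η t) * (f₁ s - f₁ t) + η t * (f₂ s - f₂ t) - (f₁ s - f₂ s) * (η s - η t)| := by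
          ring_nf
      _ ≤ |(1 - η t) * (f₁ s - f₁ t)| + |η t * (f₂ s - f₂ t)| + |(f₁ s - f₂ s) * (η s - η t)| :=
          (abs_sub _ _).trans (add_le_add_left (abs_add_le _ _) _)
      _ = _ := by rw [abs_mul, abs_mul, abs_mul, abs_of_nonneg hη0, abs_of_nonneg hη1]
  have hle : volume.restrict (Ioc s t) ≤ volume.restrict (Ioc p q) :=
    Measure.restrict_mono (Ioc_subset_Ioc hs ht) le_rfl
  rw [lintegral_add_right' _ ((hb.mono_measure hle).const_mul _),
    lintegral_add_right' _ ((ha₂.mono_measure hle).const_mul _),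
    lintegral_const_mul'' _ (ha₁.mono_measure hle), lintegral_const_mul'' _ (ha₂.mono_measure hle),
    lintegral_const_mul'' _ (hb.mono_measure hle)]
  refine (ENNReal.ofReal_le_ofReal increment_le).trans ?_
  rw [ENNReal.ofReal_add (by positivity) (by positivity),
    ENNReal.ofReal_add (by positivity) (by positivity), ENNReal.ofReal_mul hη1,
    ENNReal.ofReal_mul hη0, ENNReal.ofReal_mul (abs_nonneg _)]
  gcongr
  exacts [h₁ s t hs hst ht, h₂ s t hs hst ht, hη s t hs hst ht]

lemma blend (h₁ : IncrementBound f₁ a₁ p q) (h₂ : IncrementBound f₂ a₂ p q)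
    (hη : IncrementBound η b p q)
    (ha₁ : AEMeasurable a₁ (volume.restrict (Ioc p q)))
    (ha₂ : AEMeasurable a₂ (volume.restrict (Ioc p q)))
    (hb : AEMeasurable b (volume.restrict (Ioc p q)))
    (hfin₁ : ∫⁻ r in Ioc p q, a₁ r ≠ ∞) (hfin₂ : ∫⁻ r in Ioc p q, a₂ r ≠ ∞)
    (hfin : ∫⁻ r in Ioc p q, b r ≠ ∞) (hη_mem : ∀ t ∈ Icc p q, η t ∈ Icc 0 1) :
    IncrementBound (fun t => (1 - η t) * f₁ t + η t * f₂ t)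
      (fun t => ENNReal.ofReal (1 - η t) * a₁ t + ENNReal.ofReal (η t) * a₂ t
        + ENNReal.ofReal |f₁ t - f₂ t| * b t) p q := by
  have hsum_fin : ∫⁻ r in Ioc p q, (a₁ r + a₂ r + b r) ≠ ∞ := by
    rw [lintegral_add_right' _ hb, lintegral_add_right' _ ha₂]
    exact ENNReal.add_ne_top.2 ⟨ENNReal.add_ne_top.2 ⟨hfin₁, hfin₂⟩, hfin⟩
  refine of_forall_pos_add_mul (b := fun r => a₁ r + a₂ r + b r)
    ((ha₁.add ha₂).add hb) hsum_fin fun κ κ_pos => ?_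
  obtain ⟨d₁, d₁_pos, hd₁⟩ := h₁.exists_forall_abs_sub_le hfin₁ (κ := κ / 2) (by positivity)
  obtain ⟨d₂, d₂_pos, hd₂⟩ := h₂.exists_forall_abs_sub_le hfin₂ (κ := κ / 2) (by positivity)
  obtain ⟨d₃, d₃_pos, hd₃⟩ := hη.exists_forall_abs_sub_le hfin (κ := κ) (by exact_mod_cast κ_pos)
  refine of_small_steps (lt_min d₁_pos (lt_min d₂_pos d₃_pos)) fun s t hs hst ht hd => ?_
  refine (ofReal_abs_blend_sub_le h₁ h₂ hη ha₁ ha₂ hb hs hst ht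
    (hη_mem t ⟨hs.trans hst, ht⟩)).trans <| setLIntegral_mono' measurableSet_Ioc fun r hr => ?_
  obtain ⟨hdd₁, hd'⟩ := le_min_iff.1 hd
  obtain ⟨hdd₂, hdd₃⟩ := le_min_iff.1 hd'
  have hsr := hr.1.le
  have hηrt := abs_le.1 (hd₃ r t (hs.trans hsr) hr.2 ht (by linarith))
  have one_sub_le := ofReal_le_ofReal_add_coe (show 1 - η t ≤ 1 - η r + κ by linarith)
  have eta_le := ofReal_le_ofReal_add_coe (show η t ≤ η r + κ by linarith)
  have diff_le : ENNReal.ofReal |f₁ s - f₂ s| ≤ ENNReal.ofReal |f₁ r - f₂ r| + κ := by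
    have e₁ := hd₁ s r hs hsr (hr.2.trans ht) (by linarith [hr.2])
    have e₂ := hd₂ s r hs hsr (hr.2.trans ht) (by linarith [hr.2])
    exact ofReal_le_ofReal_add_coe (by
      linarith [abs_sub_le (f₁ s) (f₁ r) (f₂ s), abs_sub_le (f₁ r) (f₂ r) (f₂ s),
        abs_sub_comm (f₂ s) (f₂ r)])
  calc ENNReal.ofReal (1 - η t) * a₁ r + ENNReal.ofReal (η t) * a₂ r
        + ENNReal.ofReal |f₁ s - f₂ s| * b r
      ≤ (ENNReal.ofReal (1 - η r) + κ) * a₁ r + (ENNReal.ofReal (η r) + κ) * a₂ r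
        + (ENNReal.ofReal |f₁ r - f₂ r| + κ) * b r := by gcongr
    _ = _ := by ring

end IncrementBound

/-! ### Curves -/

namespace Curve

omit [MeasurableSpace X] [BorelSpace X] in
lemma In.mono {γ : Curve X} {A B : Set X} (h : γ.In A) (hAB : A ⊆ B) : γ.In B :=
  fun t ht => hAB (h t ht)

omit [MeasurableSpace X] [BorelSpace X] in
lemma integral_eq_setLIntegral_Ioc (γ : Curve X) (g : X → ℝ≥0∞) :
    γ.integral g = ∫⁻ t in Ioc 0 γ.len, g (γ.toFun t) :=
  (setLIntegral_congr Ioc_ae_eq_Icc).symm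

omit [MeasurableSpace X] [BorelSpace X] in
lemma integral_mono (γ : Curve X) {g h : X → ℝ≥0∞} (hgh : ∀ x, g x ≤ h x) :
    γ.integral g ≤ γ.integral h :=
  lintegral_mono fun _ => hgh _

omit [MeasurableSpace X] [BorelSpace X] in
lemma setLIntegral_Ioc_ne_top {γ : Curve X} {g : X → ℝ≥0∞} (h : γ.integral g ≠ ∞) {p q : ℝ}
    (hp : 0 ≤ p) (hq : q ≤ γ.len) : ∫⁻ t in Ioc p q, g (γ.toFun t) ≠ ∞ := by
  rw [integral_eq_setLIntegral_Ioc] at h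
  exact ne_top_of_le_ne_top h (lintegral_mono_set (Ioc_subset_Ioc hp hq))

lemma aemeasurable_comp (γ : Curve X) {g : X → ℝ≥0∞} (hg : Measurable g) :
    AEMeasurable (g ∘ γ.toFun) (volume.restrict (Ioc 0 γ.len)) :=
  hg.comp_aemeasurable
    ((γ.lip.continuousOn.mono Ioc_subset_Icc_self).aemeasurable measurableSet_Ioc)

lemma integral_const_mul (γ : Curve X) {g : X → ℝ≥0∞} (hg : Measurable g) (c : ℝ≥0∞) :
    γ.integral (fun x => c * g x) = c * γ.integral g := by
  simp only [integral_eq_setLIntegral_Ioc]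
  exact lintegral_const_mul'' _ (γ.aemeasurable_comp hg)

/-- The part of `γ` between the times `s` and `t`. -/
def subcurve (γ : Curve X) (s t : ℝ) (hs : 0 ≤ s) (hst : s ≤ t) (ht : t ≤ γ.len) : Curve X where
  len := t - s
  len_nonneg := sub_nonneg.2 hst
  toFun r := γ.toFun (r + s)
  lip := by
    have hshift : LipschitzOnWith 1 (fun r : ℝ => r + s) (Icc 0 (t - s)) :=
      (isometry_add_right s).lipschitz.lipschitzOnWith
    have hcomp := γ.lip.comp hshift fun r hr => ⟨by linarith [hr.1], by linarith [hr.2]⟩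
    rwa [one_mul] at hcomp

omit [MeasurableSpace X] [BorelSpace X] in
lemma subcurve_in {γ : Curve X} {A : Set X} {s t : ℝ} (hs : 0 ≤ s) (hst : s ≤ t) (ht : t ≤ γ.len)
    (hA : ∀ r ∈ Icc s t, γ.toFun r ∈ A) : (γ.subcurve s t hs hst ht).In A := by
  rintro r ⟨hr₀, hr₁ : r ≤ t - s⟩
  exact hA _ ⟨by linarith, by linarith⟩

omit [MeasurableSpace X] [BorelSpace X] in
lemma integral_subcurve (γ : Curve X) {s t : ℝ} (hs : 0 ≤ s) (hst : s ≤ t) (ht : t ≤ γ.len)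
    (g : X → ℝ≥0∞) :
    (γ.subcurve s t hs hst ht).integral g = ∫⁻ r in Ioc s t, g (γ.toFun r) := by
  rw [integral_eq_setLIntegral_Ioc,
    ← (measurePreserving_add_right volume s).setLIntegral_comp_preimage_emb
      (MeasurableEquiv.addRight s).measurableEmbedding (fun r => g (γ.toFun r)) (Ioc s t)]
  simp [subcurve]

omit [MeasurableSpace X] [BorelSpace X] in
lemma incrementBound_of_subcurve {γ : Curve X} {u : X → ℝ} {g : X → ℝ≥0∞} {p q : ℝ} (hp : 0 ≤ p)
    (hq : q ≤ γ.len)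
    (h : ∀ s t (hs : 0 ≤ s) (hst : s ≤ t) (ht : t ≤ γ.len), p ≤ s → t ≤ q →
      UGIneq u g (γ.subcurve s t hs hst ht)) :
    IncrementBound (u ∘ γ.toFun) (g ∘ γ.toFun) p q := by
  intro s t hs hst ht
  have hineq := h s t (hp.trans hs) hst (ht.trans hq) hs ht
  rw [UGIneq, integral_subcurve] at hineq
  simpa [subcurve] using hineq

omit [MeasurableSpace X] [BorelSpace X] in
lemma ugIneq_of_incrementBound {γ : Curve X} {u : X → ℝ} {g : X → ℝ≥0∞}
    (h : IncrementBound (u ∘ γ.toFun) (g ∘ γ.toFun) 0 γ.len) : UGIneq u g γ := by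
  rw [UGIneq, integral_eq_setLIntegral_Ioc]
  exact h 0 γ.len le_rfl γ.len_nonneg le_rfl

omit [MeasurableSpace X] [BorelSpace X] in
lemma incrementBound_of_lipschitzOnWith {γ : Curve X} {f : X → ℝ} {A : Set X} {L : ℝ≥0}
    (hf : LipschitzOnWith L f A) {p q : ℝ} (hp : 0 ≤ p) (hq : q ≤ γ.len)
    (hA : ∀ t ∈ Icc p q, γ.toFun t ∈ A) :
    IncrementBound (f ∘ γ.toFun) (fun _ => L) p q := by
  intro s t hs hst ht
  have hlip : edist (f (γ.toFun s)) (f (γ.toFun t)) ≤ L * edist s t := by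
    have hcomp := hf.comp (γ.lip.mono (Icc_subset_Icc hp hq)) hA
    rw [mul_one] at hcomp
    exact hcomp ⟨hs, hst.trans ht⟩ ⟨hs.trans hst, ht⟩
  rw [edist_dist, edist_dist, Real.dist_eq, Real.dist_eq, abs_sub_comm s,
    abs_of_nonneg (sub_nonneg.2 hst)] at hlip
  simpa [setLIntegral_const] using hlip

end Curve

/-! ### Almost every curve -/

lemma exists_lintegral_ne_top_forall_curve (μ : Measure X) (ρ : ℕ → X → ℝ≥0∞)
    (hρ : ∀ k, Measurable (ρ k)) (hfin : ∀ k, ∫⁻ x, ρ k x ∂μ ≠ ∞) :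
    ∃ r : X → ℝ≥0∞, Measurable r ∧ ∫⁻ x, r x ∂μ < ∞ ∧
      ∀ (γ : Curve X) (k : ℕ), γ.integral (ρ k) = ∞ → γ.integral r = ∞ := by
  obtain ⟨e, he, hsum⟩ := ENNReal.exists_pos_sum_of_countable (ε := 1) one_ne_zero ℕ
  choose c hc_pos hc using fun k =>
    ENNReal.exists_nnreal_pos_mul_lt (hfin k) (ENNReal.coe_ne_zero.2 (he k).ne')
  have hmeas (k : ℕ) : Measurable fun x => c k * ρ k x := (hρ k).const_mul _
  refine ⟨fun x => ∑' k, c k * ρ k x, Measurable.tsum hmeas, ?_, fun γ k hk => ?_⟩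
  · calc ∫⁻ x, ∑' k, c k * ρ k x ∂μ
        = ∑' k, c k * ∫⁻ x, ρ k x ∂μ := by
          rw [lintegral_tsum fun k => (hmeas k).aemeasurable]
          exact tsum_congr fun k => lintegral_const_mul _ (hρ k)
      _ ≤ ∑' k, (e k : ℝ≥0∞) := ENNReal.tsum_le_tsum fun k => (hc k).le
      _ < ∞ := hsum.trans ENNReal.one_lt_top
  · have hle : γ.integral (fun x => c k * ρ k x) ≤ γ.integral (fun x => ∑' k, c k * ρ k x) :=
      γ.integral_mono fun x => ENNReal.le_tsum (f := fun k => c k * ρ k x) k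
    rwa [γ.integral_const_mul (hρ k), hk, ENNReal.mul_top (by exact_mod_cast (hc_pos k).ne'),
      top_le_iff] at hle

lemma ZeroMod.sUnion {μ : Measure X} {S : Set (Set (Curve X))} (hS : S.Countable)
    (h : ∀ Γ ∈ S, ZeroMod μ Γ) : ZeroMod μ (⋃₀ S) := by
  rcases S.eq_empty_or_nonempty with rfl | hne
  · exact ⟨0, measurable_const, by simp, by simp⟩
  obtain ⟨Γ, rfl⟩ := hS.exists_eq_range hne
  choose ρ hρ hfin hρ_top using fun k => h (Γ k) (mem_range_self k)
  obtain ⟨r, hr, hr_fin, hr_top⟩ :=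
    exists_lintegral_ne_top_forall_curve μ ρ hρ fun k => (hfin k).ne
  refine ⟨r, hr, hr_fin, fun γ hγ => ?_⟩
  obtain ⟨k, hk⟩ := mem_iUnion.1 (sUnion_range Γ ▸ hγ)
  exact hr_top γ k (hρ_top k γ hk)

/-- The filter of properties of `1`-almost every curve: those that fail only on a curve family of
zero `1`-modulus. -/
def aeCurve (μ : Measure X) : Filter (Curve X) :=
  .ofCountableUnion {Γ | ZeroMod μ Γ} (fun _ hS h => ZeroMod.sUnion hS h)
    fun _ ⟨ρ, hρ, hfin, htop⟩ _ hsub => ⟨ρ, hρ, hfin, fun γ hγ => htop γ (hsub hγ)⟩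

instance (μ : Measure X) : CountableInterFilter (aeCurve μ) :=
  countableInter_ofCountableUnion _ _ _

section AeCurve

variable {μ : Measure X} {u : X → ℝ} {g g' : X → ℝ≥0∞} {A B : Set X}

lemma eventually_aeCurve_iff {P : Curve X → Prop} :
    (∀ᶠ γ in aeCurve μ, P γ) ↔ ∃ ρ : X → ℝ≥0∞, Measurable ρ ∧ ∫⁻ x, ρ x ∂μ < ∞ ∧
      ∀ γ : Curve X, γ.integral ρ ≠ ∞ → P γ := by
  refine exists_congr fun ρ => and_congr_right fun _ => and_congr_right fun _ =>
    forall_congr' fun γ => ?_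
  exact not_imp_comm

lemma eventually_aeCurve_subcurve {P : Curve X → Prop} (h : ∀ᶠ γ in aeCurve μ, P γ) :
    ∀ᶠ γ in aeCurve μ, ∀ s t (hs : 0 ≤ s) (hst : s ≤ t) (ht : t ≤ γ.len),
      P (γ.subcurve s t hs hst ht) := by
  obtain ⟨ρ, hρ, hfin, hP⟩ := eventually_aeCurve_iff.1 h
  refine eventually_aeCurve_iff.2 ⟨ρ, hρ, hfin, fun γ hγ s t hs hst ht => hP _ ?_⟩
  rw [Curve.integral_subcurve]
  exact Curve.setLIntegral_Ioc_ne_top hγ hs ht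

lemma eventually_aeCurve_ae {P : X → Prop} (h : ∀ᵐ x ∂μ, P x) :
    ∀ᶠ γ in aeCurve μ, ∀ᵐ t ∂volume.restrict (Ioc 0 γ.len), P (γ.toFun t) := by
  obtain ⟨N, hN_sub, hN, hN_null⟩ := exists_measurable_superset_of_null h
  have hmeas : Measurable (N.indicator fun _ => (∞ : ℝ≥0∞)) := measurable_const.indicator hN
  refine eventually_aeCurve_iff.2 ⟨_, hmeas, by simp [lintegral_indicator hN, hN_null],
    fun γ hγ => ?_⟩
  rw [Curve.integral_eq_setLIntegral_Ioc] at hγ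
  filter_upwards [ae_lt_top' (γ.aemeasurable_comp hmeas) hγ] with t ht
  by_contra hPt
  simp [hN_sub hPt] at ht

lemma eventually_aeCurve_aemeasurable_comp (hg : AEMeasurable g μ) :
    ∀ᶠ γ in aeCurve μ, AEMeasurable (g ∘ γ.toFun) (volume.restrict (Ioc 0 γ.len)) := by
  filter_upwards [eventually_aeCurve_ae hg.ae_eq_mk] with γ hγ
  exact (γ.aemeasurable_comp hg.measurable_mk).congr (hγ.mono fun t ht => ht.symm)

lemma eventually_aeCurve_integral_eq (h : g =ᵐ[μ] g') :
    ∀ᶠ γ in aeCurve μ, γ.integral g = γ.integral g' := by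
  filter_upwards [eventually_aeCurve_ae h] with γ hγ
  simp only [Curve.integral_eq_setLIntegral_Ioc]
  exact lintegral_congr_ae hγ

lemma eventually_aeCurve_integral_ne_top (hg : AEMeasurable g μ) (hfin : ∫⁻ x, g x ∂μ ≠ ∞) :
    ∀ᶠ γ in aeCurve μ, γ.integral g ≠ ∞ := by
  have hmk : ∀ᶠ γ in aeCurve μ, γ.integral (hg.mk g) ≠ ∞ :=
    eventually_aeCurve_iff.2 ⟨_, hg.measurable_mk,
      by rwa [← lintegral_congr_ae hg.ae_eq_mk, lt_top_iff_ne_top], fun _ => id⟩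
  filter_upwards [hmk, eventually_aeCurve_integral_eq hg.ae_eq_mk] with γ hγ heq
  rwa [heq]

lemma eventually_aeCurve_integral_indicator_ne_top [SFinite μ] (hg : AEMeasurable g μ) {V : Set X}
    (hV : MeasurableSet V) (hfin : ∫⁻ x in A ∩ V, g x ∂μ ≠ ∞) :
    ∀ᶠ γ in aeCurve μ, γ.integral ((toMeasurable μ A ∩ V).indicator g) ≠ ∞ := by
  have hA := measurableSet_toMeasurable μ A
  refine eventually_aeCurve_integral_ne_top (hg.indicator (hA.inter hV)) ?_
  rwa [lintegral_indicator (hA.inter hV), inter_comm, ← Measure.restrict_restrict hV,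
    Measure.restrict_toMeasurable_of_sFinite, Measure.restrict_restrict hV, inter_comm]

omit [BorelSpace X] in
lemma LIntegrableLocOn.of_lintegral_lt_top (h : ∫⁻ x in A, g x ∂μ < ∞) : LIntegrableLocOn μ g A :=
  fun _ _ => ⟨1, one_pos, (lintegral_mono_set inter_subset_left).trans_lt h⟩

omit [BorelSpace X] in
lemma LIntegrableLocOn.mono (h : LIntegrableLocOn μ g A) (hle : ∀ x, g' x ≤ g x) :
    LIntegrableLocOn μ g' A := fun x hx =>
  let ⟨r, hr, hfin⟩ := h x hx
  ⟨r, hr, (lintegral_mono hle).trans_lt hfin⟩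

lemma LIntegrableLocOn.eventually_aeCurve_integral_ne_top [SecondCountableTopology X] [SFinite μ]
    (h : LIntegrableLocOn μ g A) (hg : AEMeasurable g μ) :
    ∀ᶠ γ in aeCurve μ, γ.In A → γ.integral g ≠ ∞ := by
  choose! R hR hfin using h
  obtain ⟨T, hTA, hT, hA_sub⟩ := TopologicalSpace.countable_cover_nhdsWithin
    fun x hx => mem_nhdsWithin_of_mem_nhds (ball_mem_nhds x (hR x hx))
  set S : X → Set X := fun x => toMeasurable μ A ∩ ball x (R x)
  have hS (x : X) : MeasurableSet (S x) := (measurableSet_toMeasurable μ A).inter measurableSet_ball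
  have hfin_S : ∀ᶠ γ in aeCurve μ, ∀ x ∈ T, γ.integral ((S x).indicator g) ≠ ∞ :=
    (eventually_countable_ball hT).2 fun x hx =>
      eventually_aeCurve_integral_indicator_ne_top hg measurableSet_ball (hfin x (hTA hx)).ne
  have hmeas_S : ∀ᶠ γ in aeCurve μ, ∀ x ∈ T,
      AEMeasurable ((S x).indicator g ∘ γ.toFun) (volume.restrict (Ioc 0 γ.len)) :=
    (eventually_countable_ball hT).2 fun x _ =>
      eventually_aeCurve_aemeasurable_comp (hg.indicator (hS x))
  filter_upwards [hfin_S, hmeas_S] with γ hγ_fin hγ_meas hγA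
  obtain ⟨F, hFT, hF, hγF⟩ := (isCompact_Icc.image_of_continuousOn
    γ.lip.continuousOn).elim_finite_subcover_image (b := T) (c := fun x => ball x (R x))
    (fun _ _ => isOpen_ball) ((image_subset_iff.2 hγA).trans hA_sub)
  lift F to Finset X using hF
  have hle : γ.integral g ≤ ∑ x ∈ F, γ.integral ((S x).indicator g) := by
    simp only [Curve.integral_eq_setLIntegral_Ioc]
    refine le_trans ?_ (lintegral_finsetSum' F fun x hx => hγ_meas x (hFT hx)).le
    refine setLIntegral_mono' measurableSet_Ioc fun t ht => ?_
    have ht' := Ioc_subset_Icc_self ht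
    obtain ⟨x, hxF, hx⟩ := mem_iUnion₂.1 (hγF (mem_image_of_mem _ ht'))
    have hmem : γ.toFun t ∈ S x := ⟨subset_toMeasurable μ A (hγA t ht'), hx⟩
    calc g (γ.toFun t) = (S x).indicator g (γ.toFun t) := (indicator_of_mem hmem g).symm
      _ ≤ ∑ y ∈ F, (S y).indicator g (γ.toFun t) :=
          Finset.single_le_sum (f := fun y => (S y).indicator g (γ.toFun t))
            (fun _ _ => zero_le) hxF
  exact ne_top_of_le_ne_top (ENNReal.sum_ne_top.2 fun x hx => hγ_fin x (hFT hx)) hle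

/-! ### Weak upper gradients -/

lemma isWeakUpperGradientOn_iff : IsWeakUpperGradientOn μ u g A ↔
    AEMeasurable g μ ∧ ∀ᶠ γ in aeCurve μ, γ.In A → UGIneq u g γ := by
  refine and_congr_right fun _ => exists_congr fun ρ => and_congr_right fun _ =>
    and_congr_right fun _ => forall_congr' fun γ => ?_
  simp only [mem_ofPred_eq, mem_compl_iff, Classical.not_imp]

lemma IsWeakUpperGradientOn.mono_set (h : IsWeakUpperGradientOn μ u g A) (hBA : B ⊆ A) :
    IsWeakUpperGradientOn μ u g B := by
  rw [isWeakUpperGradientOn_iff] at h ⊢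
  exact ⟨h.1, h.2.mono fun γ hγ hγB => hγ (hγB.mono hBA)⟩

lemma IsWeakUpperGradientOn.eventually_incrementBound (h : IsWeakUpperGradientOn μ u g A) :
    ∀ᶠ γ in aeCurve μ, γ.In A → IncrementBound (u ∘ γ.toFun) (g ∘ γ.toFun) 0 γ.len := by
  filter_upwards [eventually_aeCurve_subcurve (isWeakUpperGradientOn_iff.1 h).2] with γ hγ hγA
  exact Curve.incrementBound_of_subcurve le_rfl le_rfl fun s t hs hst ht _ _ =>
    hγ s t hs hst ht (Curve.subcurve_in hs hst ht fun r hr =>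
      hγA r ⟨hs.trans hr.1, hr.2.trans ht⟩)

lemma IsWeakUpperGradientOn.inf [SecondCountableTopology X] [SFinite μ]
    (hg : IsWeakUpperGradientOn μ u g A) (hg' : IsWeakUpperGradientOn μ u g' A)
    (hloc : LIntegrableLocOn μ g A) (hloc' : LIntegrableLocOn μ g' A) :
    IsWeakUpperGradientOn μ u (fun x => g x ⊓ g' x) A := by
  refine isWeakUpperGradientOn_iff.2 ⟨hg.1.inf hg'.1, ?_⟩
  filter_upwards [hg.eventually_incrementBound, hg'.eventually_incrementBound,
    hloc.eventually_aeCurve_integral_ne_top hg.1, hloc'.eventually_aeCurve_integral_ne_top hg'.1,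
    eventually_aeCurve_aemeasurable_comp hg.1, eventually_aeCurve_aemeasurable_comp hg'.1]
    with γ hb hb' hfin hfin' hmeas hmeas' hγA
  exact Curve.ugIneq_of_incrementBound <| (hb hγA).inf (hb' hγA) hmeas hmeas'
    (Curve.setLIntegral_Ioc_ne_top (hfin hγA) le_rfl le_rfl)
    (Curve.setLIntegral_Ioc_ne_top (hfin' hγA) le_rfl le_rfl)

lemma IsWeakUpperGradientOn.iInf_of_antitone [SecondCountableTopology X] [SFinite μ]
    {g : ℕ → X → ℝ≥0∞} (hg : ∀ n, IsWeakUpperGradientOn μ u (g n) A) (hanti : Antitone g)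
    (hloc : LIntegrableLocOn μ (g 0) A) : IsWeakUpperGradientOn μ u (fun x => ⨅ n, g n x) A := by
  refine isWeakUpperGradientOn_iff.2 ⟨AEMeasurable.iInf fun n => (hg n).1, ?_⟩
  filter_upwards [eventually_countable_forall.2 fun n => (isWeakUpperGradientOn_iff.1 (hg n)).2,
    eventually_countable_forall.2 fun n => eventually_aeCurve_aemeasurable_comp (hg n).1,
    hloc.eventually_aeCurve_integral_ne_top (hg 0).1] with γ hineq hmeas hfin hγA
  have hintegral : γ.integral (fun x => ⨅ n, g n x) = ⨅ n, γ.integral (g n) := by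
    simp only [Curve.integral_eq_setLIntegral_Ioc]
    exact lintegral_iInf' hmeas (ae_of_all _ fun t m n hmn => hanti hmn _)
      (Curve.setLIntegral_Ioc_ne_top (hfin hγA) le_rfl le_rfl)
  rw [UGIneq, hintegral]
  exact le_iInf fun n => hineq n hγA

lemma IsWeakUpperGradientOn.iInf [SecondCountableTopology X] [SFinite μ] {g : ℕ → X → ℝ≥0∞}
    (hg : ∀ n, IsWeakUpperGradientOn μ u (g n) A) (hloc : ∀ n, LIntegrableLocOn μ (g n) A) :
    IsWeakUpperGradientOn μ u (fun x => ⨅ n, g n x) A := by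
  set G : ℕ → X → ℝ≥0∞ := fun n x => ⨅ k ≤ n, g k x
  have hG_zero : G 0 = g 0 := by funext x; simp [G]
  have hG_succ (n : ℕ) : G (n + 1) = fun x => G n x ⊓ g (n + 1) x :=
    funext fun x => Nat.iInf_le_succ (fun k => g k x) n
  have hG_anti : Antitone G := antitone_nat_of_succ_le fun n => by
    rw [hG_succ]
    exact fun x => inf_le_left
  have hG_loc (n : ℕ) : LIntegrableLocOn μ (G n) A :=
    (hloc 0).mono fun x => iInf₂_le 0 (Nat.zero_le n)
  have hG (n : ℕ) : IsWeakUpperGradientOn μ u (G n) A := by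
    induction n with
    | zero => rw [hG_zero]; exact hg 0
    | succ n ih => rw [hG_succ]; exact ih.inf (hg _) (hG_loc n) (hloc _)
  convert IsWeakUpperGradientOn.iInf_of_antitone hG hG_anti (hG_loc 0) using 2 with x
  exact (biInf_le_eq_iInf (f := fun k => g k x)).symm

lemma IsWeakUpperGradientOn.exists_isMinimalWUG [SecondCountableTopology X] [SFinite μ]
    (hg : IsWeakUpperGradientOn μ u g A) (hfin : ∫⁻ x in A, g x ∂μ < ∞) :
    ∃ m, IsMinimalWUG μ u m A ∧ ∫⁻ x in A, m x ∂μ ≤ ∫⁻ x in A, g x ∂μ := by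
  suffices ∃ m, IsMinimalWUG μ u m A by
    obtain ⟨m, hm⟩ := this
    exact ⟨m, hm, lintegral_mono_ae (hm.2 g hg (.of_lintegral_lt_top hfin))⟩
  set S : Set ℝ≥0∞ := (fun h : X → ℝ≥0∞ => ∫⁻ x in A, h x ∂μ) ''
    {h | IsWeakUpperGradientOn μ u h A ∧ ∫⁻ x in A, h x ∂μ < ∞}
  have hS : S.Nonempty := ⟨_, g, ⟨hg, hfin⟩, rfl⟩
  obtain ⟨y, -, hy_tendsto, hyS⟩ := exists_seq_tendsto_sInf hS (OrderBot.bddBelow S)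
  choose h hh hhy using hyS
  set m : X → ℝ≥0∞ := fun x => ⨅ n, h n x
  have hm : IsWeakUpperGradientOn μ u m A :=
    .iInf (fun n => (hh n).1) fun n => .of_lintegral_lt_top (hh n).2
  have hm_le (n : ℕ) : ∫⁻ x in A, m x ∂μ ≤ y n :=
    (lintegral_mono fun x => iInf_le (fun n => h n x) n).trans_eq (hhy n)
  have hm_fin : ∫⁻ x in A, m x ∂μ < ∞ := (hm_le 0).trans_lt (hhy 0 ▸ (hh 0).2)
  refine ⟨m, hm, fun g' hg' hloc' => ?_⟩
  have hinf_le : ∫⁻ x in A, m x ⊓ g' x ∂μ ≤ ∫⁻ x in A, m x ∂μ :=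
    lintegral_mono fun x => inf_le_left
  have hinf_mem : ∫⁻ x in A, m x ⊓ g' x ∂μ ∈ S :=
    ⟨_, ⟨hm.inf hg' (.of_lintegral_lt_top hm_fin) hloc', hinf_le.trans_lt hm_fin⟩, rfl⟩
  have hm_minimal : ∫⁻ x in A, m x ∂μ ≤ ∫⁻ x in A, m x ⊓ g' x ∂μ :=
    (ge_of_tendsto' hy_tendsto hm_le).trans (sInf_le hinf_mem)
  filter_upwards [ae_eq_of_ae_le_of_lintegral_le (ae_of_all _ fun x => inf_le_left)
    (hinf_le.trans_lt hm_fin).ne hm.1.restrict hm_minimal] with x hx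
  exact inf_eq_left.1 hx

/-- `g` satisfies the upper gradient inequality for `u` along *every* curve in `A`. -/
def IsUpperGradientOn (u : X → ℝ) (g : X → ℝ≥0∞) (A : Set X) : Prop :=
  ∀ γ : Curve X, γ.In A → UGIneq u g γ

lemma IsUpperGradientOn.isWeakUpperGradientOn (h : IsUpperGradientOn u g A)
    (hg : AEMeasurable g μ) : IsWeakUpperGradientOn μ u g A :=
  isWeakUpperGradientOn_iff.2 ⟨hg, .of_forall h⟩

omit [MeasurableSpace X] [BorelSpace X] in
lemma IsUpperGradientOn.incrementBound (h : IsUpperGradientOn u g A) {γ : Curve X} {p q : ℝ}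
    (hp : 0 ≤ p) (hq : q ≤ γ.len) (hA : ∀ t ∈ Icc p q, γ.toFun t ∈ A) :
    IncrementBound (u ∘ γ.toFun) (g ∘ γ.toFun) p q :=
  Curve.incrementBound_of_subcurve hp hq fun _ _ hs hst ht hps htq =>
    h _ (Curve.subcurve_in hs hst ht fun r hr => hA r ⟨hps.trans hr.1, hr.2.trans htq⟩)

lemma IsWeakUpperGradientOn.exists_lowerSemicontinuous [SigmaFinite μ] [μ.WeaklyRegular]
    (h : IsWeakUpperGradientOn μ u g A) {ε : ℝ≥0∞} (hε : ε ≠ 0) :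
    ∃ ρ : X → ℝ≥0∞, LowerSemicontinuous ρ ∧ (∀ x, 0 < ρ x) ∧
      ∫⁻ x, ρ x ∂μ ≤ ∫⁻ x in A, g x ∂μ + ε ∧ IsUpperGradientOn u ρ A := by
  have hε3 : ε / 3 ≠ 0 := by simp [hε]
  set g' := h.1.mk g
  obtain ⟨r, hr, hr_fin, hr_bound⟩ := eventually_aeCurve_iff.1
    (h.eventually_incrementBound.and (eventually_aeCurve_ae h.1.ae_eq_mk))
  obtain ⟨κ, κ_pos, hκ⟩ := ENNReal.exists_nnreal_pos_mul_lt hr_fin.ne hε3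
  obtain ⟨w, w_pos, hw, hw_lt⟩ := exists_pos_lintegral_lt_of_sigmaFinite μ hε3
  have hA := measurableSet_toMeasurable μ A
  have hg'A : Measurable ((toMeasurable μ A).indicator g') := h.1.measurable_mk.indicator hA
  obtain ⟨ρ, hρ, hρ_lsc, hρ_le⟩ := exists_le_lowerSemicontinuous_lintegral_ge μ
    (fun x => (toMeasurable μ A).indicator g' x + (κ * r x + w x))
    (hg'A.add ((hr.const_mul _).add hw.coe_nnreal_ennreal)) hε3
  refine ⟨ρ, hρ_lsc, fun x => ?_, ?_, fun γ hγA => ?_⟩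
  · exact (ENNReal.coe_pos.2 (w_pos x)).trans_le ((le_add_self.trans le_add_self).trans (hρ x))
  · rw [lintegral_add_left hg'A, lintegral_add_left (hr.const_mul _), lintegral_const_mul _ hr,
      lintegral_indicator hA, Measure.restrict_toMeasurable_of_sFinite,
      ← lintegral_congr_ae (ae_restrict_of_ae h.1.ae_eq_mk), add_assoc] at hρ_le
    refine hρ_le.trans (add_le_add_right ?_ _)
    calc κ * (∫⁻ x, r x ∂μ) + (∫⁻ x, w x ∂μ) + ε / 3 ≤ ε / 3 + ε / 3 + ε / 3 := by gcongr
      _ = ε := ENNReal.add_thirds ε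
  · by_cases htop : γ.integral ρ = ∞
    · rw [UGIneq, htop]; exact le_top
    have hr_ne : γ.integral r ≠ ∞ := fun hr_top => htop <| by
      have hle : γ.integral (fun x => κ * r x) ≤ γ.integral ρ :=
        γ.integral_mono fun x => (le_self_add.trans le_add_self).trans (hρ x)
      rwa [γ.integral_const_mul hr, hr_top, ENNReal.mul_top (by exact_mod_cast κ_pos.ne'),
        top_le_iff] at hle
    obtain ⟨hbound, hae⟩ := hr_bound γ hr_ne
    refine Curve.ugIneq_of_incrementBound (((hbound hγA).congr_ae hae).mono_right fun t ht => ?_)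
    calc g' (γ.toFun t) = (toMeasurable μ A).indicator g' (γ.toFun t) :=
          (indicator_of_mem (subset_toMeasurable μ A (hγA t ht)) g').symm
      _ ≤ ρ (γ.toFun t) := le_self_add.trans (hρ _)

end AeCurve

/-! ### Doubling measures -/

section Doubling

lemma exists_seq_pairwise_le_dist_of_not_totallyBounded {Y : Type*} [PseudoMetricSpace Y]
    {s : Set Y} (hs : ¬TotallyBounded s) :
    ∃ ε > 0, ∃ f : ℕ → Y, (∀ n, f n ∈ s) ∧ Pairwise fun m n => ε ≤ dist (f m) (f n) := by
  rw [Metric.totallyBounded_iff] at hs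
  push Not at hs
  obtain ⟨ε, hε, hs⟩ := hs
  have : Std.Symm fun y z : Y => ε ≤ dist y z := ⟨fun y z h => by rwa [dist_comm]⟩
  obtain ⟨f, hf, hsep⟩ := exists_seq_of_forall_finset_exists' (· ∈ s) (fun y z => ε ≤ dist y z)
    fun t _ => by
      obtain ⟨y, hy, hyt⟩ := not_subset.1 (hs t t.finite_toSet)
      simp only [mem_iUnion₂, mem_ball, not_exists, not_lt] at hyt
      exact ⟨y, hy, fun z hz => dist_comm y z ▸ hyt z hz⟩
  exact ⟨ε, hε, f, hf, hsep⟩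

variable {μ : Measure X} {Cd : ℝ}

namespace Doubling

omit [BorelSpace X] in
lemma measure_ball_lt_top (h : Doubling μ Cd) (x : X) {r : ℝ} (hr : 0 < r) : μ (ball x r) < ∞ :=
  (h.2 x r hr).2.2

omit [BorelSpace X] in
lemma measure_ball_two_mul_le (h : Doubling μ Cd) (x : X) {r : ℝ} (hr : 0 < r) :
    μ (ball x (2 * r)) ≤ ENNReal.ofReal Cd * μ (ball x r) :=
  (h.2 x r hr).2.1

omit [BorelSpace X] in
lemma measure_ball_pos (h : Doubling μ Cd) (x : X) {r : ℝ} (hr : 0 < r) : 0 < μ (ball x r) :=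
  mul_div_cancel₀ r two_ne_zero ▸ (h.2 x (r / 2) (half_pos hr)).1

omit [BorelSpace X] in
lemma measure_ball_two_pow_mul_le (h : Doubling μ Cd) (x : X) (k : ℕ) {r : ℝ} (hr : 0 < r) :
    μ (ball x (2 ^ k * r)) ≤ ENNReal.ofReal Cd ^ k * μ (ball x r) := by
  induction k with
  | zero => simp
  | succ k ih =>
    rw [pow_succ', mul_assoc, pow_succ', mul_assoc]
    exact (h.measure_ball_two_mul_le x (by positivity)).trans (by gcongr)

omit [BorelSpace X] in
lemma isLocallyFiniteMeasure (h : Doubling μ Cd) : IsLocallyFiniteMeasure μ :=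
  ⟨fun x => ⟨ball x 1, ball_mem_nhds x one_pos, h.measure_ball_lt_top x one_pos⟩⟩

omit [BorelSpace X] in
lemma isUnifLocDoublingMeasure (h : Doubling μ Cd) : IsUnifLocDoublingMeasure μ := by
  refine ⟨Real.toNNReal Cd ^ 2, ?_⟩
  filter_upwards [self_mem_nhdsWithin] with r (hr : 0 < r) x
  calc μ (closedBall x (2 * r)) ≤ μ (ball x (2 ^ 2 * r)) :=
        measure_mono (closedBall_subset_ball (by linarith))
    _ ≤ ENNReal.ofReal Cd ^ 2 * μ (ball x r) := h.measure_ball_two_pow_mul_le x 2 hr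
    _ ≤ (Real.toNNReal Cd ^ 2 : ℝ≥0) * μ (closedBall x r) := by
        push_cast
        gcongr
        exacts [le_rfl, ball_subset_closedBall]

lemma totallyBounded_closedBall (h : Doubling μ Cd) (x : X) (R : ℝ) :
    TotallyBounded (closedBall x R) := by
  by_contra hnot
  obtain ⟨ε, hε, f, hf, hsep⟩ := exists_seq_pairwise_le_dist_of_not_totallyBounded hnot
  have hR : 0 ≤ R := dist_nonneg.trans (hf 0)
  have hdisj : Pairwise (Function.onFun Disjoint fun n => ball (f n) (ε / 2)) :=
    fun m n hmn => ball_disjoint_ball (by linarith [hsep hmn])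
  obtain ⟨k, hk⟩ := pow_unbounded_of_one_lt ((2 * R + ε) / (ε / 2)) one_lt_two
  rw [div_lt_iff₀ (by positivity)] at hk
  have hball (n : ℕ) : μ (ball x (R + ε)) ≤ ENNReal.ofReal Cd ^ k * μ (ball (f n) (ε / 2)) := by
    refine (measure_mono (ball_subset_ball' ?_)).trans
      (h.measure_ball_two_pow_mul_le (f n) k (half_pos hε))
    linarith [dist_comm x (f n) ▸ mem_closedBall.1 (hf n)]
  have hsum : ∑' n, μ (ball (f n) (ε / 2)) ≤ μ (ball x (R + ε)) := by
    rw [← measure_iUnion hdisj fun n => measurableSet_ball]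
    exact measure_mono (iUnion_subset fun n =>
      ball_subset_ball' (by linarith [mem_closedBall.1 (hf n)]))
  have htop : (∞ : ℝ≥0∞) < ∞ := calc
    (∞ : ℝ≥0∞) = ∑' _ : ℕ, μ (ball x (R + ε)) :=
        (ENNReal.tsum_const_eq_top_of_ne_zero (h.measure_ball_pos x (by positivity)).ne').symm
    _ ≤ ∑' n, ENNReal.ofReal Cd ^ k * μ (ball (f n) (ε / 2)) := ENNReal.tsum_le_tsum hball
    _ = ENNReal.ofReal Cd ^ k * ∑' n, μ (ball (f n) (ε / 2)) := ENNReal.tsum_mul_left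
    _ < ∞ := ENNReal.mul_lt_top (by simp)
        (hsum.trans_lt (h.measure_ball_lt_top x (by positivity)))
  exact htop.ne rfl

lemma properSpace [CompleteSpace X] (h : Doubling μ Cd) : ProperSpace X :=
  ⟨fun x R => (h.totallyBounded_closedBall x R).isCompact_of_isClosed isClosed_closedBall⟩

end Doubling

end Doubling

/-! ### Lipschitz approximation of lower semicontinuous functions -/

section InfConv

omit [MeasurableSpace X] [BorelSpace X]

/-- The inf-convolution of `min ρ (n + 1)` with `(n + 1) * edist`. For lower semicontinuous `ρ`,
these are Lipschitz functions increasing to `ρ`. -/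
def infConv (ρ : X → ℝ≥0∞) (n : ℕ) (x : X) : ℝ≥0∞ :=
  ⨅ y, min (ρ y) (n + 1) + (n + 1) * edist x y

variable (ρ : X → ℝ≥0∞) (n : ℕ) {x : X}

lemma infConv_le_min (x : X) : infConv ρ n x ≤ min (ρ x) (n + 1) :=
  (iInf_le _ x).trans_eq (by simp)

lemma infConv_le_self (x : X) : infConv ρ n x ≤ ρ x :=
  (infConv_le_min ρ n x).trans (min_le_left _ _)

lemma infConv_le_succ (x : X) : infConv ρ n x ≤ n + 1 :=
  (infConv_le_min ρ n x).trans (min_le_right _ _)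

lemma infConv_le_add_edist (x y : X) :
    infConv ρ n x ≤ infConv ρ n y + (n + 1) * edist x y := by
  simp only [infConv, ENNReal.iInf_add]
  refine le_iInf fun z => iInf_le_of_le z ?_
  calc min (ρ z) (n + 1) + (n + 1) * edist x z
      ≤ min (ρ z) (n + 1) + (n + 1) * (edist x y + edist y z) := by
        gcongr
        exact edist_triangle x y z
    _ = min (ρ z) (n + 1) + (n + 1) * edist y z + (n + 1) * edist x y := by ring

lemma continuous_infConv : Continuous (infConv ρ n) :=
  continuous_of_le_add_edist (n + 1) (by finiteness) (infConv_le_add_edist ρ n)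

lemma monotone_infConv : Monotone (infConv ρ) := fun m n hmn x => by
  have : (m : ℝ≥0∞) ≤ n := by exact_mod_cast hmn
  unfold infConv
  gcongr

variable {ρ}

lemma min_le_infConv {c δ : ℝ≥0∞} (h : ∀ y, edist y x < δ → c ≤ ρ y) :
    min (min c (n + 1)) ((n + 1) * δ) ≤ infConv ρ n x := by
  refine le_iInf fun y => ?_
  rcases lt_or_ge (edist y x) δ with hy | hy
  · exact (min_le_left _ _).trans ((min_le_min_right _ (h y hy)).trans le_self_add)
  · calc min (min c (n + 1)) ((n + 1) * δ) ≤ (n + 1) * edist x y :=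
          (min_le_right _ _).trans (by rw [edist_comm]; gcongr)
      _ ≤ min (ρ y) (n + 1) + (n + 1) * edist x y := le_add_self

lemma one_le_infConv (h : ∀ y, 1 ≤ ρ y) (x : X) : 1 ≤ infConv ρ n x := by
  refine le_trans ?_ (min_le_infConv n (c := 1) (δ := 1) fun y _ => h y)
  simp

lemma exists_pos_forall_edist_lt_imp_le (hρ : LowerSemicontinuous ρ) {c : ℝ≥0∞}
    (hc : c < ρ x) : ∃ δ > 0, ∀ y, edist y x < δ → c ≤ ρ y := by
  obtain ⟨δ, hδ, h⟩ := EMetric.mem_nhds_iff.1 (hρ x c hc)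
  exact ⟨δ, hδ, fun y hy => (h hy).le⟩

lemma infConv_pos (hρ : LowerSemicontinuous ρ) (hx : 0 < ρ x) : 0 < infConv ρ n x := by
  obtain ⟨c, hc, hcx⟩ := exists_between hx
  obtain ⟨δ, hδ, h⟩ := exists_pos_forall_edist_lt_imp_le hρ hcx
  exact lt_of_lt_of_le (by positivity) (min_le_infConv n h)

lemma iSup_infConv (hρ : LowerSemicontinuous ρ) (x : X) : ⨆ n, infConv ρ n x = ρ x := by
  refine le_antisymm (iSup_le fun n => infConv_le_self ρ n x) (le_of_forall_lt fun c hc => ?_)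
  obtain ⟨c', hcc', hc'⟩ := ENNReal.lt_iff_exists_nnreal_btwn.1 hc
  obtain ⟨δ, hδ, h⟩ := exists_pos_forall_edist_lt_imp_le hρ hc'
  obtain ⟨k, hk⟩ := ENNReal.exists_nat_mul_gt hδ.ne' (ENNReal.coe_ne_top (r := c'))
  obtain ⟨l, hl⟩ := exists_nat_ge c'
  have hle (j : ℕ) (hj : j ≤ max k l) : (j : ℝ≥0∞) ≤ (max k l : ℕ) + 1 := by
    exact_mod_cast hj.trans (Nat.le_succ _)
  refine hcc'.trans_le (le_iSup_of_le (max k l) (le_trans ?_ (min_le_infConv _ h)))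
  refine le_min (le_min le_rfl (le_trans ?_ (hle l (le_max_right _ _)))) (hk.le.trans ?_)
  · exact_mod_cast hl
  · gcongr
    exact hle k (le_max_left _ _)

end InfConv

/-! ### Quasi-curves -/

section QuasiCurve

/-- A possibly discontinuous path in `C` that is `1`-Lipschitz up to the additive error `e`. -/
structure IsQuasiCurve (e : ℝ) (C : Set X) (γ : ℝ → X) : Prop where
  mem : ∀ t, γ t ∈ C
  dist_le : ∀ s t, s ≤ t → dist (γ s) (γ t) ≤ t - s + e

/-- The least value of `F (γ 0) + ∫₀ᴸ R (γ t) dt` over the quasi-curves `γ` in `C` which start in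
`K` and reach `x` at time `L`. As a function of `x` it changes by at most `R x * edist x x'` along
steps of length at most `e`. -/
def quasiDist (R : X → ℝ≥0∞) (e : ℝ) (C K : Set X) (F : X → ℝ≥0∞) (x : X) : ℝ≥0∞ :=
  ⨅ (L : ℝ) (γ : ℝ → X) (_ : 0 ≤ L) (_ : IsQuasiCurve e C γ) (_ : γ 0 ∈ K) (_ : γ L = x),
    F (γ 0) + ∫⁻ t in Icc 0 L, R (γ t)

variable {R : X → ℝ≥0∞} {e L : ℝ} {C K : Set X} {F : X → ℝ≥0∞} {x x' : X} {γ : ℝ → X}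

omit [MeasurableSpace X] [BorelSpace X]

lemma IsQuasiCurve.dist_le_abs (h : IsQuasiCurve e C γ) (s t : ℝ) :
    dist (γ s) (γ t) ≤ |s - t| + e := by
  rcases le_total s t with hst | hts
  · rw [abs_sub_comm, abs_of_nonneg (sub_nonneg.2 hst)]
    exact h.dist_le s t hst
  · rw [dist_comm, abs_of_nonneg (sub_nonneg.2 hts)]
    exact h.dist_le t s hts

lemma isQuasiCurve_const (he : 0 ≤ e) (hx : x ∈ C) : IsQuasiCurve e C fun _ => x :=
  ⟨fun _ => hx, fun s t hst => by rw [dist_self]; linarith⟩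

lemma quasiDist_le (hL : 0 ≤ L) (h : IsQuasiCurve e C γ) (h0 : γ 0 ∈ K) (h1 : γ L = x) :
    quasiDist R e C K F x ≤ F (γ 0) + ∫⁻ t in Icc 0 L, R (γ t) :=
  iInf₂_le_of_le L γ (iInf₂_le_of_le hL h (iInf₂_le_of_le h0 h1 le_rfl))

lemma quasiDist_le_self (he : 0 ≤ e) (hC : x ∈ C) (hK : x ∈ K) : quasiDist R e C K F x ≤ F x :=
  (quasiDist_le le_rfl (isQuasiCurve_const he hC) hK rfl).trans_eq (by simp)

/-- The path that follows `γ` up to time `L`, then rests for the time `dist x x'` at `x`, and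
finally jumps to `x'`. -/
def stepPath (γ : ℝ → X) (L : ℝ) (x x' : X) (t : ℝ) : X :=
  if t ≤ L then γ t else if t < L + dist x x' then x else x'

lemma stepPath_of_le {t : ℝ} (ht : t ≤ L) : stepPath γ L x x' t = γ t := if_pos ht

lemma stepPath_of_mem_Ioo {t : ℝ} (ht : t ∈ Ioo L (L + dist x x')) : stepPath γ L x x' t = x := by
  rw [stepPath, if_neg ht.1.not_ge, if_pos ht.2]

lemma stepPath_of_ge (hne : x ≠ x') {t : ℝ} (ht : L + dist x x' ≤ t) :
    stepPath γ L x x' t = x' := by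
  rw [stepPath, if_neg (by linarith [dist_pos.2 hne]), if_neg ht.not_gt]

lemma IsQuasiCurve.stepPath (h : IsQuasiCurve e C γ) (hx : γ L = x) (hx' : x' ∈ C) (hne : x ≠ x')
    (hd : dist x x' ≤ e) : IsQuasiCurve e C (stepPath γ L x x') := by
  have hd₀ := dist_pos.2 hne
  have cases (t : ℝ) : t ≤ L ∨ t ∈ Ioo L (L + dist x x') ∨ L + dist x x' ≤ t := by
    grind
  constructor
  · intro t
    rcases cases t with ht | ht | ht
    · rw [stepPath_of_le ht]
      exact h.mem t
    · rw [stepPath_of_mem_Ioo ht]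
      exact hx ▸ h.mem L
    · rwa [stepPath_of_ge hne ht]
  · intro s t hst
    have hsL : s ≤ L → dist (γ s) x ≤ L - s + e := hx ▸ h.dist_le s L
    rcases cases s with hs | hs | hs <;> rcases cases t with ht | ht | ht <;>
      simp only [stepPath_of_le, stepPath_of_mem_Ioo, stepPath_of_ge hne, hs, ht, dist_self]
    · exact h.dist_le s t hst
    · linarith [hsL hs, ht.1]
    · linarith [hsL hs, dist_triangle (γ s) x x']
    · linarith [hs.1]
    · linarith [hs.1]
    · linarith [hs.2]
    · linarith
    · linarith [ht.2]
    · linarith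

lemma lintegral_stepPath_le :
    ∫⁻ t in Icc 0 (L + dist x x'), R (stepPath γ L x x' t) ≤
      (∫⁻ t in Icc 0 L, R (γ t)) + R x * edist x x' := by
  have hsub : Ico 0 (L + dist x x') ⊆ Icc 0 L ∪ Ioo L (L + dist x x') := fun t ht =>
    (le_or_gt t L).imp (⟨ht.1, ·⟩) (⟨·, ht.2⟩)
  rw [← setLIntegral_congr Ico_ae_eq_Icc]
  refine ((lintegral_mono_set hsub).trans (lintegral_union_le _ _ _)).trans_eq ?_
  congr 1
  · exact setLIntegral_congr_fun measurableSet_Icc fun t ht => by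
      simp only [stepPath_of_le ht.2]
  · rw [setLIntegral_congr_fun (g := fun _ => R x) measurableSet_Ioo
      fun t ht => by simp only [stepPath_of_mem_Ioo ht], setLIntegral_const, Real.volume_Ioo,
      add_sub_cancel_left, edist_dist]

lemma quasiDist_le_add_edist (hx' : x' ∈ C) (hd : dist x x' ≤ e) :
    quasiDist R e C K F x' ≤ quasiDist R e C K F x + R x * edist x x' := by
  rcases eq_or_ne x x' with rfl | hne
  · exact le_self_add
  conv_rhs => rw [quasiDist]
  simp only [ENNReal.iInf_add]
  refine le_iInf₂ fun L γ => le_iInf₂ fun hL h => le_iInf₂ fun h0 h1 => ?_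
  have hstart : stepPath γ L x x' 0 = γ 0 := stepPath_of_le hL
  refine (quasiDist_le (by positivity) (h.stepPath h1 hx' hne hd) (hstart ▸ h0)
    (stepPath_of_ge hne le_rfl)).trans ?_
  rw [hstart, add_assoc]
  gcongr
  exact lintegral_stepPath_le

/-- The real-valued truncation of `quasiDist` at height `M`. -/
def truncQuasiDist (R : X → ℝ≥0∞) (e : ℝ) (C K : Set X) (F : X → ℝ≥0∞) (M : ℝ≥0) (x : X) : ℝ :=
  (min (quasiDist R e C K F x) M).toReal

variable {M : ℝ≥0}

lemma ofReal_truncQuasiDist :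
    ENNReal.ofReal (truncQuasiDist R e C K F M x) = min (quasiDist R e C K F x) M :=
  ENNReal.ofReal_toReal (ne_top_of_le_ne_top ENNReal.coe_ne_top (min_le_right _ _))

lemma edist_le_of_ofReal_le_add {a b : ℝ} {c : ℝ≥0∞} (ha : 0 ≤ a) (hb : 0 ≤ b)
    (hab : ENNReal.ofReal a ≤ ENNReal.ofReal b + c)
    (hba : ENNReal.ofReal b ≤ ENNReal.ofReal a + c) : edist a b ≤ c := by
  rw [edist_dist, Real.dist_eq]
  rcases abs_cases (a - b) with ⟨h, -⟩ | ⟨h, -⟩ <;> rw [h]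
  · rwa [ENNReal.ofReal_sub a hb, tsub_le_iff_left]
  · rwa [neg_sub, ENNReal.ofReal_sub b ha, tsub_le_iff_left]

lemma truncQuasiDist_mem_Icc : truncQuasiDist R e C K F M x ∈ Icc 0 (M : ℝ) :=
  ⟨ENNReal.toReal_nonneg, ENNReal.toReal_le_coe_of_le_coe (min_le_right _ _)⟩

lemma edist_truncQuasiDist_le (hx : x ∈ C) (hx' : x' ∈ C) (hd : dist x x' ≤ e) :
    edist (truncQuasiDist R e C K F M x) (truncQuasiDist R e C K F M x') ≤
      max (R x) (R x') * edist x x' := by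
  have hle {y y' : X} (hy' : y' ∈ C) (hyy' : dist y y' ≤ e) :
      min (quasiDist R e C K F y') M ≤ min (quasiDist R e C K F y) M + R y * edist y y' := by
    rw [← min_add_add_right]
    exact min_le_min (quasiDist_le_add_edist hy' hyy') le_self_add
  refine edist_le_of_ofReal_le_add truncQuasiDist_mem_Icc.1 truncQuasiDist_mem_Icc.1 ?_ ?_ <;>
    simp only [ofReal_truncQuasiDist]
  · rw [edist_comm]
    refine (hle hx (dist_comm x x' ▸ hd)).trans ?_
    gcongr
    exact le_max_right _ _
  · refine (hle hx' hd).trans ?_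
    gcongr
    exact le_max_left _ _

end QuasiCurve

section StepUpperGradient

variable {f : X → ℝ} {R : X → ℝ≥0∞} {C : Set X}

omit [MeasurableSpace X] [BorelSpace X]

lemma Curve.edist_le (γ : Curve X) {s t : ℝ} (hs : s ∈ Icc 0 γ.len) (ht : t ∈ Icc 0 γ.len) :
    edist (γ.toFun s) (γ.toFun t) ≤ ENNReal.ofReal |s - t| :=
  (γ.lip hs ht).trans_eq (by rw [ENNReal.coe_one, one_mul, edist_dist, Real.dist_eq])

lemma isUpperGradientOn_of_edist_le {e : ℝ} {Λ : ℝ≥0} (he : 0 < e)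
    (hR : ∀ x y, R x ≤ R y + Λ * edist x y)
    (hstep : ∀ x ∈ C, ∀ x' ∈ C, dist x x' ≤ e →
      edist (f x) (f x') ≤ max (R x) (R x') * edist x x') :
    IsUpperGradientOn f R C := by
  intro γ hγ
  refine Curve.ugIneq_of_incrementBound (.of_forall_pos_add_mul (b := fun _ => 1)
    aemeasurable_const (by simp) fun κ hκ => ?_)
  refine .of_small_steps (d := min e (κ / (Λ + 1))) (by positivity) fun s t hs hst ht hd => ?_
  have hmem (r : ℝ) (hr : r ∈ Icc s t) : r ∈ Icc 0 γ.len := ⟨hs.trans hr.1, hr.2.trans ht⟩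
  have hs' := left_mem_Icc.2 hst
  have ht' := right_mem_Icc.2 hst
  have hdist (r r' : ℝ) (hr : r ∈ Icc s t) (hr' : r' ∈ Icc s t) :
      edist (γ.toFun r) (γ.toFun r') ≤ ENNReal.ofReal (t - s) :=
    (γ.edist_le (hmem r hr) (hmem r' hr')).trans
      (ENNReal.ofReal_le_ofReal (abs_sub_le_of_le_of_le hr.1 hr.2 hr'.1 hr'.2))
  have hΛ : Λ * ENNReal.ofReal (t - s) ≤ κ := by
    have hmul : (t - s) * (Λ + 1) ≤ κ :=
      (le_div_iff₀ (by positivity)).1 (hd.trans (min_le_right _ _))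
    rw [← ENNReal.ofReal_coe_nnreal, ← ENNReal.ofReal_mul (NNReal.coe_nonneg Λ),
      ← ENNReal.ofReal_coe_nnreal]
    exact ENNReal.ofReal_le_ofReal (by linarith)
  have hR_le (r r' : ℝ) (hr : r ∈ Icc s t) (hr' : r' ∈ Icc s t) :
      R (γ.toFun r) ≤ R (γ.toFun r') + κ * 1 := by
    refine (hR _ (γ.toFun r')).trans ?_
    rw [mul_one]
    gcongr
    exact (mul_le_mul_right (hdist r r' hr hr') _).trans hΛ
  have hclose : dist (γ.toFun s) (γ.toFun t) ≤ e := by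
    rw [← ENNReal.ofReal_le_ofReal_iff he.le, ← edist_dist]
    exact (hdist s t hs' ht').trans (ENNReal.ofReal_le_ofReal (hd.trans (min_le_left _ _)))
  calc ENNReal.ofReal |f (γ.toFun s) - f (γ.toFun t)|
      = edist (f (γ.toFun s)) (f (γ.toFun t)) := by rw [edist_dist, Real.dist_eq]
    _ ≤ max (R (γ.toFun s)) (R (γ.toFun t)) * ENNReal.ofReal (t - s) :=
        (hstep _ (hγ s (hmem s hs')) _ (hγ t (hmem t ht')) hclose).trans
          (mul_le_mul_right (hdist s t hs' ht') _)
    _ = ∫⁻ _ in Ioc s t, max (R (γ.toFun s)) (R (γ.toFun t)) := by simp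
    _ ≤ ∫⁻ r in Ioc s t, (R (γ.toFun r) + κ * 1) :=
        setLIntegral_mono' measurableSet_Ioc fun r hr =>
          max_le (hR_le s r hs' (Ioc_subset_Icc_self hr)) (hR_le t r ht' (Ioc_subset_Icc_self hr))

variable {K : Set X} {F ρ : X → ℝ≥0∞} {M : ℝ≥0}

lemma isUpperGradientOn_truncQuasiDist_infConv (n : ℕ) :
    IsUpperGradientOn (truncQuasiDist (infConv ρ n) (1 / (n + 1)) C K F M) ρ C := fun γ hγ =>
  (isUpperGradientOn_of_edist_le (Λ := n + 1) (e := 1 / (n + 1)) (by positivity)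
    (by exact_mod_cast infConv_le_add_edist ρ n)
    (fun _ hx _ hx' hd => edist_truncQuasiDist_le hx hx' hd) γ hγ).trans
    (γ.integral_mono (infConv_le_self ρ n))

lemma lipschitzOnWith_truncQuasiDist_infConv (n : ℕ) :
    LipschitzOnWith ((n + 1) * (1 + M))
      (truncQuasiDist (infConv ρ n) (1 / (n + 1)) C K F M) C := by
  intro x hx y hy
  push_cast
  rcases le_or_gt (dist x y) (1 / (n + 1)) with hnear | hfar
  · calc edist (truncQuasiDist (infConv ρ n) (1 / (n + 1)) C K F M x) _
        ≤ max (infConv ρ n x) (infConv ρ n y) * edist x y := edist_truncQuasiDist_le hx hy hnear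
      _ ≤ ((n + 1) * (1 + M)) * edist x y := by
        gcongr
        refine (max_le (infConv_le_succ ρ n x) (infConv_le_succ ρ n y)).trans ?_
        exact le_mul_of_one_le_right' le_self_add
  · have hle : (1 : ℝ) ≤ (n + 1) * dist x y := by
      rw [div_lt_iff₀ (by positivity)] at hfar
      linarith
    calc edist (truncQuasiDist (infConv ρ n) (1 / (n + 1)) C K F M x) _
        ≤ ENNReal.ofReal (M - 0) := by
          rw [edist_dist]
          exact ENNReal.ofReal_le_ofReal
            (Real.dist_le_of_mem_Icc truncQuasiDist_mem_Icc truncQuasiDist_mem_Icc)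
      _ = M * ENNReal.ofReal 1 := by simp
      _ ≤ (1 + M) * ENNReal.ofReal ((n + 1) * dist x y) := by
          gcongr
          exact le_add_self
      _ = (n + 1) * (1 + M) * edist x y := by
          rw [ENNReal.ofReal_mul (by positivity), edist_dist]
          norm_cast
          push_cast
          ring

end StepUpperGradient

/-! ### Limits of quasi-curves -/

section QuasiCurveLimit

variable {ι : Type*} {l : Filter ι} {e L : ι → ℝ} {γ : ι → ℝ → X} {Γ : ℝ → X} {K K₀ : Set X}
  {R F ρ : X → ℝ≥0∞} {Λ : ℝ≥0} {ℓ : ℝ} {c : ℝ≥0∞} {x : X}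

omit [MeasurableSpace X] [BorelSpace X]

lemma exists_ultrafilter_le_eventually_of_frequently {p : ι → Prop} (h : ∃ᶠ i in l, p i) :
    ∃ 𝒰 : Ultrafilter ι, (𝒰 : Filter ι) ≤ l ∧ ∀ᶠ i in 𝒰, p i := by
  have : NeBot (l ⊓ 𝓟 {i | p i}) := Filter.frequently_mem_iff_neBot.1 h
  exact ⟨_, (Ultrafilter.of_le _).trans inf_le_left,
    le_principal_iff.1 ((Ultrafilter.of_le (l ⊓ 𝓟 {i | p i})).trans inf_le_right)⟩

lemma exists_tendsto_of_isQuasiCurve {𝒰 : Ultrafilter ι} (hK : IsCompact K)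
    (he : Tendsto e 𝒰 (𝓝 0)) (h : ∀ᶠ i in 𝒰, IsQuasiCurve (e i) K (γ i)) :
    ∃ Γ : ℝ → X, LipschitzWith 1 Γ ∧ (∀ t, Γ t ∈ K) ∧ ∀ t, Tendsto (γ · t) 𝒰 (𝓝 (Γ t)) := by
  have hlim (t : ℝ) : ∃ y ∈ K, Tendsto (γ · t) 𝒰 (𝓝 y) :=
    hK.ultrafilter_le_nhds (𝒰.map (γ · t)) (le_principal_iff.2 (h.mono fun i hi => hi.mem t))
  choose Γ hΓK hΓ using hlim
  refine ⟨Γ, LipschitzWith.of_dist_le_mul fun s t => ?_, hΓK, hΓ⟩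
  rw [NNReal.coe_one, one_mul, Real.dist_eq]
  refine le_of_tendsto_of_tendsto ((hΓ s).dist (hΓ t)) ?_ (h.mono fun i hi => hi.dist_le_abs s t)
  simpa using he.const_add |s - t|

lemma tendstoUniformlyOn_of_isQuasiCurve {S : Set ℝ} (hS : IsCompact S) (he : Tendsto e l (𝓝 0))
    (h : ∀ᶠ i in l, IsQuasiCurve (e i) K (γ i)) (hΓ : LipschitzWith 1 Γ)
    (hlim : ∀ t, Tendsto (γ · t) l (𝓝 (Γ t))) : TendstoUniformlyOn γ Γ l S := by
  refine Metric.tendstoUniformlyOn_iff.2 fun ε hε => ?_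
  obtain ⟨T, -, hT, hcover⟩ := hS.finite_cover_balls (e := ε / 4) (by positivity)
  have hnear : ∀ᶠ i in l, ∀ τ ∈ T, dist (γ i τ) (Γ τ) < ε / 4 :=
    hT.eventually_all.2 fun τ _ => Metric.tendsto_nhds.1 (hlim τ) _ (by positivity)
  filter_upwards [h, hnear, he.eventually (gt_mem_nhds (show 0 < ε / 4 by positivity))]
    with i hi hi_near hi_e t ht
  obtain ⟨τ, hτ, htτ⟩ := mem_iUnion₂.1 (hcover ht)
  have hγ := hi.dist_le_abs τ t
  have hΓτ := hΓ.dist_le_mul t τ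
  rw [mem_ball, Real.dist_eq] at htτ
  rw [NNReal.coe_one, one_mul, Real.dist_eq] at hΓτ
  rw [abs_sub_comm] at hγ
  linarith [dist_triangle4 (Γ t) (Γ τ) (γ i τ) (γ i t), dist_comm (Γ τ) (γ i τ), hi_near τ hτ]

lemma setLIntegral_Icc_le_of_tendstoUniformlyOn [NeBot l] {a : ℝ}
    (hR : ∀ x y, R x ≤ R y + Λ * edist x y) (hunif : TendstoUniformlyOn γ Γ l (Icc 0 a))
    (hcost : ∀ᶠ i in l, ∫⁻ t in Icc 0 a, R (γ i t) ≤ c) : ∫⁻ t in Icc 0 a, R (Γ t) ≤ c := by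
  refine ENNReal.le_of_forall_pos_le_add fun κ hκ _ => ?_
  set δ : ℝ≥0 := κ / (Λ * a.toNNReal + 1) with hδ
  have hδκ : (Λ * δ * a.toNNReal : ℝ≥0∞) ≤ κ := by
    have : Λ * δ * a.toNNReal ≤ κ := by
      rw [hδ, mul_div_assoc', div_mul_eq_mul_div, div_le_iff₀ (by positivity)]
      exact le_self_add.trans_eq (by ring : Λ * κ * a.toNNReal + κ = _)
    exact_mod_cast this
  have hδ_pos : 0 < δ := by positivity
  obtain ⟨i, hi, hi_cost⟩ := ((EMetric.tendstoUniformlyOn_iff.1 hunif δ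
    (by exact_mod_cast hδ_pos)).and hcost).exists
  calc ∫⁻ t in Icc 0 a, R (Γ t) ≤ ∫⁻ t in Icc 0 a, (R (γ i t) + Λ * δ) :=
        setLIntegral_mono' measurableSet_Icc fun t ht => (hR (Γ t) (γ i t)).trans (by
          gcongr
          exact (hi t ht).le)
    _ = (∫⁻ t in Icc 0 a, R (γ i t)) + Λ * δ * a.toNNReal := by
        rw [lintegral_add_right _ measurable_const, setLIntegral_const, Real.volume_Icc, sub_zero,
          ENNReal.ofReal]
    _ ≤ c + κ := add_le_add hi_cost hδκ

lemma setLIntegral_Icc_le_of_isQuasiCurve [NeBot l] (hR : ∀ x y, R x ≤ R y + Λ * edist x y)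
    (he : Tendsto e l (𝓝 0)) (h : ∀ᶠ i in l, IsQuasiCurve (e i) K (γ i)) (hΓ : LipschitzWith 1 Γ)
    (hlim : ∀ t, Tendsto (γ · t) l (𝓝 (Γ t))) (hL : Tendsto L l (𝓝 ℓ))
    (hcost : ∀ᶠ i in l, ∫⁻ t in Icc 0 (L i), R (γ i t) ≤ c) : ∫⁻ t in Icc 0 ℓ, R (Γ t) ≤ c := by
  have hR_cont : Continuous R := continuous_of_le_add_edist Λ ENNReal.coe_ne_top hR
  have hlt (a : ℝ) (ha : a < ℓ) : ∫⁻ t in Icc 0 a, R (Γ t) ≤ c := by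
    refine setLIntegral_Icc_le_of_tendstoUniformlyOn hR
      (tendstoUniformlyOn_of_isQuasiCurve isCompact_Icc he h hΓ hlim) ?_
    filter_upwards [hcost, hL.eventually (lt_mem_nhds ha)] with i hi hai
    exact (lintegral_mono_set (Icc_subset_Icc_right hai.le)).trans hi
  have hb : Tendsto (fun n : ℕ => ℓ - 1 / ((n : ℝ) + 1)) atTop (𝓝 ℓ) := by
    simpa using tendsto_one_div_add_atTop_nhds_zero_nat.const_sub ℓ
  rw [← setLIntegral_congr Ico_ae_eq_Icc]
  refine le_of_tendsto ((aecover_Ico_of_Icc tendsto_const_nhds hb).lintegral_tendsto_of_nat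
    (hR_cont.comp hΓ.continuous).measurable.aemeasurable) (Eventually.of_forall fun n => ?_)
  rw [Measure.restrict_restrict measurableSet_Icc]
  exact (lintegral_mono_set inter_subset_left).trans (hlt _ (sub_lt_self _ (by positivity)))

lemma setLIntegral_Icc_le_of_isQuasiCurve_infConv {l : Filter ℕ} [NeBot l] (hl : l ≤ atTop)
    (hρ : LowerSemicontinuous ρ) {e L : ℕ → ℝ} {γ : ℕ → ℝ → X} (he : Tendsto e l (𝓝 0))
    (h : ∀ᶠ n in l, IsQuasiCurve (e n) K (γ n)) (hΓ : LipschitzWith 1 Γ)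
    (hlim : ∀ t, Tendsto (γ · t) l (𝓝 (Γ t))) (hL : Tendsto L l (𝓝 ℓ))
    (hcost : ∀ᶠ n in l, ∫⁻ t in Icc 0 (L n), infConv ρ n (γ n t) ≤ c) :
    ∫⁻ t in Icc 0 ℓ, ρ (Γ t) ≤ c := by
  simp only [← iSup_infConv hρ]
  rw [lintegral_iSup (f := fun m t => infConv ρ m (Γ t))
    (fun m => ((continuous_infConv ρ m).comp hΓ.continuous).measurable)
    fun m n hmn t => monotone_infConv ρ hmn (Γ t)]
  refine iSup_le fun m => setLIntegral_Icc_le_of_isQuasiCurve (Λ := m + 1)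
    (by exact_mod_cast infConv_le_add_edist ρ m) he h hΓ hlim hL ?_
  filter_upwards [hcost, hl (eventually_ge_atTop m)] with n hn hmn
  exact (lintegral_mono fun t => monotone_infConv ρ hmn (γ n t)).trans hn

lemma exists_of_quasiDist_lt {e : ℝ} (h : quasiDist R e K K₀ F x < c) :
    ∃ (L : ℝ) (γ : ℝ → X), 0 ≤ L ∧ IsQuasiCurve e K γ ∧ γ 0 ∈ K₀ ∧ γ L = x ∧
      F (γ 0) + ∫⁻ t in Icc 0 L, R (γ t) < c := by
  simpa only [quasiDist, iInf_lt_iff, exists_prop] using h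

lemma exists_forall_le_of_setLIntegral_infConv_lt (hK : IsCompact K) (hρ : LowerSemicontinuous ρ)
    (hρ_pos : ∀ x, 0 < ρ x) (hc : c ≠ ∞) :
    ∃ B : ℝ, ∀ (n : ℕ) (L : ℝ) (γ : ℝ → X), (∀ t, γ t ∈ K) →
      ∫⁻ t in Icc 0 L, infConv ρ n (γ t) < c → L ≤ B := by
  rcases K.eq_empty_or_nonempty with rfl | hne
  · exact ⟨0, fun _ _ γ hγ => (hγ 0).elim⟩
  obtain ⟨z, -, hz⟩ := hK.exists_isMinOn hne (continuous_infConv ρ 0).continuousOn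
  have hz_pos : 0 < infConv ρ 0 z := infConv_pos 0 hρ (hρ_pos z)
  refine ⟨(c / infConv ρ 0 z).toReal, fun n L γ hγ hlt => ?_⟩
  refine (ENNReal.ofReal_le_iff_le_toReal (ENNReal.div_ne_top hc hz_pos.ne')).1 ?_
  have hz_top : infConv ρ 0 z ≠ ∞ := ne_top_of_le_ne_top (by simp) (infConv_le_succ ρ 0 z)
  rw [ENNReal.le_div_iff_mul_le (.inl hz_pos.ne') (.inl hz_top)]
  calc ENNReal.ofReal L * infConv ρ 0 z = ∫⁻ _ in Icc 0 L, infConv ρ 0 z := by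
        rw [setLIntegral_const, Real.volume_Icc, sub_zero, mul_comm]
    _ ≤ ∫⁻ t in Icc 0 L, infConv ρ n (γ t) :=
        lintegral_mono fun t => (hz (hγ t)).trans (monotone_infConv ρ (Nat.zero_le n) (γ t))
    _ ≤ c := hlt.le

lemma tendsto_apply_of_isQuasiCurve (he : Tendsto e l (𝓝 0))
    (h : ∀ᶠ i in l, IsQuasiCurve (e i) K (γ i)) (hL : Tendsto L l (𝓝 ℓ)) {y : X}
    (hlim : Tendsto (γ · ℓ) l (𝓝 y)) : Tendsto (fun i => γ i (L i)) l (𝓝 y) := by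
  refine tendsto_iff_dist_tendsto_zero.2 (squeeze_zero' (.of_forall fun _ => dist_nonneg)
    (h.mono fun i hi => (dist_triangle _ (γ i ℓ) _).trans
      (add_le_add_left (hi.dist_le_abs (L i) ℓ) _)) ?_)
  simpa [Real.dist_eq] using ((tendsto_iff_dist_tendsto_zero.1 hL).add he).add
    (tendsto_iff_dist_tendsto_zero.1 hlim)

lemma exists_curve_of_frequently_quasiDist_infConv_lt (hρ : LowerSemicontinuous ρ)
    (hρ_pos : ∀ x, 0 < ρ x) (hK : IsCompact K) (hK₀ : IsClosed K₀) (hF : Continuous F) (hc : c ≠ ∞)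
    (h : ∃ᶠ n : ℕ in atTop, quasiDist (infConv ρ n) (1 / (n + 1)) K K₀ F x < c) :
    ∃ Γ : Curve X, Γ.In K ∧ Γ.toFun 0 ∈ K₀ ∧ Γ.toFun Γ.len = x ∧
      F (Γ.toFun 0) + Γ.integral ρ ≤ c := by
  obtain ⟨𝒰, h𝒰, hlt⟩ := exists_ultrafilter_le_eventually_of_frequently
    (h.mono fun n hn => exists_of_quasiDist_lt hn)
  have : Nonempty X := ⟨x⟩
  obtain ⟨L, hlt⟩ := hlt.choice
  obtain ⟨γ, hev⟩ := hlt.choice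
  have hq : ∀ᶠ n : ℕ in 𝒰, IsQuasiCurve (1 / (n + 1)) K (γ n) := hev.mono fun n hn => hn.2.1
  have he : Tendsto (fun n : ℕ => 1 / ((n : ℝ) + 1)) 𝒰 (𝓝 0) :=
    tendsto_one_div_add_atTop_nhds_zero_nat.mono_left h𝒰
  obtain ⟨B, hB⟩ := exists_forall_le_of_setLIntegral_infConv_lt hK hρ hρ_pos hc
  obtain ⟨ℓ, hℓ, hL⟩ := (isCompact_Icc (a := 0) (b := B)).ultrafilter_le_nhds (𝒰.map L)
    (le_principal_iff.2 (hev.mono fun n hn =>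
      ⟨hn.1, hB n (L n) (γ n) hn.2.1.mem (le_add_self.trans_lt hn.2.2.2.2)⟩))
  obtain ⟨Γ, hΓ, hΓK, hlim⟩ := exists_tendsto_of_isQuasiCurve hK he hq
  have hFlim : Tendsto (fun n => F (γ n 0)) 𝒰 (𝓝 (F (Γ 0))) := (hF.tendsto _).comp (hlim 0)
  have hF_le : F (Γ 0) ≤ c :=
    le_of_tendsto hFlim (hev.mono fun n hn => le_self_add.trans hn.2.2.2.2.le)
  refine ⟨⟨ℓ, hℓ.1, Γ, hΓ.lipschitzOnWith⟩, fun t _ => hΓK t,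
    hK₀.mem_of_tendsto (hlim 0) (hev.mono fun n hn => hn.2.2.1), ?_, ?_⟩
  · exact tendsto_nhds_unique (tendsto_apply_of_isQuasiCurve he hq hL (hlim ℓ))
      (tendsto_const_nhds.congr' (hev.mono fun n hn => hn.2.2.2.1.symm))
  · have hcost : ∫⁻ t in Icc 0 ℓ, ρ (Γ t) ≤ c - F (Γ 0) := by
      refine le_of_forall_gt_imp_ge_of_dense fun c' hc' =>
        setLIntegral_Icc_le_of_isQuasiCurve_infConv h𝒰 hρ he hq hΓ hlim hL ?_
      have hsub := ENNReal.Tendsto.sub tendsto_const_nhds hFlim (.inl hc)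
      filter_upwards [hev, hsub.eventually (gt_mem_nhds hc')] with n hn hn'
      exact (ENNReal.le_sub_of_add_le_left
        (ne_top_of_lt (le_self_add.trans_lt hn.2.2.2.2)) hn.2.2.2.2.le).trans hn'.le
    exact (add_le_add_right hcost _).trans_eq (add_tsub_cancel_of_le hF_le)

end QuasiCurveLimit

/-! ### Consequences of the Poincaré inequality -/

section Poincare

variable {μ : Measure X} {Cd CP lam : ℝ}

omit [MetricSpace X] [BorelSpace X] in
lemma abs_setAverage_sub_le {f : X → ℝ} {B B' : Set X} {D c : ℝ} (hB : B' ⊆ B)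
    (hf : IntegrableOn f B μ) (hB_pos : 0 < μ B') (hB_fin : μ B < ∞) (hD : 0 ≤ D)
    (hμ : μ B ≤ ENNReal.ofReal D * μ B') :
    |(⨍ y in B', f y ∂μ) - c| ≤ D * ⨍ y in B, |f y - c| ∂μ := by
  have hB'_fin : μ B' < ∞ := (measure_mono hB).trans_lt hB_fin
  have hreal' : 0 < μ.real B' := ENNReal.toReal_pos hB_pos.ne' hB'_fin.ne
  have hreal : 0 < μ.real B :=
    ENNReal.toReal_pos (hB_pos.trans_le (measure_mono hB)).ne' hB_fin.ne
  have hμ_real : μ.real B ≤ D * μ.real B' := by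
    have := ENNReal.toReal_mono (ENNReal.mul_ne_top ENNReal.ofReal_ne_top hB'_fin.ne) hμ
    rwa [ENNReal.toReal_mul, ENNReal.toReal_ofReal hD] at this
  have hintegral : IntegrableOn (fun y => f y - c) B μ := hf.sub (integrableOn_const hB_fin.ne)
  have havg : (⨍ y in B', f y ∂μ) - c = (μ.real B')⁻¹ * ∫ y in B', (f y - c) ∂μ := by
    rw [setAverage_eq, integral_sub (hf.mono_set hB) (integrableOn_const hB'_fin.ne)]
    simp only [smul_eq_mul, setIntegral_const]
    field_simp
  have hinv : (μ.real B')⁻¹ ≤ D * (μ.real B)⁻¹ := by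
    rw [← div_eq_mul_inv, le_div_iff₀ hreal, inv_mul_le_iff₀ hreal']
    linarith
  rw [havg, abs_mul, abs_of_pos (inv_pos.2 hreal'), setAverage_eq, smul_eq_mul, ← mul_assoc]
  refine mul_le_mul hinv (abs_integral_le_integral_abs.trans ?_) (abs_nonneg _) (by positivity)
  exact setIntegral_mono_set hintegral.abs (ae_of_all _ fun y => abs_nonneg _) hB.eventuallyLE

lemma Doubling.integrableOn_ball [ProperSpace X] (hd : Doubling μ Cd) {f : X → ℝ}
    (hf : Continuous f) (z : X) (r : ℝ) : IntegrableOn f (ball z r) μ :=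
  have := hd.isLocallyFiniteMeasure
  (hf.continuousOn.integrableOn_compact (isCompact_closedBall z r)).mono_set ball_subset_closedBall

lemma Doubling.memL1Loc_univ [ProperSpace X] (hd : Doubling μ Cd) {f : X → ℝ}
    (hf : Continuous f) : MemL1Loc μ univ f := by
  refine ⟨hf.measurable.aemeasurable, fun z _ => ⟨1, one_pos, ?_⟩⟩
  simpa only [univ_inter, ← Real.norm_eq_abs, ofReal_norm] using! (hd.integrableOn_ball hf z 1).2

/-- The Hardy–Littlewood maximal function of `h` at `x` is at most `m`. -/
def MaximalLE (μ : Measure X) (h : X → ℝ≥0∞) (x : X) (m : ℝ≥0) : Prop :=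
  ∀ r > 0, ∫⁻ z in ball x r, h z ∂μ ≤ m * μ (ball x r)

variable {h ρ : X → ℝ≥0∞} {m : ℝ≥0} {f : X → ℝ} {x y : X}

omit [BorelSpace X] in
lemma Poincare.setAverage_abs_sub_setAverage_le (hp : Poincare μ CP lam) (hf : MemL1Loc μ univ f)
    (hh : IsUpperGradient f h) (hx : MaximalLE μ h x m) {r : ℝ} (hr : 0 < r) :
    ⨍ y in ball x r, |f y - ⨍ z in ball x r, f z ∂μ| ∂μ ≤ CP * r * m := by
  obtain ⟨hCP, hlam, hpoincare⟩ := hp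
  have hquot : (∫⁻ y in ball x (lam * r), h y ∂μ) / μ (ball x (lam * r)) ≤ m :=
    ENNReal.div_le_of_le_mul (hx _ (by positivity))
  rw [← ENNReal.ofReal_le_ofReal_iff (by positivity), ENNReal.ofReal_mul (by positivity),
    ENNReal.ofReal_coe_nnreal]
  exact (hpoincare x r hr f h hf hh).trans (by gcongr)

lemma Doubling.tendsto_setAverage_ball [ProperSpace X] (hd : Doubling μ Cd) (hf : Continuous f)
    (x : X) : Tendsto (fun r => ⨍ y in ball x r, f y ∂μ) (𝓝[>] 0) (𝓝 (f x)) := by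
  refine Metric.nhds_basis_closedBall.tendsto_right_iff.2 fun ε hε => ?_
  obtain ⟨δ, hδ, hδε⟩ := Metric.mem_nhds_iff.1 (hf.continuousAt (closedBall_mem_nhds (f x) hε))
  filter_upwards [Ioo_mem_nhdsGT hδ] with r ⟨hr, hrδ⟩
  refine (convex_closedBall _ _).set_average_mem isClosed_closedBall
    (hd.measure_ball_pos x hr).ne' (hd.measure_ball_lt_top x hr).ne ?_ (hd.integrableOn_ball hf x r)
  exact (ae_restrict_iff' measurableSet_ball).2
    (ae_of_all _ fun y hy => hδε (ball_subset_ball hrδ.le hy))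

-- Telescope over the balls of radius `r / 2 ^ n`.
lemma abs_setAverage_ball_sub_le [ProperSpace X] (hd : Doubling μ Cd) (hp : Poincare μ CP lam)
    (hf : Continuous f) (hh : IsUpperGradient f h) (hx : MaximalLE μ h x m) {r : ℝ} (hr : 0 < r) :
    |(⨍ y in ball x r, f y ∂μ) - f x| ≤ 2 * (Cd * CP * r * m) := by
  set avg : ℕ → ℝ := fun n => ⨍ y in ball x (r / 2 ^ n), f y ∂μ
  have hCd : 0 ≤ Cd := zero_le_one.trans hd.1
  have hrad (n : ℕ) : 0 < r / 2 ^ n := by positivity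
  have hstep (n : ℕ) : dist (avg n) (avg (n + 1)) ≤ 2 * (Cd * CP * r * m) / 2 / 2 ^ n := by
    have hhalf : r / 2 ^ n = 2 * (r / 2 ^ (n + 1)) := by rw [pow_succ]; field_simp
    rw [dist_comm, Real.dist_eq]
    calc |avg (n + 1) - avg n| ≤ Cd * ⨍ y in ball x (r / 2 ^ n), |f y - avg n| ∂μ :=
          abs_setAverage_sub_le (ball_subset_ball (by linarith [hrad (n + 1)]))
            (hd.integrableOn_ball hf _ _) (hd.measure_ball_pos _ (hrad _))
            (hd.measure_ball_lt_top _ (hrad _)) hCd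
            (hhalf ▸ hd.measure_ball_two_mul_le x (hrad (n + 1)))
      _ ≤ Cd * (CP * (r / 2 ^ n) * m) := by
          gcongr
          exact hp.setAverage_abs_sub_setAverage_le (hd.memL1Loc_univ hf) hh hx (hrad n)
      _ = 2 * (Cd * CP * r * m) / 2 / 2 ^ n := by ring
  have hrad_lim : Tendsto (fun n : ℕ => r / 2 ^ n) atTop (𝓝[>] 0) := by
    refine tendsto_nhdsWithin_iff.2 ⟨?_, .of_forall hrad⟩
    exact tendsto_const_nhds.div_atTop (tendsto_pow_atTop_atTop_of_one_lt one_lt_two)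
  have hlim : Tendsto avg atTop (𝓝 (f x)) := (hd.tendsto_setAverage_ball hf x).comp hrad_lim
  simpa only [avg, pow_zero, div_one, Real.dist_eq] using
    dist_le_of_le_geometric_two_of_tendsto₀ hstep hlim

lemma abs_sub_le_of_maximalLE [ProperSpace X] (hd : Doubling μ Cd) (hp : Poincare μ CP lam)
    (hf : Continuous f) (hh : IsUpperGradient f h) (hx : MaximalLE μ h x m)
    (hy : MaximalLE μ h y m) : |f x - f y| ≤ 8 * Cd ^ 2 * CP * m * dist x y := by
  rcases eq_or_ne x y with rfl | hne
  · simp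
  have hCd := hd.1
  have hCP := hp.1
  set r := dist x y with hr_def
  have hr : 0 < r := dist_pos.2 hne
  set avgx := ⨍ w in ball x (2 * r), f w ∂μ
  have hx_avg : |avgx - f x| ≤ 2 * (Cd * CP * (2 * r) * m) :=
    abs_setAverage_ball_sub_le hd hp hf hh hx (by positivity)
  have hy_avg := abs_setAverage_ball_sub_le hd hp hf hh hy hr
  have havg : |(⨍ w in ball y r, f w ∂μ) - avgx| ≤ Cd ^ 2 * (CP * (2 * r) * m) := by
    refine (abs_setAverage_sub_le (D := Cd ^ 2)
      (B := ball x (2 * r)) (ball_subset_ball' (by rw [dist_comm, ← hr_def]; linarith))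
      (hd.integrableOn_ball hf _ _) (hd.measure_ball_pos _ hr)
      (hd.measure_ball_lt_top x (by positivity)) (by positivity) ?_).trans ?_
    · rw [ENNReal.ofReal_pow (by linarith)]
      refine (measure_mono (ball_subset_ball' ?_)).trans (hd.measure_ball_two_pow_mul_le y 2 hr)
      linarith
    · gcongr
      exact hp.setAverage_abs_sub_setAverage_le (hd.memL1Loc_univ hf) hh hx (by positivity)
  have htriangle : |f x - f y| ≤ |avgx - f x| + |(⨍ w in ball y r, f w ∂μ) - avgx| +
      |(⨍ w in ball y r, f w ∂μ) - f y| := by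
    rw [abs_sub_comm avgx, abs_sub_comm (⨍ w in ball y r, f w ∂μ) avgx]
    exact (abs_sub_le _ (⨍ w in ball y r, f w ∂μ) _).trans (add_le_add_left (abs_sub_le _ _ _) _)
  have hCd_sq : Cd * (CP * r * m) ≤ Cd ^ 2 * (CP * r * m) := by
    gcongr
    exact le_self_pow₀ hCd two_ne_zero
  linarith

omit [BorelSpace X] [MeasurableSpace X] in
lemma quasiDist_closedBall_lt {R F : X → ℝ≥0∞} {e r : ℝ} {c : ℝ≥0} (hR : ∀ x, 1 ≤ R x)
    (hr : c + e ≤ r) (h : quasiDist R e univ {x} F y < c) :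
    quasiDist R e (closedBall x r) {x} F y < c := by
  obtain ⟨L, γ, hL, hγ, h0, h1, hcost⟩ := exists_of_quasiDist_lt h
  have hL_le : L ≤ c := by
    rw [← Real.toNNReal_le_iff_le_coe, ← ENNReal.coe_le_coe]
    calc ENNReal.ofReal L = ∫⁻ _ in Icc 0 L, 1 := by simp
      _ ≤ ∫⁻ t in Icc 0 L, R (γ t) := lintegral_mono fun t => hR (γ t)
      _ ≤ c := le_add_self.trans hcost.le
  have hclamp_eq {t : ℝ} (ht : t ∈ Icc 0 L) : (projIcc 0 L hL t : ℝ) = t := by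
    rw [projIcc_of_mem hL ht]
  have hquasi : IsQuasiCurve e (closedBall x r) fun t => γ (projIcc 0 L hL t) := by
    refine ⟨fun t => ?_, fun s t hst => (hγ.dist_le _ _ (monotone_projIcc hL hst)).trans ?_⟩
    · have hmem := (projIcc 0 L hL t).2
      have := hγ.dist_le 0 _ hmem.1
      rw [mem_singleton_iff.1 h0] at this
      rw [mem_closedBall']
      linarith [hmem.2]
    · have := abs_projIcc_sub_projIcc hL (c := t) (d := s)
      rw [abs_of_nonneg (sub_nonneg.2 hst)] at this
      linarith [le_abs_self ((projIcc 0 L hL t : ℝ) - projIcc 0 L hL s)]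
  refine (quasiDist_le hL hquasi ?_ ?_).trans_lt ?_
  · rwa [hclamp_eq (left_mem_Icc.2 hL)]
  · rwa [hclamp_eq (right_mem_Icc.2 hL)]
  · rw [setLIntegral_congr_fun measurableSet_Icc fun t ht => by rw [hclamp_eq ht],
      hclamp_eq (left_mem_Icc.2 hL)]
    exact hcost

lemma quasiDist_infConv_le_of_maximalLE [ProperSpace X] (hd : Doubling μ Cd)
    (hp : Poincare μ CP lam) (hρ : LowerSemicontinuous ρ) (hx : MaximalLE μ ρ x m)
    (hy : MaximalLE μ ρ y m) (n : ℕ) :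
    quasiDist (infConv ρ n) (1 / (n + 1)) univ {x} 0 y ≤
      ENNReal.ofReal (8 * Cd ^ 2 * CP * m * dist x y) := by
  set c := 8 * Cd ^ 2 * CP * m * dist x y
  set f := truncQuasiDist (infConv ρ n) (1 / (n + 1)) univ {x} 0 (Real.toNNReal c + 1)
  have hf : Continuous f :=
    (lipschitzOnWith_univ.1 (lipschitzOnWith_truncQuasiDist_infConv n)).continuous
  have hfx : f x = 0 := by
    have : quasiDist (infConv ρ n) (1 / (n + 1)) univ {x} 0 x ≤ 0 :=
      quasiDist_le_self (by positivity) (mem_univ x) (mem_singleton x)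
    simp only [f, truncQuasiDist, nonpos_iff_eq_zero.1 this, zero_min, ENNReal.toReal_zero]
  have hfy : ENNReal.ofReal (f y) ≤ ENNReal.ofReal c := by
    refine ENNReal.ofReal_le_ofReal ((le_abs_self _).trans ?_)
    have := abs_sub_le_of_maximalLE hd hp hf ⟨hρ.measurable, fun γ =>
      isUpperGradientOn_truncQuasiDist_infConv n γ fun _ _ => mem_univ _⟩ hx hy
    rwa [hfx, zero_sub, abs_neg] at this
  rw [ofReal_truncQuasiDist, min_le_iff] at hfy
  exact hfy.resolve_right (ENNReal.coe_lt_coe.2 (lt_add_one _)).not_ge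

lemma exists_curve_integral_le_of_maximalLE [ProperSpace X] (hd : Doubling μ Cd)
    (hp : Poincare μ CP lam) (hρ : LowerSemicontinuous ρ) (hρ_one : ∀ z, 1 ≤ ρ z)
    (hx : MaximalLE μ ρ x m) (hy : MaximalLE μ ρ y m) {c : ℝ}
    (hc : 8 * Cd ^ 2 * CP * m * dist x y < c) :
    ∃ Γ : Curve X, Γ.toFun 0 = x ∧ Γ.toFun Γ.len = y ∧ Γ.integral ρ ≤ ENNReal.ofReal c := by
  have hc_pos : 0 < c := by
    refine lt_of_le_of_lt ?_ hc
    have := hp.1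
    positivity
  have hlt (n : ℕ) : quasiDist (infConv ρ n) (1 / (n + 1)) (closedBall x (Real.toNNReal c + 1)) {x}
      0 y < ENNReal.ofReal c :=
    quasiDist_closedBall_lt (one_le_infConv n hρ_one)
      (by gcongr; exact div_le_one_of_le₀ (by simp) (by positivity))
      ((quasiDist_infConv_le_of_maximalLE hd hp hρ hx hy n).trans_lt
        ((ENNReal.ofReal_lt_ofReal_iff hc_pos).2 hc))
  obtain ⟨Γ, -, hΓ0, hΓ1, hcost⟩ := exists_curve_of_frequently_quasiDist_infConv_lt hρ
    (fun z => zero_lt_one.trans_le (hρ_one z)) (isCompact_closedBall x _) isClosed_singleton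
    continuous_zero ENNReal.ofReal_ne_top (Frequently.of_forall hlt)
  exact ⟨Γ, hΓ0, hΓ1, by simpa using hcost⟩

omit [BorelSpace X] in
lemma Doubling.exists_maximalLE_of_forall_lt (hd : Doubling μ Cd) (hfin : ∫⁻ x, ρ x ∂μ < ∞)
    {r₀ : ℝ} (hr₀ : 0 < r₀) {a : ℝ≥0∞} (ha : a ≠ ∞)
    (h : ∀ r ∈ Ioo 0 r₀, ∫⁻ z in ball x r, ρ z ∂μ ≤ a * μ (ball x r)) :
    ∃ m, MaximalLE μ ρ x m := by
  have hb : (∫⁻ z, ρ z ∂μ) / μ (ball x r₀) ≠ ∞ :=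
    ENNReal.div_ne_top hfin.ne (hd.measure_ball_pos x hr₀).ne'
  lift a to ℝ≥0 using ha
  obtain ⟨b, hb⟩ : ∃ b : ℝ≥0, ↑b = (∫⁻ z, ρ z ∂μ) / μ (ball x r₀) := WithTop.ne_top_iff_exists.1 hb
  refine ⟨max a b, fun r hr => ?_⟩
  rcases lt_or_ge r r₀ with hlt | hge
  · exact (h r ⟨hr, hlt⟩).trans (by gcongr; exact le_max_left _ _)
  · calc ∫⁻ z in ball x r, ρ z ∂μ ≤ ∫⁻ z, ρ z ∂μ := setLIntegral_le_lintegral _ _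
      _ = b * μ (ball x r₀) := by
          rw [hb, ENNReal.div_mul_cancel (hd.measure_ball_pos x hr₀).ne'
            (hd.measure_ball_lt_top x hr₀).ne]
      _ ≤ (max a b : ℝ≥0) * μ (ball x r) := by gcongr; exact le_max_right _ _

lemma Doubling.ae_exists_maximalLE [ProperSpace X] (hd : Doubling μ Cd) (hρ : Measurable ρ)
    (hfin : ∫⁻ x, ρ x ∂μ < ∞) : ∀ᵐ x ∂μ, ∃ m, MaximalLE μ ρ x m := by
  have := hd.isLocallyFiniteMeasure
  have := hd.isUnifLocDoublingMeasure
  filter_upwards [(IsUnifLocDoublingMeasure.vitaliFamily μ 1).ae_tendsto_lintegral_div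
    hρ.aemeasurable hfin.ne, ae_lt_top hρ hfin.ne] with x hx hρx
  have hlim := hx.comp (IsUnifLocDoublingMeasure.tendsto_closedBall_filterAt μ (K := 1) (x := x)
    (l := 𝓝[>] (0 : ℝ)) (fun _ => x) (fun r => r) tendsto_id (by
      filter_upwards [self_mem_nhdsWithin] with r (hr : 0 < r)
      simpa using hr.le))
  obtain ⟨r₀, hr₀, hsmall⟩ := mem_nhdsGT_iff_exists_Ioo_subset.1
    (hlim.eventually (gt_mem_nhds (ENNReal.lt_add_right hρx.ne one_ne_zero)))
  refine hd.exists_maximalLE_of_forall_lt (a := (ρ x + 1) * ENNReal.ofReal Cd) hfin hr₀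
    (by finiteness) fun r hr => ?_
  have hclosed : μ (closedBall x r) ≤ ENNReal.ofReal Cd * μ (ball x r) :=
    (measure_mono (closedBall_subset_ball (by linarith [hr.1]))).trans
      (hd.measure_ball_two_mul_le x hr.1)
  calc ∫⁻ z in ball x r, ρ z ∂μ ≤ ∫⁻ z in closedBall x r, ρ z ∂μ :=
        lintegral_mono_set ball_subset_closedBall
    _ ≤ (ρ x + 1) * μ (closedBall x r) :=
        (ENNReal.div_le_iff
          ((hd.measure_ball_pos x hr.1).trans_le (measure_mono ball_subset_closedBall)).ne'
          measure_closedBall_lt_top.ne).1 (hsmall hr).le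
    _ ≤ (ρ x + 1) * ENNReal.ofReal Cd * μ (ball x r) := by rw [mul_assoc]; gcongr

omit [BorelSpace X] in
lemma MaximalLE.add_one (h : MaximalLE μ ρ x m) : MaximalLE μ (fun z => ρ z + 1) x (m + 1) :=
  fun r hr => by
    rw [lintegral_add_right _ measurable_const, setLIntegral_one, ENNReal.coe_add, add_mul,
      ENNReal.coe_one, one_mul]
    gcongr
    exact h r hr

omit [BorelSpace X] in
lemma MaximalLE.mono {m' : ℝ≥0} (h : MaximalLE μ ρ x m) (hm : m ≤ m') : MaximalLE μ ρ x m' :=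
  fun r hr => (h r hr).trans (by gcongr)

variable {w : X → ℝ} {W : Set X}

omit [MeasurableSpace X] [BorelSpace X] in
lemma Curve.in_of_integral_lt {Γ : Curve X} {δ : ℝ} (hδ : ball (Γ.toFun 0) δ ⊆ W)
    (hΓ : Γ.integral 1 < ENNReal.ofReal δ) : Γ.In W := fun t ht => hδ <| by
  have hlen : Γ.len < δ := by
    simpa [Curve.integral, ENNReal.ofReal_lt_ofReal_iff_of_nonneg Γ.len_nonneg] using hΓ
  have := Γ.lip.dist_le_mul t ht 0 (left_mem_Icc.2 Γ.len_nonneg)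
  simp only [NNReal.coe_one, one_mul, Real.dist_eq, sub_zero, abs_of_nonneg ht.1] at this
  exact this.trans_lt (ht.2.trans_lt hlen)

lemma IsUpperGradientOn.abs_sub_le_of_maximalLE [ProperSpace X] (hw : IsUpperGradientOn w ρ W)
    (hd : Doubling μ Cd) (hp : Poincare μ CP lam) (hρ : LowerSemicontinuous ρ)
    (hx : MaximalLE μ (fun z => ρ z + 1) x m) (hy : MaximalLE μ (fun z => ρ z + 1) y m) {δ : ℝ}
    (hδ : ball x δ ⊆ W) (hdist : 8 * Cd ^ 2 * CP * m * dist x y < δ) :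
    |w x - w y| ≤ 8 * Cd ^ 2 * CP * m * dist x y := by
  refine le_of_forall_gt_imp_ge_of_dense fun c hc => ?_
  obtain ⟨c', hc', hc'_lt⟩ := exists_between (lt_min hc hdist)
  obtain ⟨hc'c, hc'δ⟩ := lt_min_iff.1 hc'_lt
  obtain ⟨Γ, rfl, rfl, hcost⟩ := exists_curve_integral_le_of_maximalLE hd hp
    (hρ.add lowerSemicontinuous_const) (fun _ => le_add_self) hx hy hc'
  have hc'0 : 0 ≤ c' := by
    refine le_trans ?_ hc'.le
    have := hp.1
    positivity
  have hin : Γ.In W := Γ.in_of_integral_lt hδ <|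
    ((Γ.integral_mono fun _ => le_add_self).trans hcost).trans_lt
      ((ENNReal.ofReal_lt_ofReal_iff (hc'0.trans_lt hc'δ)).2 hc'δ)
  have hug := (hw Γ hin).trans ((Γ.integral_mono fun _ => le_self_add).trans hcost)
  exact ((ENNReal.ofReal_le_ofReal_iff hc'0).1 hug).trans hc'c.le

lemma IsUpperGradientOn.exists_lipschitzOnWith [ProperSpace X] (hw : IsUpperGradientOn w ρ W)
    (hd : Doubling μ Cd) (hp : Poincare μ CP lam) (hρ : LowerSemicontinuous ρ) {M : ℝ}
    (hM : ∀ x ∈ W, |w x| ≤ M) {δ : ℝ} (hδ : 0 < δ) :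
    ∃ L, LipschitzOnWith L w
      {x | ball x δ ⊆ W ∧ MaximalLE μ (fun z => ρ z + 1) x m} := by
  set A := 8 * Cd ^ 2 * CP * m
  refine ⟨Real.toNNReal (max A (2 * M * (A / δ))),
    LipschitzOnWith.of_dist_le' fun x hx y hy => ?_⟩
  rw [Real.dist_eq]
  rcases lt_or_ge (A * dist x y) δ with h | h
  · refine (hw.abs_sub_le_of_maximalLE hd hp hρ hx.2 hy.2 hx.1 h).trans ?_
    gcongr
    exact le_max_left _ _
  · have hx_le := hM x (hx.1 (mem_ball_self hδ))
    calc |w x - w y| ≤ 2 * M * 1 := by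
          linarith [abs_sub (w x) (w y), hM y (hy.1 (mem_ball_self hδ))]
      _ ≤ 2 * M * (A * dist x y / δ) := by
          have hM0 : 0 ≤ M := (abs_nonneg _).trans hx_le
          gcongr
          exact (one_le_div hδ).2 h
      _ = 2 * M * (A / δ) * dist x y := by ring
      _ ≤ _ := by gcongr; exact le_max_right _ _

lemma IsUpperGradientOn.aemeasurable [ProperSpace X] (hw : IsUpperGradientOn w ρ W)
    (hd : Doubling μ Cd) (hp : Poincare μ CP lam) (hρ : LowerSemicontinuous ρ)
    (hfin : ∫⁻ x, ρ x ∂μ < ∞) (hW : IsOpen W) {M : ℝ} (hM : ∀ x ∈ W, |w x| ≤ M) :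
    AEMeasurable w (μ.restrict W) := by
  choose L hL using fun n : ℕ => hw.exists_lipschitzOnWith (m := n + 1) hd hp hρ hM
    (Nat.one_div_pos_of_nat (n := n))
  choose f hf_lip hf_eq using fun n => (hL n).extend_real
  refine aemeasurable_of_tendsto_metrizable_ae atTop (f := f)
    (fun n => (hf_lip n).continuous.measurable.aemeasurable) ?_
  filter_upwards [ae_restrict_mem hW.measurableSet,
    ae_restrict_of_ae (hd.ae_exists_maximalLE hρ.measurable hfin)] with x hxW ⟨m, hm⟩
  obtain ⟨r, hr, hrW⟩ := Metric.isOpen_iff.1 hW x hxW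
  refine tendsto_const_nhds.congr' ?_
  filter_upwards [eventually_ge_atTop ⌈m⌉₊,
    tendsto_one_div_add_atTop_nhds_zero_nat.eventually (gt_mem_nhds hr)] with n hmn hnr
  exact hf_eq n ⟨(ball_subset_ball hnr.le).trans hrW,
    hm.add_one.mono (by gcongr; exact Nat.ceil_le.1 hmn)⟩

end Poincare

/-! ### Lipschitz approximation on compact sets -/

section LipschitzApproximation

variable {μ : Measure X} {ρ : X → ℝ≥0∞} {w F : X → ℝ} {C K : Set X} {e : ℝ} {x : X}

lemma exists_isCompact_continuous_forall_abs_sub_le [ProperSpace X] [IsLocallyFiniteMeasure μ]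
    (hC : IsCompact C) {M : ℝ} (hM : ∀ x ∈ C, |w x| ≤ M) (hw : AEMeasurable w (μ.restrict C))
    (he : 0 < e) {δ : ℝ≥0∞} (hδ : δ ≠ 0) :
    ∃ (K : Set X) (F : X → ℝ), IsCompact K ∧ K ⊆ C ∧ Continuous F ∧ (∀ x ∈ K, |F x - w x| ≤ e) ∧
      μ (C \ K) ≤ δ := by
  have hC_fin : μ C < ∞ := hC.measure_lt_top
  have : IsFiniteMeasure (μ.restrict C) := ⟨by simpa using hC_fin⟩
  have hw_int : Integrable w (μ.restrict C) :=
    .of_bound hw.aestronglyMeasurable M ((ae_restrict_mem hC.measurableSet).mono hM)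
  have hδ2 : δ / 2 ≠ 0 := by simp [hδ]
  have he' : ENNReal.ofReal e ≠ 0 := by simp [he]
  obtain ⟨F, hF, -⟩ := hw_int.exists_boundedContinuous_lintegral_sub_le (mul_ne_zero he' hδ2)
  set bad := toMeasurable (μ.restrict C) {x | ENNReal.ofReal e ≤ ‖w x - F x‖ₑ}
  have hbad_meas : MeasurableSet bad := measurableSet_toMeasurable _ _
  have hbad : μ (bad ∩ C) ≤ δ / 2 := by
    rw [← Measure.restrict_apply hbad_meas, measure_toMeasurable,
      ← ENNReal.mul_le_mul_iff_right he' ENNReal.ofReal_ne_top]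
    exact (mul_meas_ge_le_lintegral₀ (hw.sub F.continuous.aemeasurable).enorm _).trans hF
  obtain ⟨K, hK_sub, hK, hK_diff⟩ := (hC.measurableSet.diff hbad_meas).exists_isCompact_sdiff_lt
    (measure_ne_top_of_subset sdiff_subset hC_fin.ne) hδ2
  refine ⟨K, F, hK, hK_sub.trans sdiff_subset, F.continuous, fun x hx => ?_, ?_⟩
  · have hlt : ‖w x - F x‖ₑ < ENNReal.ofReal e :=
      not_le.1 fun h => (hK_sub hx).2 (subset_toMeasurable _ _ h)
    rw [Real.enorm_eq_ofReal_abs, ENNReal.ofReal_lt_ofReal_iff he, abs_sub_comm] at hlt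
    exact hlt.le
  · calc μ (C \ K) ≤ μ ((C \ bad) \ K ∪ bad ∩ C) := by
          gcongr; intro x hx; by_cases x ∈ bad <;> simp_all
      _ ≤ δ / 2 + δ / 2 := (measure_union_le _ _).trans (by gcongr)
      _ = δ := ENNReal.add_halves δ

omit [MeasurableSpace X] [BorelSpace X] in
lemma truncQuasiDist_le_of_abs_sub_le {R : X → ℝ≥0∞} {δ : ℝ} (hδ : 0 ≤ δ) {M : ℝ≥0} (hxC : x ∈ C)
    (hxK : x ∈ K) (he : 0 ≤ e) (hw : 0 ≤ w x) (hFw : |F x - w x| ≤ e) :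
    truncQuasiDist R δ C K (fun y => ENNReal.ofReal (F y)) M x ≤ w x + e := by
  rw [← ENNReal.ofReal_le_ofReal_iff (by positivity), ofReal_truncQuasiDist]
  refine (min_le_left _ _).trans ((quasiDist_le_self hδ hxC hxK).trans ?_)
  exact ENNReal.ofReal_le_ofReal (by linarith [(abs_le.1 hFw).2])

omit [MeasurableSpace X] [BorelSpace X] in
lemma IsUpperGradientOn.not_frequently_quasiDist_infConv_lt (hw : IsUpperGradientOn w ρ C)
    (hC : IsCompact C) (hK : IsCompact K) (hρ : LowerSemicontinuous ρ) (hρ_pos : ∀ x, 0 < ρ x)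
    (hF : Continuous F) (hFw : ∀ x ∈ K, |F x - w x| ≤ e) {c : ℝ} (hc : c < w x - e) :
    ¬ ∃ᶠ n : ℕ in atTop, quasiDist (infConv ρ n) (1 / (n + 1)) C K
      (fun y => ENNReal.ofReal (F y)) x < ENNReal.ofReal c := by
  intro h
  have hc_pos : 0 < c := by
    obtain ⟨n, hn⟩ := h.exists
    exact ENNReal.ofReal_pos.1 (bot_le.trans_lt hn)
  obtain ⟨Γ, hΓ, hΓ0, rfl, hcost⟩ := exists_curve_of_frequently_quasiDist_infConv_lt hρ hρ_pos hC
    hK.isClosed (ENNReal.continuous_ofReal.comp hF) ENNReal.ofReal_ne_top h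
  have hle : ENNReal.ofReal (F (Γ.toFun 0) + |w (Γ.toFun 0) - w (Γ.toFun Γ.len)|)
      ≤ ENNReal.ofReal c :=
    ENNReal.ofReal_add_le.trans ((add_le_add_right (hw Γ hΓ) _).trans hcost)
  rw [ENNReal.ofReal_le_ofReal_iff hc_pos.le] at hle
  linarith [neg_abs_le (w (Γ.toFun 0) - w (Γ.toFun Γ.len)), (abs_le.1 (hFw _ hΓ0)).1]

omit [MeasurableSpace X] [BorelSpace X] in
lemma IsUpperGradientOn.eventually_abs_truncQuasiDist_infConv_sub_le
    (hw : IsUpperGradientOn w ρ C) (hC : IsCompact C) (hK : IsCompact K) (hKC : K ⊆ C)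
    (hρ : LowerSemicontinuous ρ) (hρ_pos : ∀ x, 0 < ρ x) {M : ℝ≥0}
    (hwM : ∀ x ∈ C, w x ∈ Icc 0 (M : ℝ)) (hF : Continuous F) (he : 0 < e)
    (hFw : ∀ x ∈ K, |F x - w x| ≤ e) (hx : x ∈ K) :
    ∀ᶠ n : ℕ in atTop, |truncQuasiDist (infConv ρ n) (1 / (n + 1)) C K
      (fun y => ENNReal.ofReal (F y)) M x - w x| ≤ 2 * e := by
  have hlower := hw.not_frequently_quasiDist_infConv_lt hC hK hρ hρ_pos hF hFw (x := x)
    (c := w x - 2 * e) (by linarith)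
  filter_upwards [not_frequently.1 hlower] with n hn
  have hupper := truncQuasiDist_le_of_abs_sub_le (R := infConv ρ n) (δ := 1 / (n + 1)) (M := M)
    (by positivity) (hKC hx) hx he.le (hwM x (hKC hx)).1 (hFw x hx)
  have hM : ENNReal.ofReal (w x - 2 * e) ≤ M := by
    rw [← ENNReal.ofReal_coe_nnreal]
    exact ENNReal.ofReal_le_ofReal (by linarith [(hwM x (hKC hx)).2])
  have hle : ENNReal.ofReal (w x - 2 * e) ≤ ENNReal.ofReal (truncQuasiDist (infConv ρ n)
      (1 / (n + 1)) C K (fun y => ENNReal.ofReal (F y)) M x) := by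
    rw [ofReal_truncQuasiDist]
    exact le_min (not_lt.1 hn) hM
  rw [ENNReal.ofReal_le_ofReal_iff truncQuasiDist_mem_Icc.1] at hle
  exact abs_le.2 ⟨by linarith, by linarith⟩

omit [MetricSpace X] [BorelSpace X] in
lemma exists_lintegral_abs_sub_le {S : Set X} (hS : MeasurableSet S) (hS_fin : μ S ≠ ∞)
    {h : ℕ → X → ℝ} (hh : ∀ n, AEMeasurable (h n) (μ.restrict S))
    (hw : AEMeasurable w (μ.restrict S)) {M : ℝ≥0} (hM : ∀ n, ∀ x ∈ S, |h n x - w x| ≤ M)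
    (he : 0 ≤ e) (hlim : ∀ x ∈ S, ∀ᶠ n in atTop, |h n x - w x| ≤ e) {ε : ℝ≥0∞} (hε : ε ≠ 0) :
    ∃ n, ∫⁻ x in S, ENNReal.ofReal |h n x - w x| ∂μ ≤ ε + ENNReal.ofReal e * μ S := by
  have hexcess : Tendsto (fun n => ∫⁻ x in S, ENNReal.ofReal (|h n x - w x| - e) ∂μ) atTop
      (𝓝 (∫⁻ _ in S, 0 ∂μ)) := by
    refine tendsto_lintegral_of_dominated_convergence' (fun _ => (M : ℝ≥0∞))
      (fun n => (((hh n).sub hw).abs.sub_const _).ennreal_ofReal) (fun n => ?_) ?_ ?_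
    · filter_upwards [ae_restrict_mem hS] with x hx
      rw [← ENNReal.ofReal_coe_nnreal]
      exact ENNReal.ofReal_le_ofReal (by linarith [hM n x hx])
    · simpa using ENNReal.mul_ne_top ENNReal.coe_ne_top hS_fin
    · filter_upwards [ae_restrict_mem hS] with x hx
      refine tendsto_const_nhds.congr' ?_
      filter_upwards [hlim x hx] with n hn
      rw [ENNReal.ofReal_of_nonpos (by linarith)]
  rw [lintegral_zero] at hexcess
  obtain ⟨n, hn⟩ := (hexcess.eventually (gt_mem_nhds (pos_iff_ne_zero.2 hε))).exists
  refine ⟨n, ?_⟩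
  calc ∫⁻ x in S, ENNReal.ofReal |h n x - w x| ∂μ
      ≤ ∫⁻ x in S, (ENNReal.ofReal (|h n x - w x| - e) + ENNReal.ofReal e) ∂μ :=
        lintegral_mono fun x =>
          (ENNReal.ofReal_le_ofReal (by linarith)).trans ENNReal.ofReal_add_le
    _ = ∫⁻ x in S, ENNReal.ofReal (|h n x - w x| - e) ∂μ + ENNReal.ofReal e * μ S := by
        rw [lintegral_add_right _ measurable_const, setLIntegral_const]
    _ ≤ ε + ENNReal.ofReal e * μ S := by gcongr

lemma exists_pos_ofReal_mul_le {a ε : ℝ≥0∞} (ha : a ≠ ∞) (hε : ε ≠ 0) :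
    ∃ e > 0, ENNReal.ofReal e * a ≤ ε := by
  have hlim : Tendsto (fun e : ℝ => ENNReal.ofReal e * a) (𝓝[>] 0) (𝓝 0) := by
    have := ENNReal.Tendsto.mul_const (ENNReal.tendsto_ofReal (tendsto_id (x := 𝓝 (0 : ℝ))))
      (Or.inr ha)
    simpa using this.mono_left nhdsWithin_le_nhds
  obtain ⟨e, hle, he⟩ :=
    ((hlim.eventually (gt_mem_nhds (pos_iff_ne_zero.2 hε))).and self_mem_nhdsWithin).exists
  exact ⟨e, he, hle.le⟩

lemma IsUpperGradientOn.exists_lipschitzOnWith_lintegral_abs_sub_le [ProperSpace X]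
    [IsLocallyFiniteMeasure μ] (hw : IsUpperGradientOn w ρ C) (hC : IsCompact C)
    (hρ : LowerSemicontinuous ρ) (hρ_pos : ∀ x, 0 < ρ x) {M : ℝ≥0}
    (hwM : ∀ x ∈ C, w x ∈ Icc 0 (M : ℝ)) (hw_meas : AEMeasurable w (μ.restrict C))
    {ε : ℝ≥0∞} (hε : ε ≠ 0) :
    ∃ (φ : X → ℝ) (L : ℝ≥0), LipschitzOnWith L φ C ∧ (∀ x, φ x ∈ Icc 0 (M : ℝ)) ∧
      IsUpperGradientOn φ ρ C ∧ ∫⁻ x in C, ENNReal.ofReal |φ x - w x| ∂μ ≤ ε := by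
  have hε3 : ε / 3 ≠ 0 := by simp [hε]
  obtain ⟨e, he, he_le⟩ := exists_pos_ofReal_mul_le (hC.measure_lt_top (μ := μ)).ne hε3
  obtain ⟨K, F, hK, hKC, hF, hFw, hK_diff⟩ := exists_isCompact_continuous_forall_abs_sub_le
    (μ := μ) hC (M := M) (fun x hx => (abs_of_nonneg (hwM x hx).1).trans_le (hwM x hx).2) hw_meas
    (half_pos he) (δ := ε / 3 / (M + 1)) (by simp [hε])
  set h : ℕ → X → ℝ := fun n =>
    truncQuasiDist (infConv ρ n) (1 / (n + 1)) C K (fun y => ENNReal.ofReal (F y)) M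
  have hM (n : ℕ) (x : X) (hx : x ∈ C) : |h n x - w x| ≤ M := by
    have h₁ : h n x ∈ Icc 0 (M : ℝ) := truncQuasiDist_mem_Icc
    have h₂ := hwM x hx
    exact abs_le.2 ⟨by linarith [h₁.1, h₂.2], by linarith [h₁.2, h₂.1]⟩
  obtain ⟨n, hn⟩ := exists_lintegral_abs_sub_le hK.measurableSet hK.measure_lt_top.ne
    (fun n => ((lipschitzOnWith_truncQuasiDist_infConv n).mono hKC).continuousOn.aemeasurable
      hK.measurableSet)
    (hw_meas.mono_set hKC) (fun n x hx => hM n x (hKC hx)) he.le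
    (fun x hx => by
      simpa only [mul_div_cancel₀ e (two_ne_zero' ℝ)] using
        hw.eventually_abs_truncQuasiDist_infConv_sub_le hC hK hKC hρ hρ_pos hwM hF (half_pos he)
          hFw hx)
    hε3
  refine ⟨h n, _, lipschitzOnWith_truncQuasiDist_infConv n, fun _ => truncQuasiDist_mem_Icc,
    isUpperGradientOn_truncQuasiDist_infConv n, ?_⟩
  calc ∫⁻ x in C, ENNReal.ofReal |h n x - w x| ∂μ
      ≤ ∫⁻ x in K, ENNReal.ofReal |h n x - w x| ∂μ
          + ∫⁻ x in C \ K, ENNReal.ofReal |h n x - w x| ∂μ := by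
        simpa only [union_sdiff_cancel hKC] using lintegral_union_le (μ := μ) _ K (C \ K)
    _ ≤ (ε / 3 + ε / 3) + M * μ (C \ K) := by
        gcongr
        · exact hn.trans (by gcongr; exact le_trans (by gcongr) he_le)
        · rw [← setLIntegral_const]
          refine setLIntegral_mono' (hC.measurableSet.diff hK.measurableSet) fun x hx => ?_
          rw [← ENNReal.ofReal_coe_nnreal]
          exact ENNReal.ofReal_le_ofReal (hM n x hx.1)
    _ ≤ (ε / 3 + ε / 3) + (M + 1) * (ε / 3 / (M + 1)) := by gcongr; exact le_self_add
    _ ≤ (ε / 3 + ε / 3) + ε / 3 := by gcongr; exact ENNReal.mul_div_le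
    _ = ε := ENNReal.add_thirds ε

end LipschitzApproximation

/-! ### Truncations and convex combinations -/

section Clamp

variable {a b s : ℝ}

/-- The truncation of `s` at the levels `a` and `b`; it takes values in `[a, b]` if `a ≤ b`. -/
def clamp (a b s : ℝ) : ℝ := max a (min b s)

lemma clamp_mem_Icc (h : a ≤ b) : clamp a b s ∈ Icc a b :=
  ⟨le_max_left _ _, max_le h (min_le_left _ _)⟩

lemma clamp_of_le_left (h : s ≤ a) : clamp a b s = a :=
  max_eq_left ((min_le_right _ _).trans h)

lemma clamp_of_right_le (hab : a ≤ b) (h : b ≤ s) : clamp a b s = b := by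
  rw [clamp, min_eq_left h, max_eq_right hab]

lemma lipschitzWith_clamp : LipschitzWith 1 (clamp a b) :=
  (LipschitzWith.id.const_min b).const_max a

end Clamp

section Blend

variable {f f₁ f₂ η : X → ℝ} {a a₁ a₂ b c : X → ℝ≥0∞} {A : Set X} {γ : Curve X}

omit [MeasurableSpace X] [BorelSpace X] in
lemma UGIneq.comp_lipschitzWith (h : UGIneq f a γ) {T : ℝ → ℝ} (hT : LipschitzWith 1 T) :
    UGIneq (T ∘ f) a γ := by
  refine le_trans ?_ h
  simpa only [Function.comp_apply, ← edist_dist, ← Real.dist_eq, ENNReal.coe_one, one_mul]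
    using hT (f _) (f _)

omit [MeasurableSpace X] [BorelSpace X] in
lemma isUpperGradientOn_of_lipschitzOnWith {L : ℝ≥0} (hf : LipschitzOnWith L f A) :
    IsUpperGradientOn f (fun _ => L) A := fun _ hγ =>
  Curve.ugIneq_of_incrementBound (Curve.incrementBound_of_lipschitzOnWith hf le_rfl le_rfl hγ)

omit [MeasurableSpace X] [BorelSpace X] in
lemma Curve.ugIneq_of_locally
    (h : ∀ t₀ ∈ Icc 0 γ.len, ∃ P : Set X, (∀ᶠ t in 𝓝[Icc 0 γ.len] t₀, γ.toFun t ∈ P) ∧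
      ∀ p q, 0 ≤ p → q ≤ γ.len → (∀ t ∈ Icc p q, γ.toFun t ∈ P) →
        IncrementBound (f ∘ γ.toFun) (a ∘ γ.toFun) p q) : UGIneq f a γ := by
  refine ugIneq_of_incrementBound (.of_locally fun t₀ ht₀ => ?_)
  obtain ⟨P, hP, hbound⟩ := h t₀ ht₀
  obtain ⟨δ, hδ, hball⟩ := Metric.mem_nhdsWithin_iff.1 hP
  refine ⟨δ / 2, half_pos hδ, hbound _ _ (le_max_left _ _) (min_le_left _ _) fun t ht => ?_⟩
  obtain ⟨⟨h0, h1⟩, h2, h3⟩ := (⟨max_le_iff.1 ht.1, le_min_iff.1 ht.2⟩ : (_ ∧ _) ∧ _ ∧ _)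
  refine hball ⟨?_, h0, h2⟩
  rw [mem_ball, Real.dist_eq, abs_lt]
  constructor <;> linarith

omit [MeasurableSpace X] [BorelSpace X] in
lemma Curve.eventually_mem_of_isOpen {P : Set X} (hP : IsOpen P) {t₀ : ℝ}
    (ht₀ : t₀ ∈ Icc 0 γ.len) (h : γ.toFun t₀ ∈ P) : ∀ᶠ t in 𝓝[Icc 0 γ.len] t₀, γ.toFun t ∈ P :=
  γ.lip.continuousOn t₀ ht₀ (hP.mem_nhds h)

/-- The convex combination of `f₁` and `f₂` in which `f₂` has weight `η`. -/
def blend (η f₁ f₂ : X → ℝ) (x : X) : ℝ := (1 - η x) * f₁ x + η x * f₂ x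

/-- The bound that the Leibniz rule gives for the gradient of `blend η f₁ f₂`, where `a₁`, `a₂`, `b`
bound the gradients of `f₁`, `f₂`, `η` and `c` bounds `|f₁ - f₂|`. -/
def blendGradient (η : X → ℝ) (c a₁ a₂ b : X → ℝ≥0∞) (x : X) : ℝ≥0∞ :=
  ENNReal.ofReal (1 - η x) * a₁ x + ENNReal.ofReal (η x) * a₂ x + c x * b x

lemma IsUpperGradientOn.incrementBound_blend (h₁ : IsUpperGradientOn f₁ a₁ A)
    (h₂ : IsUpperGradientOn f₂ a₂ A) (hη : IsUpperGradientOn η b A) (ha₁ : Measurable a₁)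
    (ha₂ : Measurable a₂) (hb : Measurable b) (hfin₁ : γ.integral a₁ ≠ ∞)
    (hfin₂ : γ.integral a₂ ≠ ∞) (hfin : γ.integral b ≠ ∞) (hη_mem : ∀ x ∈ A, η x ∈ Icc 0 1)
    (hc : ∀ x ∈ A, ENNReal.ofReal |f₁ x - f₂ x| ≤ c x) {p q : ℝ} (hp : 0 ≤ p) (hq : q ≤ γ.len)
    (hA : ∀ t ∈ Icc p q, γ.toFun t ∈ A) :
    IncrementBound (blend η f₁ f₂ ∘ γ.toFun) (blendGradient η c a₁ a₂ b ∘ γ.toFun) p q := by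
  have hmeas {g : X → ℝ≥0∞} (hg : Measurable g) :
      AEMeasurable (g ∘ γ.toFun) (volume.restrict (Ioc p q)) :=
    (γ.aemeasurable_comp hg).mono_set (Ioc_subset_Ioc hp hq)
  refine (IncrementBound.blend (h₁.incrementBound hp hq hA) (h₂.incrementBound hp hq hA)
    (hη.incrementBound hp hq hA) (hmeas ha₁) (hmeas ha₂) (hmeas hb)
    (Curve.setLIntegral_Ioc_ne_top hfin₁ hp hq) (Curve.setLIntegral_Ioc_ne_top hfin₂ hp hq)
    (Curve.setLIntegral_Ioc_ne_top hfin hp hq) fun t ht => hη_mem _ (hA t ht)).mono_right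
    fun t ht => ?_
  simp only [Function.comp_apply, blendGradient]
  gcongr
  exact hc _ (hA t ht)

omit [MetricSpace X] [MeasurableSpace X] [BorelSpace X] in
lemma abs_blend_sub_le {x : X} (hη : η x ∈ Icc 0 1) (w : ℝ) :
    |blend η f₁ f₂ x - w| ≤ (1 - η x) * |f₁ x - w| + η x * |f₂ x - w| := by
  calc |blend η f₁ f₂ x - w| = |(1 - η x) * (f₁ x - w) + η x * (f₂ x - w)| := by
        rw [blend]; ring_nf
    _ ≤ |(1 - η x) * (f₁ x - w)| + |η x * (f₂ x - w)| := abs_add_le _ _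
    _ = (1 - η x) * |f₁ x - w| + η x * |f₂ x - w| := by
        rw [abs_mul, abs_mul, abs_of_nonneg hη.1, abs_of_nonneg (sub_nonneg.2 hη.2)]

omit [MeasurableSpace X] [BorelSpace X] in
lemma lipschitzOnWith_blend {L₁ L₂ L M : ℝ≥0} (h₁ : LipschitzOnWith L₁ f₁ A)
    (h₂ : LipschitzOnWith L₂ f₂ A) (hη : LipschitzOnWith L η A) (hη_mem : ∀ x ∈ A, η x ∈ Icc 0 1)
    (hM : ∀ x ∈ A, |f₂ x - f₁ x| ≤ M) :
    LipschitzOnWith (L₁ + L₂ + M * L) (blend η f₁ f₂) A := by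
  refine LipschitzOnWith.of_dist_le_mul fun x hx y hy => ?_
  have h₁' := h₁.dist_le_mul x hx y hy
  have h₂' := h₂.dist_le_mul x hx y hy
  have hη' := hη.dist_le_mul x hx y hy
  obtain ⟨hη0, hη1⟩ := hη_mem x hx
  rw [Real.dist_eq] at *
  calc |blend η f₁ f₂ x - blend η f₁ f₂ y|
      = |(1 - η x) * (f₁ x - f₁ y) + η x * (f₂ x - f₂ y) + (η x - η y) * (f₂ y - f₁ y)| := by
        rw [blend, blend]; ring_nf
    _ ≤ |1 - η x| * |f₁ x - f₁ y| + |η x| * |f₂ x - f₂ y| + |η x - η y| * |f₂ y - f₁ y| := by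
        simpa only [abs_mul] using abs_add_three ((1 - η x) * (f₁ x - f₁ y))
          (η x * (f₂ x - f₂ y)) ((η x - η y) * (f₂ y - f₁ y))
    _ ≤ 1 * (L₁ * dist x y) + 1 * (L₂ * dist x y) + L * dist x y * M := by
        gcongr
        · exact abs_le.2 ⟨by linarith, by linarith⟩
        · exact abs_le.2 ⟨by linarith, hη1⟩
        · exact hM y hy
    _ = ↑(L₁ + L₂ + M * L) * dist x y := by push_cast; ring

end Blend

/-! ### Exhaustions of open sets -/

section Exhaustion

variable {W : Set X} {τ : X → ℝ}

/-- `τ` is a locally Lipschitz exhaustion function of the open set `W`: it blows up at the boundary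
of `W` and at infinity. -/
structure IsExhaustion (τ : X → ℝ) (W : Set X) : Prop where
  nonneg : ∀ x, 0 ≤ τ x
  continuousOn : ContinuousOn τ W
  isCompact_sublevel : ∀ c, IsCompact (W ∩ {x | τ x ≤ c})
  exists_lipschitzOnWith : ∀ c, ∃ L : ℝ≥0, LipschitzOnWith L τ (W ∩ {x | τ x ≤ c})

omit [MeasurableSpace X] [BorelSpace X] in
lemma lipschitzOnWith_inv_of_inv_le {f : X → ℝ} {s : Set X} {L c : ℝ≥0}
    (hf : LipschitzOnWith L f s) (hpos : ∀ x ∈ s, 0 < f x) (hc : ∀ x ∈ s, (f x)⁻¹ ≤ c) :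
    LipschitzOnWith (L * (c * c)) (fun x => (f x)⁻¹) s := by
  refine LipschitzOnWith.of_dist_le_mul fun x hx y hy => ?_
  have hx0 := hpos x hx
  have hy0 := hpos y hy
  calc dist (f x)⁻¹ (f y)⁻¹ = dist (f x) (f y) * ((f x)⁻¹ * (f y)⁻¹) := by
        rw [dist_inv_inv₀ hx0.ne' hy0.ne', Real.norm_of_nonneg hx0.le, Real.norm_of_nonneg hy0.le,
          div_eq_mul_inv, mul_inv]
    _ ≤ L * dist x y * (c * c) := by
        gcongr
        exacts [hf.dist_le_mul x hx y hy, hc x hx, hc y hy]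
    _ = ↑(L * (c * c)) * dist x y := by push_cast; ring

omit [MeasurableSpace X] [BorelSpace X] in
lemma isExhaustion_dist [ProperSpace X] (x₀ : X) : IsExhaustion (dist · x₀) (univ : Set X) where
  nonneg _ := dist_nonneg
  continuousOn := by fun_prop
  isCompact_sublevel c := by rw [univ_inter]; exact isCompact_closedBall x₀ c
  exists_lipschitzOnWith _ := ⟨1, (LipschitzWith.dist_left x₀).lipschitzOnWith⟩

omit [MeasurableSpace X] [BorelSpace X] in
lemma isExhaustion_inv_infDist_add_dist [ProperSpace X] (hW : IsOpen W) (hne : Wᶜ.Nonempty)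
    (x₀ : X) : IsExhaustion (fun x => (infDist x Wᶜ)⁻¹ + dist x x₀) W := by
  have hpos {x} : x ∈ W ↔ 0 < infDist x Wᶜ := by
    rw [← hW.isClosed_compl.notMem_iff_infDist_pos hne, notMem_compl_iff]
  refine ⟨fun x => add_nonneg (inv_nonneg.2 infDist_nonneg) dist_nonneg,
    ((continuous_infDist_pt _).continuousOn.inv₀ fun x hx => (hpos.1 hx).ne').add (by fun_prop),
    fun c => ?_, fun c => ?_⟩
  · have hsublevel : W ∩ {x | (infDist x Wᶜ)⁻¹ + dist x x₀ ≤ c} =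
        closedBall x₀ c ∩ {x | 1 ≤ (c - dist x x₀) * infDist x Wᶜ} := by
      ext x
      have h0 : 0 ≤ infDist x Wᶜ := infDist_nonneg
      constructor
      · rintro ⟨hx, hle : _ ≤ c⟩
        have hd := hpos.1 hx
        have hd' := inv_pos.2 hd
        refine ⟨mem_closedBall.2 (by linarith), ?_⟩
        exact (inv_le_iff_one_le_mul₀ hd).1 (le_sub_iff_add_le.2 hle)
      · rintro ⟨-, hle : 1 ≤ (c - dist x x₀) * infDist x Wᶜ⟩
        have hd : 0 < infDist x Wᶜ := h0.lt_of_ne (by rintro h; rw [← h] at hle; linarith)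
        exact ⟨hpos.2 hd, le_sub_iff_add_le.1 ((inv_le_iff_one_le_mul₀ hd).2 hle)⟩
    rw [hsublevel]
    exact (isCompact_closedBall _ _).inter_right (isClosed_le continuous_const
      ((continuous_const.sub (continuous_id.dist continuous_const)).mul (continuous_infDist_pt _)))
  · refine ⟨_, (lipschitzOnWith_inv_of_inv_le (c := c.toNNReal)
      (lipschitz_infDist_pt Wᶜ).lipschitzOnWith (fun x hx => hpos.1 hx.1) fun x hx => ?_).add
      (LipschitzWith.dist_left x₀).lipschitzOnWith⟩
    exact (le_add_of_nonneg_right dist_nonneg).trans (hx.2.trans (Real.le_coe_toNNReal c))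

omit [MeasurableSpace X] [BorelSpace X] in
lemma exists_isExhaustion [ProperSpace X] (hW : IsOpen W) : ∃ τ : X → ℝ, IsExhaustion τ W := by
  rcases isEmpty_or_nonempty X with _ | ⟨⟨x₀⟩⟩
  · have hall (s : Set X) : s = ∅ := s.eq_empty_of_isEmpty
    exact ⟨0, fun _ => le_rfl, continuousOn_const,
      fun c => by rw [hall (_ ∩ _)]; exact isCompact_empty,
      fun c => ⟨0, by rw [hall (_ ∩ _)]; exact lipschitzOnWith_empty _ _⟩⟩
  · rcases Wᶜ.eq_empty_or_nonempty with hW_compl | hW_compl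
    · exact ⟨_, compl_empty_iff.1 hW_compl ▸ isExhaustion_dist x₀⟩
    · exact ⟨_, isExhaustion_inv_infDist_add_dist hW hW_compl x₀⟩

end Exhaustion

/-! ### Gluing along an exhaustion -/

section Glue

/-- The `k`-th layer of an exhaustion. Consecutive layers overlap in `k - 1/4 < τ < k`, where
`cutoff τ (k - 1)` is `1` and `cutoff τ k` is `0`. -/
def layer (τ : X → ℝ) (W : Set X) (k : ℕ) : Set X :=
  W ∩ τ ⁻¹' Ioo ((k : ℝ) - 1 / 4) (k + 1)

/-- The weight with which `glue` passes from the `k`-th to the next function while `τ` increases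
from `k + 1/4` to `k + 3/4`. -/
def cutoff (τ : X → ℝ) (k : ℕ) (x : X) : ℝ := clamp 0 1 (2 * (τ x - k) - 1 / 2)

/-- The function that passes from `ψ k` to `ψ (k + 1)` while `τ` increases from `k` to `k + 1`. -/
def glue (τ : X → ℝ) (ψ : ℕ → X → ℝ) (x : X) : ℝ :=
  blend (cutoff τ ⌊τ x⌋₊) (ψ ⌊τ x⌋₊) (ψ (⌊τ x⌋₊ + 1)) x

/-- An upper gradient of `glue τ ψ` when `ρ` is an upper gradient of each `ψ k` and `τ` is
`L k`-Lipschitz in the `k`-th layer. -/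
def glueGradient (τ : X → ℝ) (W : Set X) (ρ : X → ℝ≥0∞) (ψ : ℕ → X → ℝ) (L : ℕ → ℝ≥0) (x : X) :
    ℝ≥0∞ :=
  ρ x + ∑' k, (layer τ W k).indicator
    (fun x => ENNReal.ofReal |ψ k x - ψ (k + 1) x| * ↑(2 * L k)) x

variable {W : Set X} {τ : X → ℝ} {ψ : ℕ → X → ℝ} {ρ : X → ℝ≥0∞} {w : X → ℝ} {L : ℕ → ℝ≥0} {k : ℕ}

omit [MetricSpace X] [MeasurableSpace X] [BorelSpace X] in
lemma cutoff_mem_Icc (x : X) : cutoff τ k x ∈ Icc 0 1 := clamp_mem_Icc zero_le_one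

omit [MetricSpace X] [MeasurableSpace X] [BorelSpace X] in
lemma layer_subset_sublevel {c : ℝ} (hc : (k : ℝ) + 1 ≤ c) :
    layer τ W k ⊆ W ∩ {x | τ x ≤ c} :=
  fun _ hx => ⟨hx.1, hx.2.2.le.trans hc⟩

omit [MeasurableSpace X] [BorelSpace X] in
lemma lipschitzOnWith_cutoff {s : Set X} {K : ℝ≥0} (h : LipschitzOnWith K τ s) :
    LipschitzOnWith (2 * K) (cutoff τ k) s := by
  refine LipschitzOnWith.of_dist_le_mul fun x hx y hy => ?_
  calc dist (cutoff τ k x) (cutoff τ k y)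
      ≤ dist (2 * (τ x - k) - 1 / 2) (2 * (τ y - k) - 1 / 2) := by
        simpa only [cutoff, NNReal.coe_one, one_mul] using lipschitzWith_clamp.dist_le_mul _ _
    _ = 2 * dist (τ x) (τ y) := by
        simp only [dist_sub_right, Real.dist_eq, ← mul_sub, abs_mul, abs_two,
          sub_sub_sub_cancel_right]
    _ ≤ ↑(2 * K) * dist x y := by
        push_cast
        linarith [h.dist_le_mul x hx y hy]

omit [MetricSpace X] [BorelSpace X] in
lemma aemeasurable_ofReal_abs_sub {μ : Measure X} {f g : X → ℝ} (hf : AEMeasurable f μ)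
    (hg : AEMeasurable g μ) : AEMeasurable (fun x => ENNReal.ofReal |f x - g x|) μ :=
  (hf.sub hg).abs.ennreal_ofReal

namespace IsExhaustion

variable (hτ : IsExhaustion τ W)
include hτ

omit [MeasurableSpace X] [BorelSpace X] in
lemma exists_mem_layer {x : X} (hx : x ∈ W) : ∃ k, x ∈ layer τ W k :=
  ⟨⌊τ x⌋₊, hx, by have := Nat.floor_le (hτ.nonneg x); change _ - _ < _; linarith,
    Nat.lt_floor_add_one _⟩

omit [MeasurableSpace X] [BorelSpace X] in
lemma isOpen_layer (hW : IsOpen W) : IsOpen (layer τ W k) :=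
  hτ.continuousOn.isOpen_inter_preimage hW isOpen_Ioo

omit [MeasurableSpace X] [BorelSpace X] in
lemma glue_eq_blend {x : X} (hx : x ∈ layer τ W k) :
    glue τ ψ x = blend (cutoff τ k) (ψ k) (ψ (k + 1)) x := by
  obtain ⟨-, hx1, hx2⟩ := hx
  rcases le_or_gt (k : ℝ) (τ x) with hk | hk
  · rw [glue, (Nat.floor_eq_iff (hτ.nonneg x)).2 ⟨hk, hx2⟩]
  · obtain ⟨m, rfl⟩ : ∃ m, k = m + 1 :=
      Nat.exists_eq_succ_of_ne_zero (by rintro rfl; exact (hτ.nonneg x).not_gt (by simpa using hk))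
    push_cast at hx1 hk
    have hfloor : ⌊τ x⌋₊ = m :=
      (Nat.floor_eq_iff (hτ.nonneg x)).2 ⟨by linarith, hk⟩
    have hcut_m : cutoff τ m x = 1 := clamp_of_right_le zero_le_one (by linarith)
    have hcut_succ : cutoff τ (m + 1) x = 0 := clamp_of_le_left (by push_cast; linarith)
    simp only [glue, blend, hfloor, hcut_m, hcut_succ]
    ring

omit [MeasurableSpace X] [BorelSpace X] in
lemma locLipOn_glue (hW : IsOpen W) {M : ℝ≥0} {K : ℕ → ℝ≥0}
    (hψ : ∀ k : ℕ, LipschitzOnWith (K k) (ψ k) (W ∩ {x | τ x ≤ k + 1}))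
    (hψM : ∀ k x, ψ k x ∈ Icc 0 (M : ℝ)) : LocLipOn (glue τ ψ) W := by
  intro x hx
  obtain ⟨k, hk⟩ := hτ.exists_mem_layer hx
  obtain ⟨L, hL⟩ := hτ.exists_lipschitzOnWith (k + 1)
  obtain ⟨r, hr, hball⟩ := Metric.isOpen_iff.1 (hτ.isOpen_layer hW) x hk
  have hsub : W ∩ ball x r ⊆ layer τ W k := fun _ hy => hball hy.2
  have hblend : LipschitzOnWith (K k + K (k + 1) + M * (2 * L))
      (blend (cutoff τ k) (ψ k) (ψ (k + 1))) (layer τ W k) := by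
    refine lipschitzOnWith_blend ((hψ k).mono (layer_subset_sublevel le_rfl))
      ((hψ (k + 1)).mono (layer_subset_sublevel (by push_cast; linarith)))
      (lipschitzOnWith_cutoff (hL.mono (layer_subset_sublevel le_rfl)))
      (fun x _ => cutoff_mem_Icc x) fun x _ => ?_
    simpa only [sub_zero] using abs_sub_le_of_le_of_le (hψM (k + 1) x).1 (hψM (k + 1) x).2
      (hψM k x).1 (hψM k x).2
  refine ⟨r, hr, K k + K (k + 1) + M * (2 * L), fun y hy z hz => ?_⟩
  rw [hτ.glue_eq_blend (hsub hy), hτ.glue_eq_blend (hsub hz)]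
  exact hblend (hsub hy) (hsub hz)

lemma isUpperGradientOn_glue (hW : IsOpen W) (hρ : Measurable ρ)
    (hψ : ∀ k : ℕ, IsUpperGradientOn (ψ k) ρ (W ∩ {x | τ x ≤ k + 1}))
    (hL : ∀ k : ℕ, LipschitzOnWith (L k) τ (W ∩ {x | τ x ≤ k + 1})) :
    IsUpperGradientOn (glue τ ψ) (glueGradient τ W ρ ψ L) W := by
  intro γ hγ
  by_cases hfin : γ.integral ρ = ∞
  · have hle : γ.integral ρ ≤ γ.integral (glueGradient τ W ρ ψ L) :=
      γ.integral_mono fun x => le_self_add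
    rw [hfin, top_le_iff] at hle
    rw [UGIneq, hle]
    exact le_top
  refine Curve.ugIneq_of_locally fun t₀ ht₀ => ?_
  obtain ⟨k, hk⟩ := hτ.exists_mem_layer (hγ t₀ ht₀)
  refine ⟨layer τ W k, Curve.eventually_mem_of_isOpen (hτ.isOpen_layer hW) ht₀ hk,
    fun p q hp hq hmem => ?_⟩
  have hcut : IsUpperGradientOn (cutoff τ k) (fun _ => ↑(2 * L k)) (layer τ W k) :=
    isUpperGradientOn_of_lipschitzOnWith
      (lipschitzOnWith_cutoff ((hL k).mono (layer_subset_sublevel le_rfl)))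
  have hconst : γ.integral (fun _ => ↑(2 * L k)) ≠ ∞ := by
    rw [Curve.integral, setLIntegral_const, Real.volume_Icc]
    exact ENNReal.mul_ne_top ENNReal.coe_ne_top ENNReal.ofReal_ne_top
  have hψ₁ : IsUpperGradientOn (ψ k) ρ (layer τ W k) := fun γ' hγ' =>
    hψ k γ' (hγ'.mono (layer_subset_sublevel le_rfl))
  have hψ₂ : IsUpperGradientOn (ψ (k + 1)) ρ (layer τ W k) := fun γ' hγ' =>
    hψ (k + 1) γ' (hγ'.mono (layer_subset_sublevel (by push_cast; linarith)))
  refine ((hψ₁.incrementBound_blend hψ₂ hcut hρ hρ measurable_const hfin hfin hconst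
    (fun x _ => cutoff_mem_Icc x) (fun _ _ => le_rfl) hp hq hmem).congr_left
      fun t ht => (hτ.glue_eq_blend (hmem t ht)).symm).mono_right fun t ht => ?_
  obtain ⟨hcut0, hcut1⟩ := cutoff_mem_Icc (τ := τ) (k := k) (γ.toFun t)
  simp only [Function.comp_apply, blendGradient, glueGradient]
  rw [← add_mul, ← ENNReal.ofReal_add (sub_nonneg.2 hcut1) hcut0, sub_add_cancel,
    ENNReal.ofReal_one, one_mul]
  gcongr
  refine le_trans ?_ (ENNReal.le_tsum k)
  rw [indicator_of_mem (hmem t ht)]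

variable {μ : Measure X}

lemma aemeasurable_indicator_layer (hW : IsOpen W)
    (hψ : ∀ k : ℕ, ContinuousOn (ψ k) (W ∩ {x | τ x ≤ k + 1})) (k : ℕ) :
    AEMeasurable ((layer τ W k).indicator
      fun x => ENNReal.ofReal |ψ k x - ψ (k + 1) x| * ↑(2 * L k)) μ := by
  rw [aemeasurable_indicator_iff (hτ.isOpen_layer hW).measurableSet]
  have hcont : ContinuousOn (fun x => |ψ k x - ψ (k + 1) x|) (layer τ W k) :=
    (((hψ k).mono (layer_subset_sublevel le_rfl)).sub
      ((hψ (k + 1)).mono (layer_subset_sublevel (by push_cast; linarith)))).abs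
  exact (hcont.aemeasurable (hτ.isOpen_layer hW).measurableSet).ennreal_ofReal.mul_const _

lemma aemeasurable_glueGradient (hW : IsOpen W) (hρ : Measurable ρ)
    (hψ : ∀ k : ℕ, ContinuousOn (ψ k) (W ∩ {x | τ x ≤ k + 1})) :
    AEMeasurable (glueGradient τ W ρ ψ L) μ :=
  hρ.aemeasurable.add (AEMeasurable.tsum (hτ.aemeasurable_indicator_layer hW hψ))

lemma lintegral_abs_glue_sub_le (hW : IsOpen W) :
    ∫⁻ x in W, ENNReal.ofReal |glue τ ψ x - w x| ∂μ ≤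
      ∑' k, ∫⁻ x in layer τ W k,
        ENNReal.ofReal |ψ k x - w x| + ENNReal.ofReal |ψ (k + 1) x - w x| ∂μ := by
  calc ∫⁻ x in W, ENNReal.ofReal |glue τ ψ x - w x| ∂μ
      ≤ ∫⁻ x in ⋃ k, layer τ W k, ENNReal.ofReal |glue τ ψ x - w x| ∂μ :=
        lintegral_mono_set fun x hx => mem_iUnion.2 (hτ.exists_mem_layer hx)
    _ ≤ ∑' k, ∫⁻ x in layer τ W k, ENNReal.ofReal |glue τ ψ x - w x| ∂μ :=
        lintegral_iUnion_le _ _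
    _ ≤ _ := by
        refine ENNReal.tsum_le_tsum fun k =>
          setLIntegral_mono' (hτ.isOpen_layer hW).measurableSet fun x hx => ?_
        obtain ⟨h0, h1⟩ := cutoff_mem_Icc (τ := τ) (k := k) x
        rw [hτ.glue_eq_blend hx, ← ENNReal.ofReal_add (abs_nonneg _) (abs_nonneg _)]
        refine ENNReal.ofReal_le_ofReal ((abs_blend_sub_le ⟨h0, h1⟩ _).trans ?_)
        exact add_le_add (mul_le_of_le_one_left (abs_nonneg _) (by linarith))
          (mul_le_of_le_one_left (abs_nonneg _) h1)

lemma lintegral_glueGradient_le (hW : IsOpen W) (hρ : Measurable ρ)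
    (hψ : ∀ k : ℕ, ContinuousOn (ψ k) (W ∩ {x | τ x ≤ k + 1})) :
    ∫⁻ x in W, glueGradient τ W ρ ψ L x ∂μ ≤ ∫⁻ x, ρ x ∂μ + ∑' k, ↑(2 * L k) *
      ∫⁻ x in layer τ W k,
        ENNReal.ofReal |ψ k x - w x| + ENNReal.ofReal |ψ (k + 1) x - w x| ∂μ := by
  simp only [glueGradient]
  rw [lintegral_add_left hρ,
    lintegral_tsum fun k => (hτ.aemeasurable_indicator_layer hW hψ k).restrict]
  refine add_le_add (lintegral_mono' Measure.restrict_le_self le_rfl)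
    (ENNReal.tsum_le_tsum fun k => ?_)
  rw [lintegral_indicator (hτ.isOpen_layer hW).measurableSet,
    lintegral_mul_const' _ _ ENNReal.coe_ne_top, mul_comm,
    Measure.restrict_restrict (hτ.isOpen_layer hW).measurableSet,
    inter_eq_left.2 (show layer τ W k ⊆ W from inter_subset_left)]
  gcongr with x
  rw [← ENNReal.ofReal_add (abs_nonneg _) (abs_nonneg _), abs_sub_comm (ψ (k + 1) x)]
  exact ENNReal.ofReal_le_ofReal (abs_sub_le _ _ _)

lemma lintegral_layer_add_le (hW : IsOpen W) (hw : AEMeasurable w (μ.restrict W))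
    (hψ : ∀ k : ℕ, ContinuousOn (ψ k) (W ∩ {x | τ x ≤ k + 1})) {e : ℕ → ℝ≥0∞}
    (he : ∀ k : ℕ, ∫⁻ x in W ∩ {x | τ x ≤ k + 1}, ENNReal.ofReal |ψ k x - w x| ∂μ ≤ e k) (k : ℕ) :
    ∫⁻ x in layer τ W k, ENNReal.ofReal |ψ k x - w x| + ENNReal.ofReal |ψ (k + 1) x - w x| ∂μ ≤
      e k + e (k + 1) := by
  have hmeas : AEMeasurable (ψ k) (μ.restrict (layer τ W k)) :=
    ((hψ k).mono (layer_subset_sublevel le_rfl)).aemeasurable (hτ.isOpen_layer hW).measurableSet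
  rw [lintegral_add_left' (aemeasurable_ofReal_abs_sub hmeas (hw.mono_set inter_subset_left))]
  refine add_le_add ((lintegral_mono_set (layer_subset_sublevel le_rfl)).trans (he k))
    ((lintegral_mono_set (layer_subset_sublevel ?_)).trans (he (k + 1)))
  push_cast
  linarith

end IsExhaustion

end Glue

section Density

variable {W : Set X} {ρ : X → ℝ≥0∞} {w : X → ℝ} {μ : Measure X} {ε : ℝ≥0∞}

lemma exists_tsum_mul_add_succ_le {a : ℕ → ℝ≥0∞} (ha : ∀ k, a k ≠ ∞) (hε : ε ≠ 0) :
    ∃ e : ℕ → ℝ≥0∞, (∀ k, e k ≠ 0) ∧ ∑' k, a k * (e k + e (k + 1)) ≤ ε := by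
  obtain ⟨e, he, hsum⟩ := ENNReal.exists_pos_tsum_mul_lt_of_countable hε
    (fun k => a k + a (k - 1)) fun k => ENNReal.add_ne_top.2 ⟨ha k, ha (k - 1)⟩
  refine ⟨fun k => e k, fun k => ENNReal.coe_ne_zero.2 (he k).ne', le_trans ?_ hsum.le⟩
  simp only [mul_add, add_mul, ENNReal.tsum_add]
  exact add_le_add le_rfl (ENNReal.tsum_comp_le_tsum_of_injective (add_left_injective 1)
    fun k => a (k - 1) * (e k : ℝ≥0∞))

theorem IsUpperGradientOn.exists_locLipOn_approx [ProperSpace X] [IsLocallyFiniteMeasure μ]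
    (hw : IsUpperGradientOn w ρ W) (hW : IsOpen W) (hρ : LowerSemicontinuous ρ)
    (hρ_pos : ∀ x, 0 < ρ x) {M : ℝ≥0} (hwM : ∀ x ∈ W, w x ∈ Icc 0 (M : ℝ))
    (hw_meas : AEMeasurable w (μ.restrict W)) (hε : ε ≠ 0) :
    ∃ (φ : X → ℝ) (h : X → ℝ≥0∞), LocLipOn φ W ∧ AEMeasurable h μ ∧ IsUpperGradientOn φ h W ∧
      ∫⁻ x in W, ENNReal.ofReal |φ x - w x| ∂μ ≤ ε ∧
      ∫⁻ x in W, h x ∂μ ≤ ∫⁻ x, ρ x ∂μ + ε := by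
  obtain ⟨τ, hτ⟩ := exists_isExhaustion hW
  choose L hL using fun k : ℕ => hτ.exists_lipschitzOnWith (k + 1)
  obtain ⟨e, he, hsum⟩ := exists_tsum_mul_add_succ_le (ε := ε)
    (a := fun k => 1 + ↑(2 * L k)) (fun k => by finiteness) hε
  choose ψ K hψ_lip hψM hψ_grad hψ_approx using fun k : ℕ =>
    IsUpperGradientOn.exists_lipschitzOnWith_lintegral_abs_sub_le (μ := μ)
      (fun γ hγ => hw γ (hγ.mono inter_subset_left)) (hτ.isCompact_sublevel (k + 1)) hρ hρ_pos
      (fun x hx => hwM x hx.1) (hw_meas.mono_set inter_subset_left) (he k)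
  have hψ_cont (k : ℕ) := (hψ_lip k).continuousOn
  have hlayer := hτ.lintegral_layer_add_le hW hw_meas hψ_cont hψ_approx
  refine ⟨glue τ ψ, glueGradient τ W ρ ψ L, hτ.locLipOn_glue hW hψ_lip hψM,
    hτ.aemeasurable_glueGradient hW hρ.measurable hψ_cont,
    hτ.isUpperGradientOn_glue hW hρ.measurable hψ_grad hL,
    (hτ.lintegral_abs_glue_sub_le hW).trans (le_trans (ENNReal.tsum_le_tsum fun k => ?_) hsum),
    (hτ.lintegral_glueGradient_le (w := w) hW hρ.measurable hψ_cont).trans ?_⟩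
  · exact (hlayer k).trans (le_mul_of_one_le_left' le_self_add)
  · gcongr
    refine le_trans (ENNReal.tsum_le_tsum fun k => ?_) hsum
    gcongr
    exacts [le_add_self, hlayer k]

end Density

/-! ### Lower semicontinuity of the total variation along bounded Sobolev functions -/

section TotalVariation

variable {μ : Measure X} {W A : Set X} {u w : X → ℝ} {v v' : ℕ → X → ℝ} {g : X → ℝ≥0∞} {ε : ℝ≥0∞}

omit [MeasurableSpace X] [BorelSpace X] in
lemma LocLipOn.comp_lipschitzWith (h : LocLipOn u W) {T : ℝ → ℝ} {K : ℝ≥0}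
    (hT : LipschitzWith K T) : LocLipOn (T ∘ u) W := fun x hx =>
  let ⟨r, hr, L, hL⟩ := h x hx
  ⟨r, hr, K * L, hT.comp_lipschitzOnWith hL⟩

omit [MeasurableSpace X] [BorelSpace X] in
lemma LocLipOn.continuousOn (h : LocLipOn u W) : ContinuousOn u W := fun x hx =>
  let ⟨_, hr, _, hL⟩ := h x hx
  (continuousWithinAt_inter (ball_mem_nhds x hr)).1 (hL.continuousOn x ⟨hx, mem_ball_self hr⟩)

lemma LocLipOn.aemeasurable (h : LocLipOn u W) (hW : IsOpen W) : AEMeasurable u (μ.restrict W) :=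
  h.continuousOn.aemeasurable hW.measurableSet

omit [BorelSpace X] in
lemma l1LocConv_of_lintegral_le {e : ℕ → ℝ≥0∞} (he : Tendsto e atTop (𝓝 0))
    (hle : ∀ j, ∫⁻ x in A, ENNReal.ofReal |v j x - u x| ∂μ ≤ e j) : L1LocConv μ A v u :=
  fun _ _ => ⟨1, one_pos, tendsto_nhds_bot_mono' he fun j =>
    (lintegral_mono_set inter_subset_left).trans (hle j)⟩

omit [BorelSpace X] in
lemma L1LocConv.of_abs_sub_le_add {v₁ v₂ : ℕ → X → ℝ} {u₁ u₂ : X → ℝ} (h₁ : L1LocConv μ A v₁ u₁)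
    (h₂ : L1LocConv μ A v₂ u₂)
    (hmeas : ∀ j, AEMeasurable (fun x => ENNReal.ofReal |v₁ j x - u₁ x|) (μ.restrict A))
    (hle : ∀ j x, |v j x - u x| ≤ |v₁ j x - u₁ x| + |v₂ j x - u₂ x|) : L1LocConv μ A v u := by
  intro x hx
  obtain ⟨r₁, hr₁, hlim₁⟩ := h₁ x hx
  obtain ⟨r₂, hr₂, hlim₂⟩ := h₂ x hx
  have hlim := hlim₁.add hlim₂
  rw [add_zero] at hlim
  refine ⟨min r₁ r₂, lt_min hr₁ hr₂, tendsto_nhds_bot_mono' hlim fun j => ?_⟩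
  calc ∫⁻ y in A ∩ ball x (min r₁ r₂), ENNReal.ofReal |v j y - u y| ∂μ
      ≤ ∫⁻ y in A ∩ ball x (min r₁ r₂),
          ENNReal.ofReal |v₁ j y - u₁ y| + ENNReal.ofReal |v₂ j y - u₂ y| ∂μ := by
        gcongr with y
        rw [← ENNReal.ofReal_add (abs_nonneg _) (abs_nonneg _)]
        exact ENNReal.ofReal_le_ofReal (hle j y)
    _ = ∫⁻ y in A ∩ ball x (min r₁ r₂), ENNReal.ofReal |v₁ j y - u₁ y| ∂μ +
          ∫⁻ y in A ∩ ball x (min r₁ r₂), ENNReal.ofReal |v₂ j y - u₂ y| ∂μ :=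
        lintegral_add_left' ((hmeas j).mono_set inter_subset_left) _
    _ ≤ _ := by
        gcongr
        · exact min_le_left _ _
        · exact min_le_right _ _

omit [BorelSpace X] in
lemma L1LocConv.of_lintegral_abs_sub_le (h : L1LocConv μ A v u) {e : ℕ → ℝ≥0∞}
    (he : Tendsto e atTop (𝓝 0))
    (hmeas : ∀ j, AEMeasurable (fun x => ENNReal.ofReal |v' j x - v j x|) (μ.restrict A))
    (hle : ∀ j, ∫⁻ x in A, ENNReal.ofReal |v' j x - v j x| ∂μ ≤ e j) : L1LocConv μ A v' u := by
  have hdiff : L1LocConv μ A (fun j x => v' j x - v j x) 0 :=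
    l1LocConv_of_lintegral_le he (by simpa only [Pi.zero_apply, sub_zero] using hle)
  refine hdiff.of_abs_sub_le_add h (by simpa only [Pi.zero_apply, sub_zero] using hmeas)
    fun j x => ?_
  rw [Pi.zero_apply, sub_zero]
  exact abs_sub_le _ _ _

omit [BorelSpace X] in
lemma L1LocConv.mono (h : L1LocConv μ A v u) {B : Set X} (hBA : B ⊆ A) : L1LocConv μ B v u :=
  fun x hx =>
    let ⟨r, hr, hlim⟩ := h x (hBA hx)
    ⟨r, hr, tendsto_nhds_bot_mono' hlim fun _ =>
      lintegral_mono_set (inter_subset_inter_left _ hBA)⟩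

omit [BorelSpace X] in
lemma L1LocConv.comp_tendsto (h : L1LocConv μ A v u) {k : ℕ → ℕ} (hk : Tendsto k atTop atTop) :
    L1LocConv μ A (fun n => v (k n)) u := fun x hx =>
  let ⟨r, hr, hlim⟩ := h x hx
  ⟨r, hr, hlim.comp hk⟩

variable [ProperSpace X] {Cd CP lam : ℝ}

namespace IsWeakUpperGradientOn

lemma aemeasurable (hg : IsWeakUpperGradientOn μ w g W) (hd : Doubling μ Cd)
    (hp : Poincare μ CP lam) (hW : IsOpen W) {M : ℝ} (hM : ∀ x ∈ W, |w x| ≤ M)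
    (hfin : ∫⁻ x in W, g x ∂μ ≠ ∞) : AEMeasurable w (μ.restrict W) := by
  have := hd.isLocallyFiniteMeasure
  obtain ⟨ρ, hρ, -, hρ_le, hwρ⟩ := hg.exists_lowerSemicontinuous one_ne_zero
  exact hwρ.aemeasurable hd hp hρ
    (hρ_le.trans_lt (ENNReal.add_lt_top.2 ⟨hfin.lt_top, ENNReal.one_lt_top⟩)) hW hM

lemma exists_locLipOn_isMinimalWUG (hg : IsWeakUpperGradientOn μ w g W) (hd : Doubling μ Cd)
    (hp : Poincare μ CP lam) (hW : IsOpen W) {M : ℝ≥0} (hM : ∀ x ∈ W, |w x| ≤ M)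
    (hfin : ∫⁻ x in W, g x ∂μ ≠ ∞) (hε : ε ≠ 0) (hε' : ε ≠ ∞) :
    ∃ (φ : X → ℝ) (m : X → ℝ≥0∞), LocLipOn φ W ∧ IsMinimalWUG μ φ m W ∧
      ∫⁻ x in W, ENNReal.ofReal |φ x - w x| ∂μ ≤ ε ∧
      ∫⁻ x in W, m x ∂μ ≤ ∫⁻ x in W, g x ∂μ + ε + ε := by
  have := hd.isLocallyFiniteMeasure
  obtain ⟨ρ, hρ, hρ_pos, hρ_le, hwρ⟩ := hg.exists_lowerSemicontinuous hε
  have hshift (c : ℝ) : LipschitzWith 1 (· + c) := (isometry_add_right c).lipschitz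
  obtain ⟨φ, h, hφ, hh, hφh, hφw, hh_le⟩ := IsUpperGradientOn.exists_locLipOn_approx (μ := μ)
    (w := (· + (M : ℝ)) ∘ w) (M := 2 * M) (fun γ hγ => (hwρ γ hγ).comp_lipschitzWith (hshift M))
    hW hρ hρ_pos
    (fun x hx => by
      have := abs_le.1 (hM x hx)
      simp only [Function.comp_apply, mem_Icc, NNReal.coe_mul, NNReal.coe_ofNat]
      constructor <;> linarith)
    ((hg.aemeasurable hd hp hW hM hfin).add_const _) hε
  have hφh' : IsUpperGradientOn ((· + (-M : ℝ)) ∘ φ) h W := fun γ hγ =>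
    (hφh γ hγ).comp_lipschitzWith (hshift (-M))
  have hh_le' : ∫⁻ x in W, h x ∂μ ≤ ∫⁻ x in W, g x ∂μ + ε + ε := hh_le.trans (by gcongr)
  obtain ⟨m, hm, hm_le⟩ := (hφh'.isWeakUpperGradientOn hh).exists_isMinimalWUG
    (hh_le'.trans_lt (by finiteness))
  refine ⟨_, m, hφ.comp_lipschitzWith (hshift (-M)), hm, ?_, hm_le.trans hh_le'⟩
  simpa only [Function.comp_apply, ← sub_eq_add_neg, sub_sub, add_comm] using hφw

end IsWeakUpperGradientOn

lemma tvOpen_le_of_l1LocConv (hd : Doubling μ Cd) (hp : Poincare μ CP lam) (hW : IsOpen W)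
    {g : ℕ → X → ℝ≥0∞} {M : ℕ → ℝ≥0} (hM : ∀ j, ∀ x ∈ W, |v j x| ≤ M j)
    (hg : ∀ j, IsWeakUpperGradientOn μ (v j) (g j) W) {β : ℝ≥0∞} (hβ : β ≠ ∞)
    (hg_le : ∀ j, ∫⁻ x in W, g j x ∂μ ≤ β) (hconv : L1LocConv μ W v u) :
    tvOpen μ W u ≤ β := by
  let e : ℕ → ℝ≥0∞ := fun j => ((j + 1 : ℕ) : ℝ≥0∞)⁻¹
  have he_lim : Tendsto e atTop (𝓝 0) :=
    (tendsto_add_atTop_iff_nat 1).2 ENNReal.tendsto_inv_nat_nhds_zero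
  have hfin (j : ℕ) : ∫⁻ x in W, g j x ∂μ ≠ ∞ := ne_top_of_le_ne_top hβ (hg_le j)
  choose φ m hφ hm hφv hm_le using fun j =>
    (hg j).exists_locLipOn_isMinimalWUG hd hp hW (hM j) (hfin j) (ε := e j)
      (ENNReal.inv_ne_zero.2 (by finiteness)) (ENNReal.inv_ne_top.2 (by simp))
  have hφu : L1LocConv μ W φ u := hconv.of_lintegral_abs_sub_le he_lim
    (fun j => aemeasurable_ofReal_abs_sub ((hφ j).aemeasurable hW)
      ((hg j).aemeasurable hd hp hW (hM j) (hfin j))) hφv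
  have hlim : Tendsto (fun j => β + e j + e j) atTop (𝓝 β) := by
    simpa only [add_zero] using ((tendsto_const_nhds (x := β)).add he_lim).add he_lim
  calc tvOpen μ W u ≤ liminf (fun j => ∫⁻ x in W, m j x ∂μ) atTop :=
        iInf_le_of_le φ <| iInf_le_of_le m <| iInf_le_of_le hφ <| iInf_le_of_le hm <|
          iInf_le_of_le hφu le_rfl
    _ ≤ liminf (fun j => β + e j + e j) atTop :=
        liminf_le_liminf (.of_forall fun j => (hm_le j).trans (by gcongr; exact hg_le j))
    _ = β := hlim.liminf_eq

lemma exists_strictMono_forall_lt_of_liminf_lt {F : ℕ → ℝ≥0∞} {a : ℝ≥0∞}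
    (h : liminf F atTop < a) : ∃ k : ℕ → ℕ, StrictMono k ∧ ∀ n, F (k n) < a :=
  extraction_of_frequently_atTop (frequently_lt_of_liminf_lt (by isBoundedDefault) h)

lemma tvOpen_le_liminf_of_l1LocConv (hd : Doubling μ Cd) (hp : Poincare μ CP lam) (hW : IsOpen W)
    {g : ℕ → X → ℝ≥0∞} {M : ℕ → ℝ≥0} (hM : ∀ j, ∀ x ∈ W, |v j x| ≤ M j)
    (hg : ∀ j, IsWeakUpperGradientOn μ (v j) (g j) W) (hconv : L1LocConv μ W v u) :
    tvOpen μ W u ≤ liminf (fun j => ∫⁻ x in W, g j x ∂μ) atTop := by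
  refine le_of_forall_gt_imp_ge_of_dense fun β hβ => ?_
  rcases eq_or_ne β ∞ with rfl | hβ_top
  · exact le_top
  obtain ⟨k, hk, hk_lt⟩ := exists_strictMono_forall_lt_of_liminf_lt hβ
  exact tvOpen_le_of_l1LocConv hd hp hW (fun j => hM (k j)) (fun j => hg (k j)) hβ_top
    (fun j => (hk_lt j).le) (hconv.comp_tendsto hk.tendsto_atTop)

end TotalVariation

/-! ### Capacitary cutoffs and quasiopen sets -/

/-- `η` is a test function for the `1`-capacity of `G`, truncated to `[0, 1]`, with upper gradient
`ρ`; both `η` and `ρ` have integral at most `ε`. -/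
structure IsCapacityCutoff (μ : Measure X) (G : Set X) (ε : ℝ≥0∞) (η : X → ℝ) (ρ : X → ℝ≥0∞) :
    Prop where
  mem_Icc : ∀ x, η x ∈ Icc (0 : ℝ) 1
  eq_one : ∀ x ∈ G, η x = 1
  aemeasurable : AEMeasurable η μ
  measurable_gradient : Measurable ρ
  isUpperGradientOn : IsUpperGradientOn η ρ univ
  lintegral_le : ∫⁻ x, ENNReal.ofReal (η x) ∂μ ≤ ε
  lintegral_gradient_le : ∫⁻ x, ρ x ∂μ ≤ ε

/-- `U` is `1`-path open: along `1`-almost every curve, the times at which the curve is in `U` form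
a relatively open set. -/
def PathOpen (μ : Measure X) (U : Set X) : Prop :=
  ∀ᶠ γ in aeCurve μ, ∀ t₀ ∈ Icc 0 γ.len, γ.toFun t₀ ∈ U →
    ∀ᶠ t in 𝓝[Icc 0 γ.len] t₀, γ.toFun t ∈ U

lemma pathOpen_of_isOpen {μ : Measure X} {U : Set X} (hU : IsOpen U) : PathOpen μ U :=
  .of_forall fun _ _ ht₀ h => Curve.eventually_mem_of_isOpen hU ht₀ h

section Capacity

variable {μ : Measure X} {U G Ω : Set X} {u : X → ℝ} {ε : ℝ≥0∞}

omit [BorelSpace X] in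
lemma exists_lintegral_add_lintegral_lt_of_nnorm_univ_lt (h : NNorm μ univ u < ε) :
    ∃ g, IsWeakUpperGradientOn μ u g univ ∧
      ∫⁻ x, ENNReal.ofReal |u x| ∂μ + ∫⁻ x, g x ∂μ < ε := by
  by_contra! hcon
  refine h.not_ge ?_
  rw [NNorm, Measure.restrict_univ, ← tsub_le_iff_left]
  exact le_iInf₂ fun g hg => tsub_le_iff_left.2 (hcon g hg)

variable [ProperSpace X] {Cd CP lam : ℝ}

lemma exists_isCapacityCutoff_of_capa1_lt (hd : Doubling μ Cd) (hp : Poincare μ CP lam)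
    (h : capa1 μ G < ε) : ∃ η ρ, IsCapacityCutoff μ G ε η ρ := by
  have := hd.isLocallyFiniteMeasure
  simp only [capa1, iInf_lt_iff] at h
  obtain ⟨u, -, hu_one, hu_lt⟩ := h
  obtain ⟨g, hg, hlt⟩ := exists_lintegral_add_lintegral_lt_of_nnorm_univ_lt hu_lt
  obtain ⟨δ, hδ, hlt⟩ := ENNReal.lt_iff_exists_add_pos_lt.1 hlt
  obtain ⟨ρ, hρ, -, hρ_le, huρ⟩ := hg.exists_lowerSemicontinuous (ENNReal.coe_ne_zero.2 hδ.ne')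
  rw [Measure.restrict_univ] at hρ_le
  rw [add_assoc] at hlt
  have hρ_lt : ∫⁻ x, ρ x ∂μ < ε := (hρ_le.trans le_add_self).trans_lt hlt
  have hmem (x : X) : clamp 0 1 (u x) ∈ Icc (0 : ℝ) 1 := clamp_mem_Icc zero_le_one
  have hηρ : IsUpperGradientOn (clamp 0 1 ∘ u) ρ univ := fun γ hγ =>
    (huρ γ hγ).comp_lipschitzWith lipschitzWith_clamp
  have hη : AEMeasurable (clamp 0 1 ∘ u) (μ.restrict univ) :=
    hηρ.aemeasurable hd hp hρ (hρ_lt.trans_le le_top) isOpen_univ (M := 1) fun x _ =>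
      abs_le.2 ⟨(neg_nonpos.2 zero_le_one).trans (hmem x).1, (hmem x).2⟩
  rw [Measure.restrict_univ] at hη
  refine ⟨_, ρ, hmem, fun x hx => clamp_of_right_le zero_le_one (hu_one x hx), hη, hρ.measurable,
    hηρ, ?_, hρ_lt.le⟩
  calc ∫⁻ x, ENNReal.ofReal (clamp 0 1 (u x)) ∂μ ≤ ∫⁻ x, ENNReal.ofReal |u x| ∂μ := by
        gcongr with x
        exact max_le (abs_nonneg _) ((min_le_right _ _).trans (le_abs_self _))
    _ ≤ ε := le_self_add.trans hlt.le

lemma QuasiOpen.exists_isCapacityCutoff (hU : QuasiOpen μ U) (hd : Doubling μ Cd)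
    (hp : Poincare μ CP lam) :
    ∃ (G : ℕ → Set X) (η : ℕ → X → ℝ) (ρ : ℕ → X → ℝ≥0∞), (∀ j, IsOpen (G j)) ∧
      (∀ j, IsOpen (U ∪ G j)) ∧ ∀ j, IsCapacityCutoff μ (G j) (4⁻¹ ^ j) (η j) (ρ j) := by
  have hquarter (j : ℕ) : ENNReal.ofReal (4⁻¹ ^ j) = 4⁻¹ ^ j := by
    rw [ENNReal.ofReal_pow (by norm_num), ENNReal.ofReal_inv_of_pos (by norm_num),
      ENNReal.ofReal_ofNat]
  choose G hG hG_lt hUG using fun j : ℕ => hU (4⁻¹ ^ j) (by positivity)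
  simp only [hquarter] at hG_lt
  choose η ρ hη using fun j => exists_isCapacityCutoff_of_capa1_lt hd hp (hG_lt j)
  exact ⟨G, η, ρ, hG, hUG, hη⟩

end Capacity

namespace IsCapacityCutoff

section Single

variable {μ : Measure X} {U G Ω : Set X} {η : X → ℝ} {ε : ℝ≥0∞} {ρ : X → ℝ≥0∞}

omit [BorelSpace X] in
lemma mono_set (h : IsCapacityCutoff μ G ε η ρ) {G' : Set X} (hG : G' ⊆ G) :
    IsCapacityCutoff μ G' ε η ρ :=
  { h with eq_one := fun x hx => h.eq_one x (hG hx) }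

omit [BorelSpace X] in
lemma measure_le (h : IsCapacityCutoff μ G ε η ρ) : μ G ≤ ε := by
  calc μ G ≤ μ {x | 1 ≤ ENNReal.ofReal (η x)} :=
        measure_mono fun x hx => by simp [h.eq_one x hx]
    _ ≤ ∫⁻ x, ENNReal.ofReal (η x) ∂μ := by
        simpa using mul_meas_ge_le_lintegral₀ h.aemeasurable.ennreal_ofReal 1
    _ ≤ ε := h.lintegral_le

omit [BorelSpace X] in
lemma half_mul_len_le (h : IsCapacityCutoff μ G ε η ρ) {γ : Curve X}
    (hγ : γ.integral ρ ≤ ENNReal.ofReal 2⁻¹) {t₀ : ℝ} (ht₀ : t₀ ∈ Icc 0 γ.len)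
    (hG : γ.toFun t₀ ∈ G) :
    ENNReal.ofReal 2⁻¹ * ENNReal.ofReal γ.len ≤ γ.integral fun x => ENNReal.ofReal (η x) := by
  have hbound : IncrementBound (η ∘ γ.toFun) (ρ ∘ γ.toFun) 0 γ.len :=
    h.isUpperGradientOn.incrementBound le_rfl le_rfl fun _ _ => mem_univ _
  have hincr {s t : ℝ} (hs : 0 ≤ s) (hst : s ≤ t) (ht : t ≤ γ.len) :
      |η (γ.toFun s) - η (γ.toFun t)| ≤ 2⁻¹ := by
    refine (ENNReal.ofReal_le_ofReal_iff (by norm_num)).1 ((hbound s t hs hst ht).trans ?_)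
    rw [Curve.integral_eq_setLIntegral_Ioc] at hγ
    exact (lintegral_mono_set (Ioc_subset_Ioc hs ht)).trans hγ
  have hη_ge (t : ℝ) (ht : t ∈ Icc 0 γ.len) : 2⁻¹ ≤ η (γ.toFun t) := by
    have hone := h.eq_one _ hG
    rcases le_total t₀ t with htt | htt
    · linarith [abs_le.1 (hincr ht₀.1 htt ht.2)]
    · linarith [abs_le.1 (hincr ht.1 htt ht₀.2)]
  calc ENNReal.ofReal 2⁻¹ * ENNReal.ofReal γ.len
      = ∫⁻ _ in Icc 0 γ.len, ENNReal.ofReal 2⁻¹ := by simp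
    _ ≤ γ.integral fun x => ENNReal.ofReal (η x) :=
        setLIntegral_mono' measurableSet_Icc fun t ht => ENNReal.ofReal_le_ofReal (hη_ge t ht)

lemma isWeakUpperGradientOn_blend (h : IsCapacityCutoff μ G ε η ρ) (hε : ε ≠ ∞) (hG : IsOpen G)
    (hU : PathOpen μ U) (hΩ : IsOpen Ω) (hUΩ : U ⊆ Ω) {v φ : X → ℝ} {ρv ρφ c : X → ℝ≥0∞}
    (hv : IsUpperGradientOn v ρv U) (hφ : IsUpperGradientOn φ ρφ Ω) (hρv : Measurable ρv)
    (hρφ : Measurable ρφ) (hc : AEMeasurable c μ) (hv_fin : ∫⁻ x, ρv x ∂μ ≠ ∞)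
    (hφ_fin : ∫⁻ x, ρφ x ∂μ ≠ ∞) (hle : ∀ x ∈ U, ENNReal.ofReal |v x - φ x| ≤ c x) :
    IsWeakUpperGradientOn μ (blend η v φ) (blendGradient η c ρv ρφ ρ) (U ∪ (G ∩ Ω)) := by
  refine isWeakUpperGradientOn_iff.2 ⟨?_, ?_⟩
  · exact (((h.aemeasurable.const_sub 1).ennreal_ofReal.mul hρv.aemeasurable).add
      (h.aemeasurable.ennreal_ofReal.mul hρφ.aemeasurable)).add
      (hc.mul h.measurable_gradient.aemeasurable)
  filter_upwards [hU, eventually_aeCurve_integral_ne_top hρv.aemeasurable hv_fin,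
    eventually_aeCurve_integral_ne_top hρφ.aemeasurable hφ_fin,
    eventually_aeCurve_integral_ne_top h.measurable_gradient.aemeasurable
      (ne_top_of_le_ne_top hε h.lintegral_gradient_le)] with γ hγU hγv hγφ hγρ hγ
  refine Curve.ugIneq_of_locally fun t₀ ht₀ => ?_
  by_cases hmem : γ.toFun t₀ ∈ U
  · refine ⟨U, hγU t₀ ht₀ hmem, fun p q hp hq hin => ?_⟩
    exact hv.incrementBound_blend (fun γ hγ => hφ γ (hγ.mono hUΩ))
      (fun γ _ => h.isUpperGradientOn γ fun _ _ => mem_univ _) hρv hρφ h.measurable_gradient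
      hγv hγφ hγρ (fun x _ => h.mem_Icc x) hle hp hq hin
  · refine ⟨G ∩ Ω, Curve.eventually_mem_of_isOpen (hG.inter hΩ) ht₀
      ((hγ t₀ ht₀).resolve_left hmem), fun p q hp hq hin => ?_⟩
    refine ((hφ.incrementBound hp hq fun t ht => (hin t ht).2).congr_left fun t ht => ?_).mono_right
      fun t ht => ?_
    · simp [blend, h.eq_one _ (hin t ht).1]
    · simp [blendGradient, h.eq_one _ (hin t ht).1]

end Single

section Sequence

variable {μ : Measure X} {U : Set X} {G : ℕ → Set X} {η : ℕ → X → ℝ} {ρ : ℕ → X → ℝ≥0∞}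
  {ε : ℕ → ℝ≥0∞}

omit [BorelSpace X] in
lemma ae_tendsto_zero (h : ∀ j, IsCapacityCutoff μ (G j) (ε j) (η j) (ρ j))
    (hε : ∑' j, ε j ≠ ∞) : ∀ᵐ x ∂μ, Tendsto (fun j => η j x) atTop (𝓝 0) := by
  have hmeas (j : ℕ) : AEMeasurable (fun x => ENNReal.ofReal (η j x)) μ :=
    (h j).aemeasurable.ennreal_ofReal
  have hfin : ∫⁻ x, ∑' j, ENNReal.ofReal (η j x) ∂μ ≠ ∞ := by
    rw [lintegral_tsum hmeas]
    exact ne_top_of_le_ne_top hε (ENNReal.tsum_le_tsum fun j => (h j).lintegral_le)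
  filter_upwards [ae_lt_top' (AEMeasurable.tsum hmeas) hfin] with x hx
  have hlim := (ENNReal.tendsto_toReal ENNReal.zero_ne_top).comp
    (ENNReal.tendsto_atTop_zero_of_tsum_ne_top hx.ne)
  exact hlim.congr fun j => ENNReal.toReal_ofReal ((h j).mem_Icc x).1

lemma pathOpen (h : ∀ j, IsCapacityCutoff μ (G j) (ε j) (η j) (ρ j)) (hε : ∑' j, ε j ≠ ∞)
    (hUG : ∀ j, IsOpen (U ∪ G j)) : PathOpen μ U := by
  let a : ℕ → X → ℝ≥0∞ := fun j x => ρ j x + ENNReal.ofReal (η j x)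
  have ha (j : ℕ) : AEMeasurable (a j) μ :=
    (h j).measurable_gradient.aemeasurable.add (h j).aemeasurable.ennreal_ofReal
  have ha_fin : ∫⁻ x, ∑' j, a j x ∂μ ≠ ∞ := by
    have hle (j : ℕ) : ∫⁻ x, a j x ∂μ ≤ ε j + ε j := by
      rw [lintegral_add_left (h j).measurable_gradient]
      exact add_le_add (h j).lintegral_gradient_le (h j).lintegral_le
    rw [lintegral_tsum ha]
    refine ne_top_of_le_ne_top ?_ (ENNReal.tsum_le_tsum hle)
    rw [ENNReal.tsum_add]
    finiteness
  filter_upwards [eventually_aeCurve_integral_ne_top (AEMeasurable.tsum ha) ha_fin,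
    eventually_countable_forall.2 fun j => eventually_aeCurve_aemeasurable_comp (ha j)]
    with γ hγ hγa t₀ ht₀ hmem
  rcases γ.len_nonneg.eq_or_lt with hlen | hlen
  · rw [← hlen, Icc_self] at ht₀ ⊢
    rw [ht₀, nhdsWithin_singleton] at *
    exact hmem
  have hsum : ∑' j, γ.integral (a j) ≠ ∞ := by
    simp only [Curve.integral_eq_setLIntegral_Ioc] at hγ ⊢
    exact lintegral_tsum hγa ▸ hγ
  have hpos : 0 < min (ENNReal.ofReal 2⁻¹) (ENNReal.ofReal 2⁻¹ * ENNReal.ofReal γ.len) :=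
    lt_min (by simp) (ENNReal.mul_pos (by simp) (by simpa using hlen))
  obtain ⟨j, hj⟩ :=
    ((ENNReal.tendsto_atTop_zero_of_tsum_ne_top hsum).eventually_lt_const hpos).exists
  obtain ⟨hjρ, hjη⟩ := lt_min_iff.1 hj
  have havoid (t : ℝ) (ht : t ∈ Icc 0 γ.len) : γ.toFun t ∉ G j := fun hGt =>
    ((h j).half_mul_len_le ((γ.integral_mono fun _ => le_self_add).trans hjρ.le) ht hGt).not_gt
      ((γ.integral_mono fun _ => le_add_self).trans_lt hjη)
  filter_upwards [Curve.eventually_mem_of_isOpen (hUG j) ht₀ (.inl hmem), self_mem_nhdsWithin]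
    with t ht htI using ht.resolve_right (havoid t htI)

lemma nullMeasurableSet (h : ∀ j, IsCapacityCutoff μ (G j) (ε j) (η j) (ρ j))
    (hε : Tendsto ε atTop (𝓝 0)) (hUG : ∀ j, IsOpen (U ∪ G j)) : NullMeasurableSet U μ := by
  have hnull : μ (⋂ j, G j) = 0 := le_antisymm
    (ge_of_tendsto' hε fun j => (measure_mono (iInter_subset G j)).trans (h j).measure_le) bot_le
  have hmeas : MeasurableSet (⋂ j, (U ∪ G j)) := .iInter fun j => (hUG j).measurableSet
  refine hmeas.nullMeasurableSet.congr ?_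
  rw [← union_iInter]
  exact union_ae_eq_left_of_ae_eq_empty (ae_eq_empty.2 hnull)

end Sequence

end IsCapacityCutoff

/-! ### Truncated approximations -/

section Truncate

variable {M : ℝ≥0} {s : ℝ}

/-- The truncation of `s` to the interval `[-M, M]`. -/
def truncate (M : ℝ≥0) (s : ℝ) : ℝ := clamp (-M) M s

lemma abs_truncate_le : |truncate M s| ≤ M :=
  abs_le.2 (clamp_mem_Icc (neg_le_self M.coe_nonneg))

lemma truncate_of_abs_le (h : |s| ≤ M) : truncate M s = s := by
  rw [truncate, clamp, min_eq_right (abs_le.1 h).2, max_eq_right (abs_le.1 h).1]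

lemma lipschitzWith_truncate : LipschitzWith 1 (truncate M) := lipschitzWith_clamp

lemma abs_truncate_sub_truncate_le (s t : ℝ) : |truncate M s - truncate M t| ≤ |s - t| := by
  simpa only [Real.dist_eq, NNReal.coe_one, one_mul] using
    (lipschitzWith_truncate (M := M)).dist_le_mul s t

lemma abs_truncate_sub_self_le (s : ℝ) : |truncate M s - s| ≤ |s| + |s| := by
  have hzero : truncate M 0 = 0 := truncate_of_abs_le (by simp)
  have hle := abs_truncate_sub_truncate_le (M := M) s 0
  rw [hzero, sub_zero, sub_zero] at hle
  exact (abs_sub _ _).trans (by gcongr)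

lemma tendsto_truncate {M : ℕ → ℝ≥0} (hM : Tendsto M atTop atTop) (s : ℝ) :
    Tendsto (fun n => truncate (M n) s) atTop (𝓝 s) := by
  refine tendsto_const_nhds.congr' ?_
  filter_upwards [(NNReal.tendsto_coe_atTop.2 hM).eventually_ge_atTop |s|] with n hn
  exact (truncate_of_abs_le hn).symm

end Truncate

section L1Loc

variable {μ : Measure X} {A B : Set X} {u : X → ℝ} {v : ℕ → X → ℝ} {M : ℕ → ℝ≥0}

omit [BorelSpace X] in
lemma MemL1Loc.mono (h : MemL1Loc μ A u) (hBA : B ⊆ A) : MemL1Loc μ B u :=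
  ⟨h.1.mono_set hBA, fun x hx =>
    let ⟨r, hr, hlt⟩ := h.2 x (hBA hx)
    ⟨r, hr, (lintegral_mono_set (inter_subset_inter_left _ hBA)).trans_lt hlt⟩⟩

omit [BorelSpace X] in
lemma MemL1Loc.aemeasurable_truncate_sub (h : MemL1Loc μ A u) (M : ℝ≥0) :
    AEMeasurable (fun x => ENNReal.ofReal |truncate M (u x) - u x|) (μ.restrict A) :=
  aemeasurable_ofReal_abs_sub
    (lipschitzWith_truncate.continuous.measurable.comp_aemeasurable h.1) h.1

omit [BorelSpace X] in
lemma MemL1Loc.l1LocConv_truncate (h : MemL1Loc μ A u) (hM : Tendsto M atTop atTop) :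
    L1LocConv μ A (fun n => truncate (M n) ∘ u) u := by
  intro x hx
  obtain ⟨r, hr, hlt⟩ := h.2 x hx
  have hfin : ∫⁻ y in A ∩ ball x r, ENNReal.ofReal (|u y| + |u y|) ∂μ ≠ ∞ := by
    have hmeas : AEMeasurable (fun y => ENNReal.ofReal |u y|) (μ.restrict (A ∩ ball x r)) :=
      h.1.abs.ennreal_ofReal.mono_set inter_subset_left
    simp only [ENNReal.ofReal_add (abs_nonneg _) (abs_nonneg _)]
    rw [lintegral_add_left' hmeas]
    finiteness
  have hlim := tendsto_lintegral_of_dominated_convergence' (f := fun _ => 0)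
    (fun y => ENNReal.ofReal (|u y| + |u y|))
    (fun n => (h.aemeasurable_truncate_sub (M n)).mono_set inter_subset_left)
    (fun n => ae_of_all _ fun y => ENNReal.ofReal_le_ofReal (abs_truncate_sub_self_le _)) hfin
    (ae_of_all _ fun y => by
      simpa using ENNReal.tendsto_ofReal (((tendsto_truncate hM (u y)).sub_const (u y)).abs))
  rw [lintegral_zero] at hlim
  exact ⟨r, hr, hlim⟩

omit [BorelSpace X] in
lemma L1LocConv.truncate (h : L1LocConv μ A v u) (hu : MemL1Loc μ A u)
    (hM : Tendsto M atTop atTop) : L1LocConv μ A (fun n => truncate (M n) ∘ v n) u :=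
  (hu.l1LocConv_truncate hM).of_abs_sub_le_add h (fun n => hu.aemeasurable_truncate_sub (M n))
    fun n x => (abs_sub_le _ (PaperBV.truncate (M n) (u x)) _).trans <| by
      rw [add_comm]
      exact add_le_add_right (abs_truncate_sub_truncate_le _ _) _

end L1Loc

/-- `v i → u` in `L¹_loc(A)`, and `ρ i` is a Borel upper gradient of `v i` in `A` with integral over
the whole space at most `a`. -/
structure IsSobolevApprox (μ : Measure X) (A : Set X) (u : X → ℝ) (v : ℕ → X → ℝ)
    (ρ : ℕ → X → ℝ≥0∞) (a : ℝ≥0∞) : Prop where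
  l1LocConv : L1LocConv μ A v u
  isUpperGradientOn : ∀ i, IsUpperGradientOn (v i) (ρ i) A
  measurable_gradient : ∀ i, Measurable (ρ i)
  lintegral_gradient_le : ∀ i, ∫⁻ x, ρ i x ∂μ ≤ a

namespace IsSobolevApprox

variable {μ : Measure X} {A B : Set X} {u : X → ℝ} {v : ℕ → X → ℝ} {ρ : ℕ → X → ℝ≥0∞} {a : ℝ≥0∞}

omit [BorelSpace X] in
lemma mono_set (h : IsSobolevApprox μ A u v ρ a) (hBA : B ⊆ A) : IsSobolevApprox μ B u v ρ a :=
  { h with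
    l1LocConv := h.l1LocConv.mono hBA
    isUpperGradientOn := fun i γ hγ => h.isUpperGradientOn i γ (hγ.mono hBA) }

omit [BorelSpace X] in
lemma comp_tendsto (h : IsSobolevApprox μ A u v ρ a) {k : ℕ → ℕ} (hk : Tendsto k atTop atTop) :
    IsSobolevApprox μ A u (fun n => v (k n)) (fun n => ρ (k n)) a where
  l1LocConv := h.l1LocConv.comp_tendsto hk
  isUpperGradientOn n := h.isUpperGradientOn (k n)
  measurable_gradient n := h.measurable_gradient (k n)
  lintegral_gradient_le n := h.lintegral_gradient_le (k n)

omit [BorelSpace X] in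
lemma truncate (h : IsSobolevApprox μ A u v ρ a) (hu : MemL1Loc μ A u) {M : ℕ → ℝ≥0}
    (hM : Tendsto M atTop atTop) :
    IsSobolevApprox μ A u (fun n => truncate (M n) ∘ v n) ρ a :=
  { h with
    l1LocConv := h.l1LocConv.truncate hu hM
    isUpperGradientOn := fun n γ hγ =>
      (h.isUpperGradientOn n γ hγ).comp_lipschitzWith lipschitzWith_truncate }

end IsSobolevApprox

section ExistsApprox

variable {μ : Measure X} [SigmaFinite μ] [μ.WeaklyRegular] {A Ω : Set X} {u : X → ℝ} {a : ℝ≥0∞}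

lemma exists_isSobolevApprox_of_liminf_lt {v : ℕ → X → ℝ} {g : ℕ → X → ℝ≥0∞}
    (hg : ∀ i, IsWeakUpperGradientOn μ (v i) (g i) A) (hconv : L1LocConv μ A v u)
    (h : liminf (fun i => ∫⁻ x in A, g i x ∂μ) atTop < a) :
    ∃ v' ρ, IsSobolevApprox μ A u v' ρ a := by
  obtain ⟨b, hb, hba⟩ := exists_between h
  obtain ⟨δ, hδ, hbδ⟩ := ENNReal.lt_iff_exists_add_pos_lt.1 hba
  obtain ⟨k, hk, hk_lt⟩ := exists_strictMono_forall_lt_of_liminf_lt hb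
  choose ρ hρ _ hρ_le hvρ using fun n =>
    (hg (k n)).exists_lowerSemicontinuous (ENNReal.coe_ne_zero.2 hδ.ne')
  exact ⟨fun n => v (k n), ρ, hconv.comp_tendsto hk.tendsto_atTop, hvρ, fun n => (hρ n).measurable,
    fun n => (hρ_le n).trans ((add_le_add_left (hk_lt n).le _).trans hbδ.le)⟩

lemma exists_isSobolevApprox_of_tvOpen_lt (h : tvOpen μ Ω u < a) :
    ∃ φ ρ, IsSobolevApprox μ Ω u φ ρ a := by
  simp only [tvOpen, iInf_lt_iff] at h
  obtain ⟨v, g, -, hg, hconv, hlt⟩ := h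
  exact exists_isSobolevApprox_of_liminf_lt (fun i => (hg i).1) hconv hlt

end ExistsApprox

/-! ### Removing a set of small capacity -/

namespace IsCapacityCutoff

section Single

variable {μ : Measure X} {U G A : Set X} {η v : X → ℝ} {ε : ℝ≥0∞} {ρ ρv : X → ℝ≥0∞} {M : ℝ≥0}

omit [BorelSpace X] in
lemma ofReal_one_sub_le_one (h : IsCapacityCutoff μ G ε η ρ) (x : X) :
    ENNReal.ofReal (1 - η x) ≤ 1 :=
  ENNReal.ofReal_le_one.2 (sub_le_self _ (h.mem_Icc x).1)

omit [BorelSpace X] in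
lemma abs_blend_le (h : IsCapacityCutoff μ G ε η ρ) {f₁ f₂ : X → ℝ} {x : X} (h₁ : |f₁ x| ≤ M)
    (h₂ : |f₂ x| ≤ M) : |blend η f₁ f₂ x| ≤ M := by
  have hle := abs_blend_sub_le (f₁ := f₁) (f₂ := f₂) (h.mem_Icc x) 0
  simp only [sub_zero] at hle
  nlinarith [(h.mem_Icc x).1, (h.mem_Icc x).2]

lemma isWeakUpperGradientOn_blend_truncate_zero (h : IsCapacityCutoff μ G ε η ρ) (hε : ε ≠ ∞)
    (hG : IsOpen G) (hU : PathOpen μ U) (hv : IsUpperGradientOn v ρv U) (hρv : Measurable ρv)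
    (hfin : ∫⁻ x, ρv x ∂μ ≠ ∞) :
    IsWeakUpperGradientOn μ (blend η (truncate M ∘ v) 0) (blendGradient η (fun _ => M) ρv 0 ρ)
      (U ∪ G) := by
  have hzero : IsUpperGradientOn (0 : X → ℝ) 0 univ := fun γ _ => by simp [UGIneq]
  have hblend := h.isWeakUpperGradientOn_blend (c := fun _ => M) hε hG hU isOpen_univ
    (subset_univ U) (fun γ hγ => (hv γ hγ).comp_lipschitzWith (lipschitzWith_truncate (M := M)))
    hzero hρv measurable_zero aemeasurable_const hfin (by simp) fun x _ => by
      rw [Pi.zero_apply, sub_zero, ← ENNReal.ofReal_coe_nnreal]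
      exact ENNReal.ofReal_le_ofReal abs_truncate_le
  rwa [inter_univ] at hblend

omit [BorelSpace X] in
lemma setLIntegral_blendGradient_zero_le (h : IsCapacityCutoff μ G ε η ρ) (hρv : Measurable ρv) :
    ∫⁻ x in A, blendGradient η (fun _ => M) ρv 0 ρ x ∂μ ≤
      ∫⁻ x in A, ENNReal.ofReal (1 - η x) * ρv x ∂μ + M * ε := by
  have hmeas : AEMeasurable (fun x => ENNReal.ofReal (1 - η x) * ρv x) (μ.restrict A) :=
    ((h.aemeasurable.const_sub 1).ennreal_ofReal.mul hρv.aemeasurable).restrict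
  simp only [blendGradient, Pi.zero_apply, mul_zero, add_zero]
  rw [lintegral_add_left' hmeas, lintegral_const_mul _ h.measurable_gradient]
  gcongr
  exact (setLIntegral_le_lintegral _ _).trans h.lintegral_gradient_le

omit [BorelSpace X] in
lemma setLIntegral_one_sub_mul_add (h : IsCapacityCutoff μ G ε η ρ) (hρv : Measurable ρv) :
    ∫⁻ x in A, ENNReal.ofReal (1 - η x) * ρv x ∂μ + ∫⁻ x in A, ENNReal.ofReal (η x) * ρv x ∂μ =
      ∫⁻ x in A, ρv x ∂μ := by
  have hmeas : AEMeasurable (fun x => ENNReal.ofReal (1 - η x) * ρv x) (μ.restrict A) :=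
    ((h.aemeasurable.const_sub 1).ennreal_ofReal.mul hρv.aemeasurable).restrict
  rw [← lintegral_add_left' hmeas]
  refine lintegral_congr fun x => ?_
  rw [← add_mul, ← ENNReal.ofReal_add (sub_nonneg.2 (h.mem_Icc x).2) (h.mem_Icc x).1,
    sub_add_cancel, ENNReal.ofReal_one, one_mul]

end Single

section Sequence

variable {μ : Measure X} [ProperSpace X] {Cd CP lam : ℝ} {U Ω : Set X} {G : ℕ → Set X}
  {η : ℕ → X → ℝ} {ρ : ℕ → X → ℝ≥0∞} {ε : ℕ → ℝ≥0∞}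

lemma aemeasurable_of_isUpperGradientOn (h : ∀ j, IsCapacityCutoff μ (G j) (ε j) (η j) (ρ j))
    (hd : Doubling μ Cd) (hp : Poincare μ CP lam) (hε : ∑' j, ε j ≠ ∞) (hG : ∀ j, IsOpen (G j))
    (hUG : ∀ j, IsOpen (U ∪ G j)) {v : X → ℝ} {ρv : X → ℝ≥0∞} (hv : IsUpperGradientOn v ρv U)
    (hρv : Measurable ρv) (hfin : ∫⁻ x, ρv x ∂μ ≠ ∞) : AEMeasurable v (μ.restrict U) := by
  have htrunc (M : ℕ) : AEMeasurable (truncate M ∘ v) (μ.restrict U) := by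
    have hdamped (j : ℕ) : AEMeasurable (blend (η j) (truncate M ∘ v) 0) (μ.restrict U) := by
      have hεj : ε j ≠ ∞ := ENNReal.ne_top_of_tsum_ne_top hε j
      have hgrad :
          ∫⁻ x in U ∪ G j, blendGradient (η j) (fun _ => (M : ℝ≥0)) ρv 0 (ρ j) x ∂μ ≠ ∞ := by
        refine ne_top_of_le_ne_top ?_ ((h j).setLIntegral_blendGradient_zero_le hρv)
        refine ENNReal.add_ne_top.2 ⟨ne_top_of_le_ne_top hfin ?_, by finiteness⟩
        exact (setLIntegral_le_lintegral _ _).trans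
          (lintegral_mono fun x => mul_le_of_le_one_left zero_le ((h j).ofReal_one_sub_le_one x))
      exact ((h j).isWeakUpperGradientOn_blend_truncate_zero hεj (hG j) (pathOpen h hε hUG) hv hρv
        hfin).aemeasurable hd hp (hUG j) (fun x _ => (h j).abs_blend_le abs_truncate_le (by simp))
        hgrad |>.mono_set subset_union_left
    refine aemeasurable_of_tendsto_metrizable_ae atTop hdamped ?_
    filter_upwards [ae_restrict_of_ae (ae_tendsto_zero h hε)] with x hx
    simpa [blend] using (hx.const_sub 1).mul_const (truncate M (v x))
  exact aemeasurable_of_tendsto_metrizable_ae' htrunc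
    (ae_of_all _ fun x => tendsto_truncate tendsto_natCast_atTop_atTop (v x))

variable {u : X → ℝ} {φ : ℕ → X → ℝ} {ρφ : ℕ → X → ℝ≥0∞} {M : ℕ → ℝ≥0} {b : ℝ≥0∞}

omit [BorelSpace X] [ProperSpace X] in
lemma l1LocConv_blend_truncate_zero (h : ∀ j, IsCapacityCutoff μ (G j) (ε j) (η j) (ρ j))
    (hu : MemL1Loc μ Ω u) (hφ : L1LocConv μ Ω φ u) (hM : Tendsto M atTop atTop)
    (hMε : Tendsto (fun j => M j * ε j) atTop (𝓝 0)) :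
    L1LocConv μ Ω (fun j => blend (η j) (truncate (M j) ∘ φ j) 0) u := by
  have hMη : L1LocConv μ Ω (fun j x => M j * η j x) 0 := by
    refine l1LocConv_of_lintegral_le hMε fun j => ?_
    have habs (x : X) : ENNReal.ofReal |M j * η j x - (0 : X → ℝ) x| =
        M j * ENNReal.ofReal (η j x) := by
      rw [Pi.zero_apply, sub_zero, abs_of_nonneg (mul_nonneg (M j).coe_nonneg ((h j).mem_Icc x).1),
        ENNReal.ofReal_mul (M j).coe_nonneg, ENNReal.ofReal_coe_nnreal]
    simp only [habs]
    rw [lintegral_const_mul'' _ (h j).aemeasurable.ennreal_ofReal.restrict]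
    gcongr
    exact (setLIntegral_le_lintegral _ _).trans (h j).lintegral_le
  refine hMη.of_abs_sub_le_add (hφ.truncate hu hM) (fun j => aemeasurable_ofReal_abs_sub
    ((h j).aemeasurable.const_mul _).restrict aemeasurable_const) fun j x => ?_
  have hη0 : 0 ≤ η j x := ((h j).mem_Icc x).1
  have hle : |truncate (M j) (φ j x)| ≤ M j := abs_truncate_le
  calc |blend (η j) (truncate (M j) ∘ φ j) 0 x - u x|
      = |-(truncate (M j) (φ j x) * η j x) + (truncate (M j) (φ j x) - u x)| := by
        simp only [blend, Function.comp_apply, Pi.zero_apply]; ring_nf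
    _ ≤ |truncate (M j) (φ j x)| * η j x + |truncate (M j) (φ j x) - u x| := by
        rw [← abs_of_nonneg hη0, ← abs_mul, abs_of_nonneg hη0, ← abs_neg (_ * _)]
        exact abs_add_le _ _
    _ ≤ |M j * η j x - 0| + |truncate (M j) (φ j x) - u x| := by
        rw [sub_zero, abs_of_nonneg (mul_nonneg (M j).coe_nonneg hη0)]
        gcongr

lemma tvOpen_le_liminf (h : ∀ j, IsCapacityCutoff μ (G j) (ε j) (η j) (ρ j)) (hd : Doubling μ Cd)
    (hp : Poincare μ CP lam) (hε : ∀ j, ε j ≠ ∞) (hΩ : IsOpen Ω) (hu : MemL1Loc μ Ω u)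
    (hφ : IsSobolevApprox μ Ω u φ ρφ b) (hb : b ≠ ∞) (hM : Tendsto M atTop atTop)
    (hMε : Tendsto (fun j => M j * ε j) atTop (𝓝 0)) :
    tvOpen μ Ω u ≤
      liminf (fun j => ∫⁻ x in Ω, ENNReal.ofReal (1 - η j x) * ρφ j x ∂μ) atTop := by
  have hweak (j : ℕ) : IsWeakUpperGradientOn μ (blend (η j) (truncate (M j) ∘ φ j) 0)
      (blendGradient (η j) (fun _ => M j) (ρφ j) 0 (ρ j)) Ω := by
    have hblend := ((h j).mono_set (empty_subset _)).isWeakUpperGradientOn_blend_truncate_zero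
      (M := M j) (hε j) isOpen_empty (pathOpen_of_isOpen hΩ) (hφ.isUpperGradientOn j)
      (hφ.measurable_gradient j) (ne_top_of_le_ne_top hb (hφ.lintegral_gradient_le j))
    rwa [union_empty] at hblend
  calc tvOpen μ Ω u
      ≤ liminf (fun j => ∫⁻ x in Ω, blendGradient (η j) (fun _ => M j) (ρφ j) 0 (ρ j) x ∂μ) atTop :=
        tvOpen_le_liminf_of_l1LocConv hd hp hΩ
          (fun j x _ => (h j).abs_blend_le abs_truncate_le (by simp)) hweak
          (l1LocConv_blend_truncate_zero h hu hφ.l1LocConv hM hMε)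
    _ ≤ liminf (fun j => ∫⁻ x in Ω, ENNReal.ofReal (1 - η j x) * ρφ j x ∂μ + M j * ε j) atTop :=
        liminf_le_liminf (.of_forall fun j =>
          (h j).setLIntegral_blendGradient_zero_le (hφ.measurable_gradient j))
    _ = _ := ENNReal.liminf_add_of_right_tendsto_zero hMε _

-- If almost minimal gradients kept a definite mass on the supports of the cutoffs, damping them
-- there would produce approximations of `u` with less energy than the total variation.
lemma exists_eventually_setLIntegral_mul_le
    (h : ∀ j, IsCapacityCutoff μ (G j) (ε j) (η j) (ρ j)) (hd : Doubling μ Cd)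
    (hp : Poincare μ CP lam) (hε : ∀ j, ε j ≠ ∞) (hΩ : IsOpen Ω) (hu : MemL1Loc μ Ω u)
    (htv : tvOpen μ Ω u ≠ ∞) {s t : ℝ≥0∞} (hts : t < s)
    (hφ : IsSobolevApprox μ Ω u φ ρφ (tvOpen μ Ω u + t)) (hM : Tendsto M atTop atTop)
    (hMε : Tendsto (fun j => M j * ε j) atTop (𝓝 0)) :
    ∃ j, ∀ᶠ i in atTop, ∫⁻ x in Ω, ENNReal.ofReal (η j x) * ρφ i x ∂μ ≤ s := by
  by_contra! hlarge
  choose k hks hk using fun j => ((hlarge j).and_eventually (eventually_ge_atTop j)).exists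
  have hs : s ≤ tvOpen μ Ω u + t := (hks 0).le.trans <| le_add_self.trans <|
    ((h 0).setLIntegral_one_sub_mul_add (hφ.measurable_gradient _)).le.trans <|
      (setLIntegral_le_lintegral _ _).trans (hφ.lintegral_gradient_le _)
  have htop : tvOpen μ Ω u + t ≠ ∞ := ENNReal.add_ne_top.2 ⟨htv, hts.ne_top⟩
  have hdamped (j : ℕ) :
      ∫⁻ x in Ω, ENNReal.ofReal (1 - η j x) * ρφ (k j) x ∂μ ≤ tvOpen μ Ω u + t - s := by
    refine ENNReal.le_sub_of_add_le_right (ne_top_of_le_ne_top htop hs) ?_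
    calc _ ≤ ∫⁻ x in Ω, ENNReal.ofReal (1 - η j x) * ρφ (k j) x ∂μ +
            ∫⁻ x in Ω, ENNReal.ofReal (η j x) * ρφ (k j) x ∂μ := by gcongr; exact (hks j).le
      _ = ∫⁻ x in Ω, ρφ (k j) x ∂μ := (h j).setLIntegral_one_sub_mul_add (hφ.measurable_gradient _)
      _ ≤ _ := (setLIntegral_le_lintegral _ _).trans (hφ.lintegral_gradient_le _)
  have hle : tvOpen μ Ω u ≤ tvOpen μ Ω u + t - s := by
    refine (tvOpen_le_liminf h hd hp hε hΩ hu
      (hφ.comp_tendsto (tendsto_atTop_mono hk tendsto_id)) htop hM hMε).trans ?_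
    exact (liminf_le_liminf (.of_forall hdamped)).trans (liminf_const _).le
  have := add_le_of_le_tsub_right_of_le hs hle
  exact hts.not_ge ((ENNReal.add_le_add_iff_left htv).1 this)

end Sequence

end IsCapacityCutoff

/-! ### Gluing along a capacitary cutoff -/

section BoundedConvergence

variable {f : ℕ → X → ℝ≥0∞} {ρ : X → ℝ≥0∞} {C : ℝ≥0∞}

omit [MetricSpace X] [BorelSpace X] in
lemma tendsto_setLIntegral_compl_zero {ν : Measure X} (hρ : Measurable ρ)
    (hρ_fin : ∫⁻ x, ρ x ∂ν ≠ ∞) {E : ℕ → Set X} (hE : ∀ n, MeasurableSet (E n))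
    (hmem : ∀ᵐ x ∂ν, ∀ᶠ n in atTop, x ∈ E n) :
    Tendsto (fun n => ∫⁻ x in (E n)ᶜ, ρ x ∂ν) atTop (𝓝 0) := by
  have hlim : Tendsto (fun n => ∫⁻ x, (E n)ᶜ.indicator ρ x ∂ν) atTop (𝓝 (∫⁻ _, 0 ∂ν)) := by
    refine tendsto_lintegral_of_dominated_convergence ρ (fun n => hρ.indicator (hE n).compl)
      (fun n => ae_of_all _ fun x => indicator_le_self _ _ _) hρ_fin ?_
    filter_upwards [hmem] with x hx
    refine tendsto_const_nhds.congr' ?_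
    filter_upwards [hx] with n hn
    rw [indicator_of_notMem (notMem_compl_iff.2 hn)]
  rw [lintegral_zero] at hlim
  exact hlim.congr fun n => lintegral_indicator (hE n).compl _

omit [MetricSpace X] [BorelSpace X] in
lemma tendsto_lintegral_mul_zero {ν : Measure X} (hC : C ≠ ∞) (hf : ∀ i x, f i x ≤ C)
    {S : ℕ → Set X} (hS : ∀ k, MeasurableSet (S k)) (hcover : ∀ᵐ x ∂ν, ∃ k, x ∈ S k)
    (hlim : ∀ k, Tendsto (fun i => ∫⁻ x in S k, f i x ∂ν) atTop (𝓝 0)) (hρ : Measurable ρ)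
    (hρ_fin : ∫⁻ x, ρ x ∂ν ≠ ∞) : Tendsto (fun i => ∫⁻ x, f i x * ρ x ∂ν) atTop (𝓝 0) := by
  let E (n : ℕ) : Set X := {x | ρ x ≤ n} ∩ ⋃ k : Fin n, S k
  have hE (n : ℕ) : MeasurableSet (E n) :=
    (measurableSet_le hρ measurable_const).inter (.iUnion fun k => hS k)
  have hmem : ∀ᵐ x ∂ν, ∀ᶠ n in atTop, x ∈ E n := by
    filter_upwards [hcover, ae_lt_top hρ hρ_fin] with x ⟨k, hk⟩ hx
    obtain ⟨N, hN⟩ := ENNReal.exists_nat_gt hx.ne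
    filter_upwards [eventually_ge_atTop N, eventually_gt_atTop k] with n hNn hkn
    exact ⟨hN.le.trans (by exact_mod_cast hNn), mem_iUnion.2 ⟨⟨k, hkn⟩, hk⟩⟩
  have hcore (n i : ℕ) :
      ∫⁻ x in E n, f i x * ρ x ∂ν ≤ n * ∑ k : Fin n, ∫⁻ x in S k, f i x ∂ν :=
    calc ∫⁻ x in E n, f i x * ρ x ∂ν ≤ ∫⁻ x in E n, n * f i x ∂ν :=
          setLIntegral_mono' (hE n) fun x hx => by rw [mul_comm]; gcongr; exact hx.1
      _ = n * ∫⁻ x in E n, f i x ∂ν := lintegral_const_mul' _ _ (ENNReal.natCast_ne_top n)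
      _ ≤ n * ∑ k : Fin n, ∫⁻ x in S k, f i x ∂ν := by
          gcongr
          refine (lintegral_mono_set inter_subset_right).trans ((lintegral_iUnion_le _ _).trans ?_)
          rw [tsum_fintype]
  have hcore_lim (n : ℕ) :
      Tendsto (fun i => n * ∑ k : Fin n, ∫⁻ x in S k, f i x ∂ν) atTop (𝓝 0) := by
    simpa using ENNReal.Tendsto.const_mul
      (tendsto_finsetSum Finset.univ fun (k : Fin n) _ => hlim k)
      (Or.inr (ENNReal.natCast_ne_top n))
  have htail : Tendsto (fun n => C * ∫⁻ x in (E n)ᶜ, ρ x ∂ν) atTop (𝓝 0) := by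
    simpa using ENNReal.Tendsto.const_mul (tendsto_setLIntegral_compl_zero hρ hρ_fin hE hmem)
      (Or.inr hC)
  refine ENNReal.tendsto_nhds_zero.2 fun ε hε => ?_
  have hε2 : 0 < ε / 2 := ENNReal.half_pos hε.ne'
  obtain ⟨n, hn⟩ := (ENNReal.tendsto_nhds_zero.1 htail _ hε2).exists
  filter_upwards [ENNReal.tendsto_nhds_zero.1 (hcore_lim n) _ hε2] with i hi
  rw [← lintegral_add_compl _ (hE n), ← ENNReal.add_halves ε]
  refine add_le_add ((hcore n i).trans hi) (le_trans ?_ hn)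
  rw [← lintegral_const_mul' _ _ hC]
  exact lintegral_mono fun x => by gcongr; exact hf i x

variable {μ : Measure X} {U : Set X} {v : ℕ → X → ℝ} {u : X → ℝ}

lemma L1LocConv.tendsto_setLIntegral_mul_zero [SecondCountableTopology X] (h : L1LocConv μ U v u)
    (hU : NullMeasurableSet U μ) (hC : C ≠ ∞) (hv : ∀ i x, ENNReal.ofReal |v i x - u x| ≤ C)
    (hρ : Measurable ρ) (hρ_fin : ∫⁻ x, ρ x ∂μ ≠ ∞) :
    Tendsto (fun i => ∫⁻ x in U, ENNReal.ofReal |v i x - u x| * ρ x ∂μ) atTop (𝓝 0) := by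
  rcases U.eq_empty_or_nonempty with rfl | hne
  · simp
  choose! R hR hlim using h
  obtain ⟨t, htU, ht, hcover⟩ := TopologicalSpace.countable_cover_nhdsWithin (s := U)
    (f := fun x => ball x (R x)) fun x hx => mem_nhdsWithin_of_mem_nhds (ball_mem_nhds x (hR x hx))
  have ht_ne : t.Nonempty := by
    obtain ⟨x, hx⟩ := hne
    obtain ⟨y, hy, -⟩ := mem_iUnion₂.1 (hcover hx)
    exact ⟨y, hy⟩
  obtain ⟨c, rfl⟩ := ht.exists_eq_range ht_ne
  refine tendsto_lintegral_mul_zero hC hv (S := fun k => ball (c k) (R (c k)))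
    (fun k => measurableSet_ball) ?_ (fun k => ?_) hρ
    (ne_top_of_le_ne_top hρ_fin (setLIntegral_le_lintegral _ _))
  · filter_upwards [ae_restrict_mem₀ hU] with x hx
    simpa using hcover hx
  · simp only [Measure.restrict_restrict measurableSet_ball]
    simpa only [inter_comm] using hlim (c k) (htU (mem_range_self k))

lemma tendsto_setLIntegral_truncate_sub_mul_zero [SecondCountableTopology X] {φ : ℕ → X → ℝ}
    (hU : NullMeasurableSet U μ) (hu : AEMeasurable u (μ.restrict U))
    (hv_meas : ∀ i, AEMeasurable (v i) (μ.restrict U)) (hv : L1LocConv μ U v u)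
    (hφ : L1LocConv μ U φ u) (hρ : Measurable ρ) (hρ_fin : ∫⁻ x, ρ x ∂μ ≠ ∞) (M : ℝ≥0) :
    Tendsto (fun i => ∫⁻ x in U,
      ENNReal.ofReal |truncate M (v i x) - truncate M (φ i x)| * ρ x ∂μ) atTop (𝓝 0) := by
  have hdiff : L1LocConv μ U (fun i x => truncate M (v i x) - truncate M (φ i x)) 0 := by
    refine hv.of_abs_sub_le_add hφ (fun i => aemeasurable_ofReal_abs_sub (hv_meas i) hu)
      fun i x => ?_
    rw [Pi.zero_apply, sub_zero, abs_sub_comm (φ i x)]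
    exact (abs_truncate_sub_truncate_le _ _).trans (abs_sub_le _ _ _)
  have hbound (i : ℕ) (x : X) : ENNReal.ofReal
      |truncate M (v i x) - truncate M (φ i x) - (0 : X → ℝ) x| ≤ ENNReal.ofReal (M + M) := by
    rw [Pi.zero_apply, sub_zero]
    exact ENNReal.ofReal_le_ofReal
      ((abs_sub _ _).trans (add_le_add abs_truncate_le abs_truncate_le))
  simpa only [Pi.zero_apply, sub_zero] using
    hdiff.tendsto_setLIntegral_mul_zero hU ENNReal.ofReal_ne_top hbound hρ hρ_fin

end BoundedConvergence

namespace IsCapacityCutoff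

variable {μ : Measure X} {U G Ω : Set X} {ε : ℝ≥0∞} {η u : X → ℝ} {ρ : X → ℝ≥0∞}

lemma setLIntegral_abs_blend_sub_eq (h : IsCapacityCutoff μ G ε η ρ) (hG : IsOpen G) {A : Set X}
    (hA : A ⊆ G) (f₁ f₂ : X → ℝ) :
    ∫⁻ x in A, ENNReal.ofReal |blend η f₁ f₂ x - u x| ∂μ =
      ∫⁻ x in A, ENNReal.ofReal |f₂ x - u x| ∂μ := by
  refine lintegral_congr_ae ?_
  filter_upwards [ae_restrict_of_ae_restrict_of_subset hA (ae_restrict_mem hG.measurableSet)]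
    with x hx
  rw [blend, h.eq_one x hx, sub_self, zero_mul, zero_add, one_mul]

variable {v φ : ℕ → X → ℝ}

omit [BorelSpace X] in
lemma l1LocConv_blend (h : IsCapacityCutoff μ G ε η ρ) (hu : AEMeasurable u (μ.restrict U))
    (hv_meas : ∀ i, AEMeasurable (v i) (μ.restrict U)) (hv : L1LocConv μ U v u)
    (hφ : L1LocConv μ U φ u) : L1LocConv μ U (fun i => blend η (v i) (φ i)) u := by
  refine hv.of_abs_sub_le_add hφ (fun i => aemeasurable_ofReal_abs_sub (hv_meas i) hu) fun i x => ?_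
  obtain ⟨hη0, hη1⟩ := h.mem_Icc x
  refine (abs_blend_sub_le (h.mem_Icc x) (u x)).trans (add_le_add ?_ ?_)
  · exact mul_le_of_le_one_left (abs_nonneg _) (sub_le_self _ hη0)
  · exact mul_le_of_le_one_left (abs_nonneg _) hη1

lemma l1LocConv_blend_union (h : IsCapacityCutoff μ G ε η ρ) (hG : IsOpen G) (hUΩ : U ⊆ Ω)
    (hu : AEMeasurable u (μ.restrict U)) (hv_meas : ∀ i, AEMeasurable (v i) (μ.restrict U))
    (hv : L1LocConv μ U v u) (hφ : L1LocConv μ Ω φ u) :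
    L1LocConv μ (U ∪ (G ∩ Ω)) (fun i => blend η (v i) (φ i)) u := by
  have hsub : U ∪ (G ∩ Ω) ⊆ Ω := union_subset hUΩ inter_subset_right
  intro x hx
  obtain ⟨r, hr, hlim⟩ := hφ x (hsub hx)
  by_cases hxG : x ∈ G
  · obtain ⟨r', hr', hball⟩ := Metric.isOpen_iff.1 hG x hxG
    refine ⟨min r r', lt_min hr hr', tendsto_nhds_bot_mono' hlim fun i => ?_⟩
    have hA : (U ∪ (G ∩ Ω)) ∩ ball x (min r r') ⊆ G :=
      inter_subset_right.trans ((ball_subset_ball (min_le_right _ _)).trans hball)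
    exact (h.setLIntegral_abs_blend_sub_eq hG hA _ _).le.trans
      (lintegral_mono_set (inter_subset_inter hsub (ball_subset_ball (min_le_left _ _))))
  · have hxU : x ∈ U := hx.resolve_right fun hxGΩ => hxG hxGΩ.1
    obtain ⟨r', hr', hlim'⟩ := h.l1LocConv_blend hu hv_meas hv (hφ.mono hUΩ) x hxU
    have hsum := hlim'.add hlim
    rw [add_zero] at hsum
    refine ⟨min r r', lt_min hr hr', tendsto_nhds_bot_mono' hsum fun i => ?_⟩
    rw [union_inter_distrib_right]
    refine (lintegral_union_le _ _ _).trans (add_le_add ?_ ?_)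
    · exact lintegral_mono_set (inter_subset_inter_right _ (ball_subset_ball (min_le_right _ _)))
    · have hA : G ∩ Ω ∩ ball x (min r r') ⊆ G := inter_subset_left.trans inter_subset_left
      exact (h.setLIntegral_abs_blend_sub_eq hG hA _ _).le.trans (lintegral_mono_set
        (inter_subset_inter inter_subset_right (ball_subset_ball (min_le_left _ _))))

omit [BorelSpace X] in
lemma setLIntegral_blendGradient_indicator_le (h : IsCapacityCutoff μ G ε η ρ)
    (hU : NullMeasurableSet U μ) {W : Set X} (hW : W ⊆ Ω) {ρv ρφ c : X → ℝ≥0∞}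
    (hρv : Measurable ρv) (hρφ : Measurable ρφ) :
    ∫⁻ x in W, blendGradient η (U.indicator c) ρv ρφ ρ x ∂μ ≤
      ∫⁻ x, ρv x ∂μ + ∫⁻ x in Ω, ENNReal.ofReal (η x) * ρφ x ∂μ + ∫⁻ x in U, c x * ρ x ∂μ := by
  have hmeas_v : AEMeasurable (fun x => ENNReal.ofReal (1 - η x) * ρv x) (μ.restrict W) :=
    ((h.aemeasurable.const_sub 1).ennreal_ofReal.mul hρv.aemeasurable).restrict
  have hmeas_φ : AEMeasurable (fun x => ENNReal.ofReal (η x) * ρφ x) (μ.restrict W) :=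
    (h.aemeasurable.ennreal_ofReal.mul hρφ.aemeasurable).restrict
  simp only [blendGradient]
  rw [lintegral_add_left' (hmeas_v.fun_add hmeas_φ), lintegral_add_left' hmeas_v]
  refine add_le_add (add_le_add ?_ (lintegral_mono_set hW)) ?_
  · exact (setLIntegral_le_lintegral _ _).trans
      (lintegral_mono fun x => mul_le_of_le_one_left zero_le (h.ofReal_one_sub_le_one x))
  · simp only [← indicator_mul_left U c ρ]
    rw [← lintegral_indicator₀ hU]
    exact setLIntegral_le_lintegral _ _

lemma tv_le_add [ProperSpace X] {Cd CP lam : ℝ} (h : IsCapacityCutoff μ G ε η ρ)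
    (hd : Doubling μ Cd) (hp : Poincare μ CP lam) (hε : ε ≠ ∞) (hG : IsOpen G)
    (hUG : IsOpen (U ∪ G)) (hU : PathOpen μ U) (hU_meas : NullMeasurableSet U μ) (hΩ : IsOpen Ω)
    (hUΩ : U ⊆ Ω) (hu : AEMeasurable u (μ.restrict U)) {ρv ρφ : ℕ → X → ℝ≥0∞} {a b s t : ℝ≥0∞}
    (hv : IsSobolevApprox μ U u v ρv a) (hφ : IsSobolevApprox μ Ω u φ ρφ b) (ha : a ≠ ∞)
    (hb : b ≠ ∞) (hs : s ≠ ∞) (ht : t ≠ ∞) {M : ℕ → ℝ≥0} (hv_le : ∀ i x, |v i x| ≤ M i)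
    (hφ_le : ∀ i x, |φ i x| ≤ M i) (hv_meas : ∀ i, AEMeasurable (v i) (μ.restrict U))
    (hφ_meas : ∀ i, AEMeasurable (φ i) (μ.restrict U))
    (hφ_small : ∀ i, ∫⁻ x in Ω, ENNReal.ofReal (η x) * ρφ i x ∂μ ≤ s)
    (hdiff_small : ∀ i, ∫⁻ x in U, ENNReal.ofReal |v i x - φ i x| * ρ x ∂μ ≤ t) :
    tv μ U u ≤ a + s + t := by
  have hW : IsOpen (U ∪ (G ∩ Ω)) := by
    rw [union_inter_distrib_left, union_eq_right.2 hUΩ]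
    exact hUG.inter hΩ
  let c (i : ℕ) (x : X) : ℝ≥0∞ := ENNReal.ofReal |v i x - φ i x|
  have hc (i : ℕ) : AEMeasurable (U.indicator (c i)) μ :=
    (aemeasurable_indicator_iff₀ hU_meas).2 (aemeasurable_ofReal_abs_sub (hv_meas i) (hφ_meas i))
  have hweak (i : ℕ) : IsWeakUpperGradientOn μ (blend η (v i) (φ i))
      (blendGradient η (U.indicator (c i)) (ρv i) (ρφ i) ρ) (U ∪ (G ∩ Ω)) :=
    h.isWeakUpperGradientOn_blend hε hG hU hΩ hUΩ (hv.isUpperGradientOn i)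
      (hφ.isUpperGradientOn i) (hv.measurable_gradient i) (hφ.measurable_gradient i) (hc i)
      (ne_top_of_le_ne_top ha (hv.lintegral_gradient_le i))
      (ne_top_of_le_ne_top hb (hφ.lintegral_gradient_le i))
      fun x hx => (indicator_of_mem hx (c i)).ge
  have henergy (i : ℕ) : ∫⁻ x in U ∪ (G ∩ Ω),
      blendGradient η (U.indicator (c i)) (ρv i) (ρφ i) ρ x ∂μ ≤ a + s + t :=
    (h.setLIntegral_blendGradient_indicator_le hU_meas (union_subset hUΩ inter_subset_right)
      (hv.measurable_gradient i) (hφ.measurable_gradient i)).trans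
      (add_le_add (add_le_add (hv.lintegral_gradient_le i) (hφ_small i)) (hdiff_small i))
  calc tv μ U u ≤ tvOpen μ (U ∪ (G ∩ Ω)) u :=
        iInf_le_of_le _ (iInf_le_of_le hW (iInf_le_of_le subset_union_left le_rfl))
    _ ≤ a + s + t :=
        tvOpen_le_of_l1LocConv hd hp hW (fun i x _ => h.abs_blend_le (hv_le i x) (hφ_le i x)) hweak
          (by finiteness) henergy
          (h.l1LocConv_blend_union hG hUΩ hu hv_meas hv.l1LocConv hφ.l1LocConv)

lemma tv_le_add_of_eventually [ProperSpace X] {Cd CP lam : ℝ} (h : IsCapacityCutoff μ G ε η ρ)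
    (hd : Doubling μ Cd) (hp : Poincare μ CP lam) (hε : ε ≠ ∞) (hG : IsOpen G)
    (hUG : IsOpen (U ∪ G)) (hU : PathOpen μ U) (hU_meas : NullMeasurableSet U μ) (hΩ : IsOpen Ω)
    (hUΩ : U ⊆ Ω) (hu : MemL1Loc μ Ω u) {ρv ρφ : ℕ → X → ℝ≥0∞} {a b s : ℝ≥0∞}
    (hv : IsSobolevApprox μ U u v ρv a) (hφ : IsSobolevApprox μ Ω u φ ρφ b) (ha : a ≠ ∞)
    (hb : b ≠ ∞) (hv_meas : ∀ i, AEMeasurable (v i) (μ.restrict U))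
    (hφ_meas : ∀ i, AEMeasurable (φ i) (μ.restrict U)) (hs : s ≠ 0) (hs_top : s ≠ ∞)
    (hφ_small : ∀ᶠ i in atTop, ∫⁻ x in Ω, ENNReal.ofReal (η x) * ρφ i x ∂μ ≤ s) :
    tv μ U u ≤ a + s + s := by
  have huU : MemL1Loc μ U u := hu.mono hUΩ
  have hdiff := tendsto_setLIntegral_truncate_sub_mul_zero hU_meas huU.1 hv_meas
    hv.l1LocConv (hφ.mono_set hUΩ).l1LocConv h.measurable_gradient
    (ne_top_of_le_ne_top hε h.lintegral_gradient_le)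
  choose k hk hφ_small_k hdiff_small_k using fun n : ℕ => ((eventually_ge_atTop n).and
    (hφ_small.and (ENNReal.tendsto_nhds_zero.1 (hdiff n) s (pos_iff_ne_zero.2 hs)))).exists
  have hk_lim : Tendsto k atTop atTop := tendsto_atTop_mono hk tendsto_id
  have htrunc (n : ℕ) : Measurable (truncate n) := lipschitzWith_truncate.continuous.measurable
  exact h.tv_le_add hd hp hε hG hUG hU hU_meas hΩ hUΩ huU.1
    ((hv.comp_tendsto hk_lim).truncate huU tendsto_natCast_atTop_atTop)
    ((hφ.comp_tendsto hk_lim).truncate hu tendsto_natCast_atTop_atTop) ha hb hs_top hs_top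
    (fun n x => abs_truncate_le) (fun n x => abs_truncate_le)
    (fun n => (htrunc n).comp_aemeasurable (hv_meas _))
    (fun n => (htrunc n).comp_aemeasurable (hφ_meas _)) hφ_small_k hdiff_small_k

end IsCapacityCutoff

/-! ### The two inequalities -/

section LowerBound

variable {μ : Measure X} [ProperSpace X] {Cd CP lam : ℝ} {U Ω : Set X} {u : X → ℝ}
  {v : ℕ → X → ℝ} {a : ℝ≥0∞}

lemma tsum_inv_four_pow_ne_top : ∑' j : ℕ, (4⁻¹ : ℝ≥0∞) ^ j ≠ ∞ := by
  rw [ENNReal.tsum_geometric, ENNReal.inv_ne_top]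
  exact (tsub_pos_of_lt (ENNReal.inv_lt_one.2 (by norm_num))).ne'

lemma tendsto_two_pow_mul_inv_four_pow :
    Tendsto (fun j : ℕ => ((2 ^ j : ℝ≥0) : ℝ≥0∞) * 4⁻¹ ^ j) atTop (𝓝 0) := by
  have heq (j : ℕ) : ((2 ^ j : ℝ≥0) : ℝ≥0∞) * 4⁻¹ ^ j = 2⁻¹ ^ j := by
    rw [ENNReal.coe_pow, ENNReal.coe_ofNat, ← mul_pow]
    congr 1
    rw [show (4 : ℝ≥0∞) = 2 * 2 by norm_num, ENNReal.mul_inv (by simp) (by simp), ← mul_assoc,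
      ENNReal.mul_inv_cancel two_ne_zero ENNReal.ofNat_ne_top, one_mul]
  simp only [heq]
  exact ENNReal.tendsto_pow_atTop_nhds_zero_of_lt_one (ENNReal.inv_lt_one.2 (by norm_num))

lemma QuasiOpen.tv_le_of_isSobolevApprox (hU : QuasiOpen μ U) (hd : Doubling μ Cd)
    (hp : Poincare μ CP lam) (hΩ : IsOpen Ω) (hUΩ : U ⊆ Ω) (hu : MemL1Loc μ Ω u)
    (htv : tvOpen μ Ω u ≠ ∞) {ρv : ℕ → X → ℝ≥0∞} (hv : IsSobolevApprox μ U u v ρv a)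
    (ha : a ≠ ∞) : tv μ U u ≤ a := by
  have := hd.isLocallyFiniteMeasure
  obtain ⟨G, η, ρ, hG, hUG, hcut⟩ := hU.exists_isCapacityCutoff hd hp
  have hU_meas : NullMeasurableSet U μ := IsCapacityCutoff.nullMeasurableSet hcut
    (ENNReal.tendsto_pow_atTop_nhds_zero_of_lt_one (ENNReal.inv_lt_one.2 (by norm_num))) hUG
  refine ENNReal.le_of_forall_pos_le_add fun δ hδ _ => ?_
  set s : ℝ≥0∞ := δ / 2 with hs_def
  have hs : s ≠ 0 := (ENNReal.half_pos (ENNReal.coe_ne_zero.2 hδ.ne')).ne'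
  have hs_top : s ≠ ∞ := by finiteness
  obtain ⟨φ, ρφ, hφ⟩ := exists_isSobolevApprox_of_tvOpen_lt
    (ENNReal.lt_add_right htv (ENNReal.half_pos hs).ne')
  obtain ⟨j, hj⟩ := IsCapacityCutoff.exists_eventually_setLIntegral_mul_le hcut hd hp
    (fun j => by finiteness) hΩ hu htv (ENNReal.half_lt_self hs hs_top) hφ
    (tendsto_pow_atTop_atTop_of_one_lt one_lt_two) tendsto_two_pow_mul_inv_four_pow
  have hmeas {w : ℕ → X → ℝ} {ρw : ℕ → X → ℝ≥0∞} {b : ℝ≥0∞} (hw : IsSobolevApprox μ U u w ρw b)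
      (hb : b ≠ ∞) (i : ℕ) : AEMeasurable (w i) (μ.restrict U) :=
    IsCapacityCutoff.aemeasurable_of_isUpperGradientOn hcut hd hp tsum_inv_four_pow_ne_top hG hUG
      (hw.isUpperGradientOn i) (hw.measurable_gradient i)
      (ne_top_of_le_ne_top hb (hw.lintegral_gradient_le i))
  calc tv μ U u ≤ a + s + s :=
        (hcut j).tv_le_add_of_eventually hd hp (by finiteness) (hG j) (hUG j)
          (IsCapacityCutoff.pathOpen hcut tsum_inv_four_pow_ne_top hUG) hU_meas hΩ hUΩ hu hv hφ ha
          (by finiteness) (hmeas hv ha) (hmeas (hφ.mono_set hUΩ) (by finiteness)) hs hs_top hj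
    _ = a + δ := by rw [add_assoc, hs_def, ENNReal.add_halves]

lemma QuasiOpen.tv_le_liminf (hU : QuasiOpen μ U) (hd : Doubling μ Cd) (hp : Poincare μ CP lam)
    (hΩ : IsOpen Ω) (hUΩ : U ⊆ Ω) (hu : MemL1Loc μ Ω u) (htv : tvOpen μ Ω u ≠ ∞)
    {g : ℕ → X → ℝ≥0∞} (hg : ∀ i, IsWeakUpperGradientOn μ (v i) (g i) U)
    (hconv : L1LocConv μ U v u) : tv μ U u ≤ liminf (fun i => ∫⁻ x in U, g i x ∂μ) atTop := by
  have := hd.isLocallyFiniteMeasure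
  refine le_of_forall_gt_imp_ge_of_dense fun a ha => ?_
  rcases eq_or_ne a ∞ with rfl | ha_top
  · exact le_top
  obtain ⟨v', ρv, hv'⟩ := exists_isSobolevApprox_of_liminf_lt hg hconv ha
  exact hU.tv_le_of_isSobolevApprox hd hp hΩ hUΩ hu htv hv' ha_top

end LowerBound

section UpperBound

variable {μ : Measure X} {U Ω : Set X}

omit [BorelSpace X] in
lemma exists_setLIntegral_ball_abs_lt_top_of_continuousAt [IsLocallyFiniteMeasure μ] {v : X → ℝ}
    {x : X} (hv : ContinuousAt v x) :
    ∃ r > 0, ∫⁻ y in ball x r, ENNReal.ofReal |v y| ∂μ < ∞ := by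
  have hbdd : ∀ᶠ y in 𝓝 x, |v y| < |v x| + 1 := hv.abs.eventually_lt_const (lt_add_one _)
  obtain ⟨s, hs, hs_fin⟩ := μ.finiteAt_nhds x
  obtain ⟨r, hr, hball⟩ := Metric.mem_nhds_iff.1 (inter_mem hbdd hs)
  refine ⟨r, hr, setLIntegral_lt_top_of_le_nnreal ?_ ⟨Real.toNNReal (|v x| + 1), fun y hy => ?_⟩⟩
  · exact ((measure_mono (hball.trans inter_subset_right)).trans_lt hs_fin).ne
  · exact ENNReal.ofReal_le_ofReal (hball hy).1.le

lemma LocLipOn.memN11Loc [IsLocallyFiniteMeasure μ] {v : X → ℝ} (hv : LocLipOn v Ω)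
    (hΩ : IsOpen Ω) (hUΩ : U ⊆ Ω) {g : X → ℝ≥0∞} (hg : IsWeakUpperGradientOn μ v g U)
    (hfin : ∫⁻ x in U, g x ∂μ < ∞) : MemN11Loc μ U v := by
  intro x hx
  obtain ⟨r, hr, hlt⟩ := exists_setLIntegral_ball_abs_lt_top_of_continuousAt (μ := μ)
    (hv.continuousOn.continuousAt (hΩ.mem_nhds (hUΩ hx)))
  refine ⟨r, hr, ENNReal.add_lt_top.2 ⟨(lintegral_mono_set inter_subset_right).trans_lt hlt, ?_⟩⟩
  exact (iInf₂_le g (hg.mono_set inter_subset_left)).trans_lt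
    ((lintegral_mono_set inter_subset_left).trans_lt hfin)

lemma iInf_liminf_le_tvOpen [SecondCountableTopology X] [IsLocallyFiniteMeasure μ] {u : X → ℝ}
    (hΩ : IsOpen Ω) (hUΩ : U ⊆ Ω) :
    ⨅ (v : ℕ → X → ℝ) (g : ℕ → X → ℝ≥0∞) (_ : ∀ i, MemN11Loc μ U (v i))
      (_ : ∀ i, IsMinimalWUG μ (v i) (g i) U) (_ : L1LocConv μ U v u),
      liminf (fun i => ∫⁻ x in U, g i x ∂μ) atTop ≤ tvOpen μ Ω u := by
  refine le_iInf fun v => le_iInf fun g => le_iInf fun hv => le_iInf fun hg =>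
    le_iInf fun hconv => le_of_forall_gt_imp_ge_of_dense fun a ha => ?_
  obtain ⟨k, hk, hk_lt⟩ := exists_strictMono_forall_lt_of_liminf_lt ha
  have hgU (n : ℕ) : IsWeakUpperGradientOn μ (v (k n)) (g (k n)) U := (hg (k n)).1.mono_set hUΩ
  have hlt (n : ℕ) : ∫⁻ x in U, g (k n) x ∂μ < a := (lintegral_mono_set hUΩ).trans_lt (hk_lt n)
  choose m hm hm_le using fun n => (hgU n).exists_isMinimalWUG (hlt n).lt_top
  refine iInf_le_of_le (fun n => v (k n)) <| iInf_le_of_le m <|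
    iInf_le_of_le (fun n => (hv (k n)).memN11Loc hΩ hUΩ (hgU n) (hlt n).lt_top) <|
    iInf_le_of_le hm <| iInf_le_of_le ((hconv.mono hUΩ).comp_tendsto hk.tendsto_atTop) ?_
  exact (liminf_le_liminf (.of_forall fun n => (hm_le n).trans (hlt n).le)).trans
    (liminf_const a).le

end UpperBound

/-- Characterization of the total variation in `1`-quasiopen sets:
if `U` is `1`-quasiopen and `‖Du‖(U) < ∞` (i.e. there is an open `Ω ⊇ U` with
`u ∈ L¹_loc(Ω)` and `‖Du‖(Ω) < ∞`), then `‖Du‖(U)` equals the infimum of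
`liminf_i ∫_U g_{u_i} dμ` over sequences `u_i ∈ N^{1,1}_loc(U)` with `u_i → u` in
`L¹_loc(U)`, where `g_{u_i}` is the minimal `1`-weak upper gradient of `u_i` in `U`. -/
theorem total_variation_char_in_quasiopen
    (μ : Measure X) (hcomp : CompleteSpace X)
    (hdoub : ∃ Cd : ℝ, Doubling μ Cd) (hpoin : ∃ CP lam : ℝ, Poincare μ CP lam)
    (U : Set X) (hU : QuasiOpen μ U) (u : X → ℝ)
    (hfin : ∃ Ω : Set X, IsOpen Ω ∧ U ⊆ Ω ∧ MemL1Loc μ Ω u ∧ tvOpen μ Ω u < ∞) :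
    tv μ U u =
      ⨅ (v : ℕ → X → ℝ) (g : ℕ → X → ℝ≥0∞) (_ : ∀ i, MemN11Loc μ U (v i))
        (_ : ∀ i, IsMinimalWUG μ (v i) (g i) U) (_ : L1LocConv μ U v u),
        Filter.liminf (fun i => ∫⁻ x in U, g i x ∂μ) Filter.atTop := by
  obtain ⟨Cd, hd⟩ := hdoub
  obtain ⟨CP, lam, hp⟩ := hpoin
  obtain ⟨Ω, hΩ, hUΩ, hu, htv⟩ := hfin
  have := hd.isLocallyFiniteMeasure
  have := hd.properSpace
  apply le_antisymm
  · exact le_iInf fun v => le_iInf fun g => le_iInf fun _ => le_iInf fun hg => le_iInf fun hconv =>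
      hU.tv_le_liminf hd hp hΩ hUΩ hu htv.ne (fun i => (hg i).1) hconv
  · exact le_iInf fun Ω' => le_iInf fun hΩ' => le_iInf fun hUΩ' => iInf_liminf_le_tvOpen hΩ' hUΩ'

end PaperBV
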